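/- arXiv:2105.06563 — 5 statements merged into one kernel-verified Lean document; each statement's English description precedes it below -/
import Mathlib

section
/- Let (Ω, ν) be a probability space, λ > 0, C₄ > 0, and let (g_n)_{n≥1} be a sequence of independent real-valued random variables on Ω such that for every n, g_n⁴ is integrable, E[g_n²] = λ²/n, and E[g_n⁴] ≤ C₄ λ⁴ n⁻². Then for ν-almost every ω, the series ∑_{n=1}^∞ g_n(ω)² diverges to infinity. -/
open MeasureTheory ProbabilityTheory Filter

/-- If `(g n)` are independent real random variables on a probability space
`(Ω, ν)` with `g n ^ 4` integrable, `E[(g n)²] = λ²/n` and `E[(g n)⁴] ≤ C₄ λ⁴ n⁻²`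
(indices `n ≥ 1`, here encoded as `n+1` for `n : ℕ`), then `ν`-a.s. the series
`∑ (g n ω)²` diverges to `+∞`. -/
theorem stmt0
    {Ω : Type*} [MeasurableSpace Ω] (ν : Measure Ω) [IsProbabilityMeasure ν]
    (lam C₄ : ℝ) (hlam : 0 < lam) (hC₄ : 0 < C₄)
    (g : ℕ → Ω → ℝ)
    (hmeas : ∀ n, Measurable (g n))
    (hindep : iIndepFun g ν)
    (hint4 : ∀ n, Integrable (fun ω => (g n ω) ^ 4) ν)
    (hvar : ∀ n, ∫ ω, (g n ω) ^ 2 ∂ν = lam ^ 2 / ((n : ℝ) + 1))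
    (h4 : ∀ n, ∫ ω, (g n ω) ^ 4 ∂ν ≤ C₄ * lam ^ 4 / ((n : ℝ) + 1) ^ 2) :
    ∀ᵐ ω ∂ν, Tendsto (fun k => ∑ n ∈ Finset.range k, (g n ω) ^ 2) atTop atTop := by
  have hX : ∀ n, MemLp (fun ω => (g n ω) ^ 2) 2 ν := by
    intro n
    rw [memLp_two_iff_integrable_sq ((hmeas n).pow_const 2).aestronglyMeasurable]
    refine (hint4 n).congr (Eventually.of_forall fun ω => ?_)
    simp only
    ring
  set S : ℕ → Ω → ℝ := fun k => ∑ n ∈ Finset.range k, fun ω => (g n ω) ^ 2 with hS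
  have hSap : ∀ k ω, S k ω = ∑ n ∈ Finset.range k, (g n ω) ^ 2 := by
    intro k ω
    simp [hS]
  have hSL : ∀ k, MemLp (S k) 2 ν := fun k => memLp_finsetSum' _ fun n _ => hX n
  have hind : Pairwise fun i j => IndepFun (fun ω => (g i ω) ^ 2) (fun ω => (g j ω) ^ 2) ν := by
    intro i j hij
    exact (hindep.indepFun hij).comp (φ := fun x : ℝ => x ^ 2) (ψ := fun x : ℝ => x ^ 2)
      (measurable_id.pow_const 2) (measurable_id.pow_const 2)
  have hsum : Summable fun n : ℕ => C₄ * lam ^ 4 / ((n : ℝ) + 1) ^ 2 := by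
    have h0 : Summable fun n : ℕ => 1 / (n : ℝ) ^ 2 :=
      Real.summable_one_div_nat_pow.2 (by norm_num)
    have h1 := ((summable_nat_add_iff 1).2 h0).mul_left (C₄ * lam ^ 4)
    refine h1.congr fun n => ?_
    push_cast
    ring
  obtain ⟨V, hV⟩ : ∃ V : ℝ, ∀ k, Var[S k; ν] ≤ V := by
    refine ⟨∑' n : ℕ, C₄ * lam ^ 4 / ((n : ℝ) + 1) ^ 2, fun k => ?_⟩
    rw [hS]
    simp only
    rw [IndepFun.variance_sum (fun n _ => hX n) (fun i _ j _ hij => hind hij)]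
    refine le_trans (Finset.sum_le_sum fun n _ => ?_)
      (hsum.sum_le_tsum (Finset.range k) fun n _ => by positivity)
    refine (variance_le_expectation_sq (hX n).aestronglyMeasurable).trans ?_
    refine le_trans (le_of_eq ?_) (h4 n)
    refine integral_congr_ae (Eventually.of_forall fun ω => ?_)
    simp only [Pi.pow_apply]
    ring
  have hm : Tendsto (fun k => ∫ ω, S k ω ∂ν) atTop atTop := by
    have h1 : ∀ k, ∫ ω, S k ω ∂ν = lam ^ 2 * ∑ n ∈ Finset.range k, 1 / ((n : ℝ) + 1) := by
      intro k
      simp only [hSap]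
      rw [integral_finsetSum _ fun n _ => (hX n).integrable (by norm_num), Finset.mul_sum]
      refine Finset.sum_congr rfl fun n _ => ?_
      rw [hvar n]
      ring
    simp only [h1]
    exact Real.tendsto_sum_range_one_div_nat_succ_atTop.const_mul_atTop (by positivity)
  have key : ∀ M : ℕ, ∀ᵐ ω ∂ν, ∃ k, (M : ℝ) < S k ω := by
    intro M
    rw [ae_iff]
    have hlim : Tendsto (fun k => ENNReal.ofReal (V / ((∫ ω, S k ω ∂ν) - M) ^ 2)) atTop
        (nhds 0) := by
      rw [← ENNReal.ofReal_zero]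
      refine ENNReal.tendsto_ofReal (Tendsto.div_atTop tendsto_const_nhds ?_)
      exact (tendsto_pow_atTop (by norm_num)).comp (tendsto_atTop_add_const_right _ (-(M : ℝ)) hm)
    refine le_antisymm (ge_of_tendsto hlim ?_) zero_le
    filter_upwards [hm.eventually_gt_atTop (M : ℝ)] with k hk
    have hc : 0 < (∫ ω, S k ω ∂ν) - M := by linarith
    refine le_trans (measure_mono ?_) ((meas_ge_le_variance_div_sq (hSL k) hc).trans
      (ENNReal.ofReal_le_ofReal (div_le_div_of_nonneg_right (hV k) (by positivity))))
    intro ω hω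
    simp only [Set.mem_setOf_eq, not_exists, not_lt] at hω ⊢
    have := hω k
    rw [abs_sub_comm]
    exact le_trans (by linarith) (le_abs_self _)
  filter_upwards [ae_all_iff.2 key] with ω hω
  refine tendsto_atTop_atTop_of_monotone ?_ fun b => ?_
  · intro a b hab
    exact Finset.sum_le_sum_of_subset_of_nonneg (Finset.range_mono hab)
      fun n _ _ => sq_nonneg _
  · obtain ⟨M, hM⟩ := exists_nat_ge b
    obtain ⟨k, hk⟩ := hω M
    exact ⟨k, by rw [← hSap]; linarith⟩
end

section
/- Let (Ω, ν) be a probability space and (X_k)_{k≥1} a sequence of real-valued square-integrable random variables such that X_k(ω) is nondecreasing in k for every ω, E[X_k] → ∞ as k → ∞, and sup_k Var(X_k) < ∞. Then for ν-almost every ω, X_k(ω) → ∞ as k → ∞. -/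
open MeasureTheory ProbabilityTheory Filter

/-- If `(X k)` are square-integrable real random variables on a probability
space `(Ω, ν)`, pointwise nondecreasing in `k`, with `E[X k] → ∞` and uniformly bounded
variances, then `ν`-a.s. `X k ω → ∞`. -/
theorem stmt1
    {Ω : Type*} [MeasurableSpace Ω] (ν : Measure Ω) [IsProbabilityMeasure ν]
    (X : ℕ → Ω → ℝ)
    (hL2 : ∀ k, MemLp (X k) 2 ν)
    (hmono : ∀ ω, Monotone (fun k => X k ω))
    (hmean : Tendsto (fun k => ∫ ω, X k ω ∂ν) atTop atTop)
    (hvar : ∃ C : ℝ, ∀ k, variance (X k) ν ≤ C) :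
    ∀ᵐ ω ∂ν, Tendsto (fun k => X k ω) atTop atTop := by
  obtain ⟨C, hC⟩ := hvar
  have key : ∀ M : ℕ, ∀ᵐ ω ∂ν, ∃ k, (M : ℝ) < X k ω := by
    intro M
    rw [ae_iff]
    have hlim : Tendsto (fun k => ENNReal.ofReal (C / ((∫ ω, X k ω ∂ν) - M) ^ 2)) atTop
        (nhds 0) := by
      have h1 : Tendsto (fun k => (∫ ω, X k ω ∂ν) - (M : ℝ)) atTop atTop :=
        tendsto_atTop_add_const_right _ (-(M : ℝ)) hmean
      have h2 : Tendsto (fun k => C / ((∫ ω, X k ω ∂ν) - (M : ℝ)) ^ 2) atTop (nhds 0) :=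
        Tendsto.const_div_atTop ((tendsto_pow_atTop two_ne_zero).comp h1) C
      simpa using ENNReal.tendsto_ofReal h2
    refine le_antisymm (ge_of_tendsto hlim ?_) zero_le
    filter_upwards [hmean.eventually_gt_atTop (M : ℝ)] with k hk
    have hpos : 0 < (∫ ω, X k ω ∂ν) - (M : ℝ) := sub_pos.2 hk
    calc ν {ω | ¬ ∃ k, (M : ℝ) < X k ω}
        ≤ ν {ω | (∫ ω, X k ω ∂ν) - (M : ℝ) ≤ |X k ω - ∫ ω, X k ω ∂ν|} := by
          apply measure_mono
          intro ω hω
          simp only [Set.mem_ofPred_eq, not_exists, not_lt] at hω ⊢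
          have h3 := hω k
          have h4 := neg_abs_le (X k ω - ∫ ω, X k ω ∂ν)
          linarith
      _ ≤ ENNReal.ofReal (variance (X k) ν / ((∫ ω, X k ω ∂ν) - M) ^ 2) :=
          meas_ge_le_variance_div_sq (hL2 k) hpos
      _ ≤ _ := by
          apply ENNReal.ofReal_le_ofReal
          gcongr
          exact hC k
  filter_upwards [ae_all_iff.2 key] with ω hω
  refine tendsto_atTop_atTop_of_monotone (hmono ω) fun b => ?_
  obtain ⟨M, hM⟩ := exists_nat_ge b
  obtain ⟨k, hk⟩ := hω M
  exact ⟨k, hM.trans hk.le⟩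
end

section
/- Let φ ∈ (0, π), g ∈ ℝ, R > 0, θ ∈ ℝ, and set η = g/(2 sin φ). Let p = iR e^{iθ} ∈ ℂ and define p' = p e^{iφ}(1 − iη) − iη e^{−iφ} p̄, where p̄ is the complex conjugate of p. Then |p'|² = R² ( 1 + (g/sin φ) · sin(2(θ + φ)) + (g²/sin²φ) · sin²(θ + φ) ). -/
open Complex

/-- one-step recurrence for the squared Prüfer radius. With
`φ ∈ (0, π)`, `g ∈ ℝ`, `R > 0`, `θ ∈ ℝ`, `η = g/(2 sin φ)`, `p = iR e^{iθ}` and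
`p' = p e^{iφ}(1 - iη) - iη e^{-iφ} conj(p)`, one has
`|p'|² = R² (1 + (g/sin φ) sin(2(θ+φ)) + (g²/sin²φ) sin²(θ+φ))`. -/
theorem stmt8 (φ g R θ : ℝ) (hφ : φ ∈ Set.Ioo 0 Real.pi) (hR : 0 < R) :
    let η : ℝ := g / (2 * Real.sin φ)
    let p : ℂ := Complex.I * (R : ℂ) * Complex.exp (θ * Complex.I)
    let p' : ℂ := p * Complex.exp (φ * Complex.I) * (1 - Complex.I * (η : ℂ)) -
      Complex.I * (η : ℂ) * Complex.exp (-(φ * Complex.I)) * (starRingEnd ℂ p)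
    ‖p'‖ ^ 2 =
      R ^ 2 * (1 + (g / Real.sin φ) * Real.sin (2 * (θ + φ)) +
        (g ^ 2 / (Real.sin φ) ^ 2) * (Real.sin (θ + φ)) ^ 2) := by
  intro η p p'
  have hη : g / Real.sin φ = 2 * η := by
    simp only [η]
    rw [mul_comm 2 (Real.sin φ), ← div_div]
    ring
  have hη2 : g ^ 2 / Real.sin φ ^ 2 = (2 * η) ^ 2 := by
    rw [← hη, div_pow]
  have hq : p * Complex.exp (φ * Complex.I) =
      Complex.I * (R : ℂ) * Complex.exp (((θ + φ : ℝ) : ℂ) * Complex.I) := by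
    simp only [p]
    rw [mul_assoc, ← Complex.exp_add]
    push_cast
    ring_nf
  have hc : Complex.exp (-(φ * Complex.I)) * (starRingEnd ℂ p) =
      starRingEnd ℂ (p * Complex.exp (φ * Complex.I)) := by
    have he : starRingEnd ℂ (Complex.exp (φ * Complex.I)) =
        Complex.exp (-(φ * Complex.I)) := by
      rw [← Complex.exp_conj, map_mul, Complex.conj_ofReal, Complex.conj_I, mul_neg]
    rw [map_mul (starRingEnd ℂ) p (Complex.exp (φ * Complex.I)), he, mul_comm]
  have hp : p' = p * Complex.exp (φ * Complex.I) * (1 - Complex.I * (η : ℂ)) -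
      Complex.I * (η : ℂ) * (Complex.exp (-(φ * Complex.I)) * (starRingEnd ℂ p)) := by
    simp only [p', mul_assoc]
  rw [hη, hη2, hp, hc, hq, Complex.sq_norm, Complex.normSq_apply, Real.sin_two_mul]
  clear_value η
  simp only [Complex.sub_re, Complex.sub_im, Complex.mul_re, Complex.mul_im, Complex.I_re,
    Complex.I_im, Complex.ofReal_re, Complex.ofReal_im, Complex.conj_re, Complex.conj_im,
    Complex.exp_ofReal_mul_I_re, Complex.exp_ofReal_mul_I_im, Complex.one_re, Complex.one_im]
  have h := Real.sin_sq_add_cos_sq (θ + φ)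
  linear_combination R ^ 2 * h
end

section
/- Assume the random transfer-matrix setup below, with φ ∈ (0, π), φ ∉ {π/4, π/2, 3π/4}. Then for ν-almost every ω, the Prüfer radii R_n(ω) satisfy lim_{n→∞} ln R_n(ω) / (∑_{j=1}^n 1/j) = λ² / (8 sin²φ). -/
open MeasureTheory ProbabilityTheory Filter Matrix

/-- Bounded martingale transform with summable variances converges a.s. -/
theorem aux_mart {Ω : Type*} {m0 : MeasurableSpace Ω} (ν : Measure Ω) [IsProbabilityMeasure ν]
    (F : Filtration ℕ m0) (Y h : ℕ → Ω → ℝ) (V : ℕ → ℝ) (H : ℝ)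
    (hh : ∀ n, Measurable[F n] (h n)) (hH : ∀ n ω, |h n ω| ≤ H)
    (hY : ∀ n, Measurable[F (n + 1)] (Y n))
    (B : ℕ → ℝ) (hB : ∀ n ω, |Y n ω| ≤ B n)
    (hind : ∀ n, Indep (MeasurableSpace.comap (Y n) inferInstance) (F n) ν)
    (hmean : ∀ n, ∫ ω, Y n ω ∂ν = 0)
    (hV : ∀ n, ∫ ω, (Y n ω) ^ 2 ∂ν ≤ V n) (hsum : Summable V) :
    ∀ᵐ ω ∂ν, ∃ c, Tendsto (fun n => ∑ k ∈ Finset.range n, Y k ω * h k ω) atTop (nhds c) := by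
  have hne : Nonempty Ω := by
    by_contra hcon
    rw [not_nonempty_iff] at hcon
    have := measure_univ (μ := ν)
    rw [Set.univ_eq_empty_iff.2 hcon] at this
    simp at this
  obtain ⟨ω₀⟩ := hne
  have hH0 : 0 ≤ H := (abs_nonneg _).trans (hH 0 ω₀)
  have hV0 : ∀ n, 0 ≤ V n := fun n => (integral_nonneg fun ω => sq_nonneg _).trans (hV n)
  set X : ℕ → Ω → ℝ := fun n ω => ∑ k ∈ Finset.range n, Y k ω * h k ω with hX
  have hYm : ∀ n, Measurable (Y n) := fun n => (hY n).mono (F.le _) le_rfl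
  have hhm : ∀ n, Measurable (h n) := fun n => (hh n).mono (F.le _) le_rfl
  have hXF : ∀ n, Measurable[F n] (X n) := by
    intro n
    refine Finset.measurable_fun_sum _ fun k hk => ?_
    have hk' := Finset.mem_range.1 hk
    exact ((hY k).mono (F.mono (by omega)) le_rfl).mul ((hh k).mono (F.mono (by omega)) le_rfl)
  have hXm : ∀ n, Measurable (X n) := fun n => (hXF n).mono (F.le _) le_rfl
  have bint : ∀ (f : Ω → ℝ) (c : ℝ), Measurable f → (∀ ω, |f ω| ≤ c) → Integrable f ν := by
    intro f c hf hc
    exact Integrable.of_bound hf.aestronglyMeasurable c (Eventually.of_forall fun ω => by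
      simpa using hc ω)
  have hXb : ∀ n, ∃ c, ∀ ω, |X n ω| ≤ c := by
    intro n
    refine ⟨∑ k ∈ Finset.range n, B k * H, fun ω => ?_⟩
    refine (Finset.abs_sum_le_sum_abs _ _).trans (Finset.sum_le_sum fun k _ => ?_)
    rw [abs_mul]
    exact mul_le_mul (hB k ω) (hH k ω) (abs_nonneg _) ((abs_nonneg _).trans (hB k ω))
  have hXi : ∀ n, Integrable (X n) ν := fun n => by
    obtain ⟨c, hc⟩ := hXb n
    exact bint _ c (hXm n) hc
  have hYi : ∀ n, Integrable (Y n) ν := fun n => bint _ _ (hYm n) (hB n)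
  have hYhb : ∀ n ω, |Y n ω * h n ω| ≤ B n * H := fun n ω => by
    rw [abs_mul]
    exact mul_le_mul (hB n ω) (hH n ω) (abs_nonneg _) ((abs_nonneg _).trans (hB n ω))
  have hsucc : ∀ n ω, X (n + 1) ω = X n ω + Y n ω * h n ω := fun n ω => by
    simp [hX, Finset.sum_range_succ]
  have hmart : Martingale X F ν := by
    refine martingale_of_condExp_sub_eq_zero_nat (fun n => (hXF n).stronglyMeasurable) hXi ?_
    intro n
    have e1 : X (n + 1) - X n = h n * Y n := by
      ext ω
      simp [hsucc, mul_comm]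
    rw [e1]
    have e2 := condExp_mul_of_stronglyMeasurable_left (μ := ν) (m := F n) (f := h n) (g := Y n)
      (hh n).stronglyMeasurable (bint _ (B n * H) ((hhm n).mul (hYm n)) (fun ω => by
        rw [Pi.mul_apply, mul_comm]; exact hYhb n ω)) (hYi n)
    have e3 : ν[Y n | F n] =ᵐ[ν] fun _ => ν[Y n] :=
      condExp_indep_eq (hYm n).comap_le (F.le n) (comap_measurable (Y n)).stronglyMeasurable (hind n)
    filter_upwards [e2, e3] with ω h2 h3
    rw [h2, Pi.mul_apply, h3, hmean n]
    simp
  have hcross : ∀ n, ∫ ω, (X n ω * h n ω) * Y n ω ∂ν = 0 := by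
    intro n
    have hi : IndepFun (fun ω => X n ω * h n ω) (Y n) ν := by
      rw [IndepFun_iff_Indep]
      exact (indep_of_indep_of_le_right (hind n) ((hXF n).mul (hh n)).comap_le).symm
    have := hi.integral_mul_eq_mul_integral
      (((hXm n).mul (hhm n)).aestronglyMeasurable) (hYm n).aestronglyMeasurable
    simp only [Pi.mul_apply] at this
    rw [hmean n, mul_zero] at this
    exact this
  have hL2 : ∀ n, ∫ ω, (X n ω) ^ 2 ∂ν ≤ ∑ k ∈ Finset.range n, H ^ 2 * V k := by
    intro n
    induction n with
    | zero => simp [hX]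
    | succ n ih =>
      obtain ⟨c, hc⟩ := hXb n
      have i1 : Integrable (fun ω => (X n ω) ^ 2) ν := bint _ (c ^ 2) ((hXm n).pow_const 2)
        (fun ω => by rw [abs_pow]; exact pow_le_pow_left₀ (abs_nonneg _) (hc ω) 2)
      have i2 : Integrable (fun ω => (X n ω * h n ω) * Y n ω) ν := by
        refine bint _ (c * (B n * H)) (((hXm n).mul (hhm n)).mul (hYm n)) fun ω => ?_
        rw [mul_assoc, mul_comm (h n ω), abs_mul]
        exact mul_le_mul (hc ω) (hYhb n ω) (abs_nonneg _) ((abs_nonneg _).trans (hc ω))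
      have i3 : Integrable (fun ω => (Y n ω * h n ω) ^ 2) ν :=
        bint _ ((B n * H) ^ 2) (((hYm n).mul (hhm n)).pow_const 2)
        (fun ω => by rw [abs_pow]; exact pow_le_pow_left₀ (abs_nonneg _) (hYhb n ω) 2)
      have i4 : Integrable (fun ω => (Y n ω) ^ 2) ν :=
        bint _ ((B n) ^ 2) ((hYm n).pow_const 2)
        (fun ω => by rw [abs_pow]; exact pow_le_pow_left₀ (abs_nonneg _) (hB n ω) 2)
      have e : ∀ ω, (X (n + 1) ω) ^ 2
          = (X n ω) ^ 2 + 2 * ((X n ω * h n ω) * Y n ω) + (Y n ω * h n ω) ^ 2 := by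
        intro ω; rw [hsucc]; ring
      simp_rw [e]
      have i12 : Integrable (fun ω => (X n ω) ^ 2 + 2 * ((X n ω * h n ω) * Y n ω)) ν :=
        i1.add (i2.const_mul 2)
      rw [integral_add i12 i3, integral_add i1 (i2.const_mul 2),
        integral_const_mul, hcross, Finset.sum_range_succ]
      have : ∫ ω, (Y n ω * h n ω) ^ 2 ∂ν ≤ ∫ ω, H ^ 2 * (Y n ω) ^ 2 ∂ν := by
        refine integral_mono i3 (i4.const_mul _) fun ω => ?_
        simp only
        rw [mul_pow, mul_comm]
        refine mul_le_mul_of_nonneg_right ?_ (sq_nonneg _)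
        rw [← sq_abs]
        exact pow_le_pow_left₀ (abs_nonneg _) (hH n ω) 2
      rw [integral_const_mul] at this
      have h5 := mul_le_mul_of_nonneg_left (hV n) (sq_nonneg H)
      linarith
  have hsum' : Summable fun k => H ^ 2 * V k := hsum.mul_left _
  set R : ℝ := 1 + ∑' k, H ^ 2 * V k with hR
  have hL1 : ∀ n, eLpNorm (X n) 1 ν ≤ (R.toNNReal : ENNReal) := by
    intro n
    rw [eLpNorm_one_eq_lintegral_enorm, ← ofReal_integral_norm_eq_lintegral_enorm (hXi n)]
    refine ENNReal.ofReal_le_ofReal ?_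
    obtain ⟨c, hc⟩ := hXb n
    have i1 : Integrable (fun ω => (X n ω) ^ 2) ν := bint _ (c ^ 2) ((hXm n).pow_const 2)
        (fun ω => by rw [abs_pow]; exact pow_le_pow_left₀ (abs_nonneg _) (hc ω) 2)
    have : ∫ ω, ‖X n ω‖ ∂ν ≤ ∫ ω, (1 + (X n ω) ^ 2) ∂ν := by
      refine integral_mono (hXi n).norm ((integrable_const _).add i1) fun ω => ?_
      simp only [Real.norm_eq_abs]
      nlinarith [sq_abs (X n ω), sq_nonneg (|X n ω| - 1), abs_nonneg (X n ω)]
    rw [integral_add (integrable_const _) i1] at this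
    simp only [integral_const, probReal_univ, smul_eq_mul, mul_one] at this
    have h2 := hsum'.sum_le_tsum (Finset.range n) (fun k _ => mul_nonneg (sq_nonneg H) (hV0 k))
    have h3 := hL2 n
    rw [hR]; linarith
  exact hmart.submartingale.exists_ae_tendsto_of_bdd hL1

noncomputable def auxH (n : ℕ) : ℝ := ∑ j ∈ Finset.range n, 1 / ((j : ℝ) + 1)

theorem auxH_succ (n : ℕ) : auxH (n + 1) = auxH n + 1 / ((n : ℝ) + 1) := by
  simp [auxH, Finset.sum_range_succ]

theorem auxH_tendsto : Tendsto auxH atTop atTop := Real.tendsto_sum_range_one_div_nat_succ_atTop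

theorem auxH_pos (n : ℕ) : 0 < auxH (n + 1) := by
  unfold auxH
  exact Finset.sum_pos (fun i _ => by positivity) ⟨0, by simp⟩

theorem auxH_one_le (n : ℕ) : 1 ≤ auxH (n + 1) := by
  induction n with
  | zero => simp [auxH]
  | succ n ih =>
    rw [auxH_succ]
    have : (0 : ℝ) ≤ 1 / (((n + 1 : ℕ) : ℝ) + 1) := by positivity
    linarith

theorem aux_summable_H : Summable fun n : ℕ => 1 / (((n : ℝ) + 1) * auxH (n + 1) ^ 2) := by
  refine summable_of_sum_range_le (c := 2) (fun n => by positivity) fun n => ?_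
  have key : ∀ n : ℕ, ∑ i ∈ Finset.range (n + 1), 1 / (((i : ℝ) + 1) * auxH (i + 1) ^ 2)
      ≤ 2 - 1 / auxH (n + 1) := by
    intro n
    induction n with
    | zero => simp [auxH]; norm_num
    | succ n ih =>
      rw [Finset.sum_range_succ]
      have h1 := auxH_pos n
      have h2 := auxH_pos (n + 1)
      have h3 := auxH_succ (n + 1)
      set d : ℝ := 1 / (((n + 1 : ℕ) : ℝ) + 1) with hd
      have hdp : 0 < d := by positivity
      have : 1 / ((((n + 1 : ℕ) : ℝ) + 1) * auxH (n + 1 + 1) ^ 2) = d / auxH (n + 1 + 1) ^ 2 := by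
        rw [hd]; field_simp
      rw [this]
      have h4 : d / auxH (n + 1 + 1) ^ 2 ≤ 1 / auxH (n + 1) - 1 / auxH (n + 1 + 1) := by
        rw [div_sub_div _ _ h1.ne' h2.ne', div_le_div_iff₀ (by positivity) (by positivity)]
        rw [h3]
        have : 0 ≤ d ^ 2 * (auxH (n + 1) + d) := by positivity
        nlinarith
      linarith
  have hp := auxH_pos n
  have h1 : (0 : ℝ) ≤ 1 / auxH (n + 1) := by positivity
  have h2 := key n
  rw [Finset.sum_range_succ] at h2
  have h3 : (0 : ℝ) ≤ 1 / (((n : ℝ) + 1) * auxH (n + 1) ^ 2) := by positivity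
  linarith

/-- Kronecker's lemma for the harmonic weights. -/
theorem aux_kronecker (x : ℕ → ℝ) (L : ℝ)
    (h : Tendsto (fun n => ∑ k ∈ Finset.range n, x k / auxH (k + 1)) atTop (nhds L)) :
    (fun n => ∑ k ∈ Finset.range n, x k) =o[atTop] auxH := by
  set T : ℕ → ℝ := fun n => ∑ k ∈ Finset.range n, x k / auxH (k + 1) with hT
  have hid : ∀ n, ∑ k ∈ Finset.range n, x k
      = (T n - L) * auxH n - ∑ k ∈ Finset.range n, (T k - L) * (1 / ((k : ℝ) + 1)) := by
    intro n
    induction n with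
    | zero => simp [auxH]
    | succ n ih =>
      rw [Finset.sum_range_succ, ih, Finset.sum_range_succ]
      have hTs : T (n + 1) = T n + x n / auxH (n + 1) := by simp [hT, Finset.sum_range_succ]
      have hx : x n = (T (n + 1) - T n) * auxH (n + 1) := by
        rw [hTs]; have := (auxH_pos n).ne'; field_simp; ring
      rw [hx, auxH_succ]; ring
  have h0 : Tendsto (fun n => T n - L) atTop (nhds 0) := by
    simpa using h.sub_const L
  have h1 : (fun n => T n - L) =o[atTop] fun _ => (1 : ℝ) := (Asymptotics.isLittleO_one_iff ℝ).2 h0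
  have h2 : (fun n => (T n - L) * auxH n) =o[atTop] auxH := by
    simpa using h1.mul_isBigO (Asymptotics.isBigO_refl auxH atTop)
  have h3 : (fun k : ℕ => (T k - L) * (1 / ((k : ℝ) + 1))) =o[atTop] fun k : ℕ => 1 / ((k : ℝ) + 1) := by
    simpa using h1.mul_isBigO (Asymptotics.isBigO_refl (fun k : ℕ => 1 / ((k : ℝ) + 1)) atTop)
  have h4 := h3.sum_range (fun k => by simp only [Pi.zero_apply]; positivity) auxH_tendsto
  have h5 := h2.sub h4
  refine h5.congr_left fun n => (hid n).symm

theorem aux_bdd_littleO (x : ℕ → ℝ) (c : ℝ) (h : ∀ n, |x n| ≤ c) : x =o[atTop] auxH := by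
  have h1 : x =O[atTop] fun _ => (1 : ℝ) :=
    Asymptotics.IsBigO.of_bound c (Eventually.of_forall fun n => by simpa using h n)
  refine h1.trans_isLittleO ?_
  refine (Asymptotics.isLittleO_const_left).2 (Or.inr ?_)
  exact tendsto_norm_atTop_atTop.comp auxH_tendsto

theorem aux_conv_littleO (x : ℕ → ℝ) (c : ℝ) (h : Tendsto x atTop (nhds c)) :
    x =o[atTop] auxH := by
  have h1 : x =O[atTop] fun _ => (1 : ℝ) := h.isBigO_one ℝ
  refine h1.trans_isLittleO ?_
  refine (Asymptotics.isLittleO_const_left).2 (Or.inr ?_)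
  exact tendsto_norm_atTop_atTop.comp auxH_tendsto

/-- Oscillating sums are bounded. -/
theorem aux_osc (z : ℕ → ℂ) (ζ : ℂ) (hζ : ζ ≠ 1) (hz : ∀ n, ‖z n‖ ≤ 1) (d : ℕ → ℝ)
    (hd : ∀ n, ‖z (n + 1) - ζ * z n‖ ≤ d n)
    (hsum : Summable fun n : ℕ => d n * (1 / ((n : ℝ) + 1))) :
    ∃ c, ∀ n, ‖∑ k ∈ Finset.range n, z k * ((1 / ((k : ℝ) + 1) : ℝ) : ℂ)‖ ≤ c := by
  set c : ℕ → ℝ := fun n => 1 / ((n : ℝ) + 1) with hc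
  have hc0 : ∀ n, 0 ≤ c n := fun n => by simp only [hc]; positivity
  have hcm : ∀ n, c (n + 1) ≤ c n := fun n => by
    simp only [hc]
    apply one_div_le_one_div_of_le (by positivity)
    push_cast; linarith
  have hd0 : ∀ n, 0 ≤ d n := fun n => (norm_nonneg _).trans (hd n)
  have h1 : ∀ n, ‖∑ k ∈ Finset.range n, (z k - z (k + 1)) * (c k : ℂ) + z n * (c n : ℂ)‖
      ≤ 2 * c 0 - c n := by
    intro n
    induction n with
    | zero =>
      simp only [Finset.range_zero, Finset.sum_empty, zero_add, norm_mul, Complex.norm_real]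
      rw [Real.norm_of_nonneg (hc0 0)]
      nlinarith [hz 0, hc0 0]
    | succ n ih =>
      rw [Finset.sum_range_succ]
      have : ∑ k ∈ Finset.range n, (z k - z (k + 1)) * (c k : ℂ) + (z n - z (n + 1)) * (c n : ℂ)
          + z (n + 1) * (c (n + 1) : ℂ)
        = (∑ k ∈ Finset.range n, (z k - z (k + 1)) * (c k : ℂ) + z n * (c n : ℂ))
          - z (n + 1) * ((c n - c (n + 1) : ℝ) : ℂ) := by push_cast; ring
      rw [this]
      refine (norm_sub_le _ _).trans ?_
      have h2 : ‖z (n + 1) * ((c n - c (n + 1) : ℝ) : ℂ)‖ ≤ c n - c (n + 1) := by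
        rw [norm_mul, Complex.norm_real, Real.norm_of_nonneg (by linarith [hcm n])]
        nlinarith [hz (n + 1), hcm n]
      linarith
  have h2 : ∀ n, ‖∑ k ∈ Finset.range n, (z (k + 1) - ζ * z k) * (c k : ℂ)‖ ≤ ∑' k, d k * c k := by
    intro n
    refine (norm_sum_le _ _).trans (le_trans (Finset.sum_le_sum fun k _ => ?_)
      (hsum.sum_le_tsum (Finset.range n) (fun k _ => mul_nonneg (hd0 k) (hc0 k))))
    rw [norm_mul, Complex.norm_real, Real.norm_of_nonneg (hc0 k)]
    exact mul_le_mul_of_nonneg_right (hd k) (hc0 k)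
  refine ⟨(2 * c 0 + ∑' k, d k * c k) / ‖1 - ζ‖, fun n => ?_⟩
  have hpos : 0 < ‖1 - ζ‖ := norm_pos_iff.2 (sub_ne_zero.2 hζ.symm)
  rw [le_div_iff₀ hpos, ← norm_mul]
  have e : (∑ k ∈ Finset.range n, z k * (c k : ℂ)) * (1 - ζ)
      = ((∑ k ∈ Finset.range n, (z k - z (k + 1)) * (c k : ℂ) + z n * (c n : ℂ)) - z n * (c n : ℂ))
        + ∑ k ∈ Finset.range n, (z (k + 1) - ζ * z k) * (c k : ℂ) := by
    rw [add_sub_cancel_right, ← Finset.sum_add_distrib, Finset.sum_mul]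
    refine Finset.sum_congr rfl fun k _ => ?_
    ring
  rw [e]
  have h3 : ‖z n * (c n : ℂ)‖ ≤ c n := by
    rw [norm_mul, Complex.norm_real, Real.norm_of_nonneg (hc0 n)]
    nlinarith [hz n, hc0 n]
  refine (norm_add_le _ _).trans (add_le_add ((norm_sub_le _ _).trans ?_) (h2 n))
  linarith [h1 n]

/-- The coordinate of a real vector in the eigenbasis. -/
noncomputable def auxP (φ : ℝ) (v : Fin 2 → ℝ) : ℂ :=
  ⟨v 0 / 2, (v 0 * (1 - Real.cos φ) - v 1) / (2 * Real.sin φ)⟩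

theorem auxP_eq (φ : ℝ) (hs : Real.sin φ ≠ 0) (v : Fin 2 → ℝ) (p : ℂ)
    (h1 : ((v 0 : ℝ) : ℂ) = p + starRingEnd ℂ p)
    (h2 : ((v 1 : ℝ) : ℂ) = p * (1 - Complex.exp (-(φ * Complex.I))) +
          starRingEnd ℂ p * (1 - Complex.exp (φ * Complex.I))) : p = auxP φ v := by
  have e1 := congrArg Complex.re h1
  have e2 := congrArg Complex.re h2
  have hm : -((φ : ℂ) * Complex.I) = ((-φ : ℝ) : ℂ) * Complex.I := by push_cast; ring
  have ha : (Complex.exp (-((φ : ℂ) * Complex.I))).re = Real.cos φ := by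
    rw [hm, Complex.exp_ofReal_mul_I_re, Real.cos_neg]
  have hb : (Complex.exp (-((φ : ℂ) * Complex.I))).im = -Real.sin φ := by
    rw [hm, Complex.exp_ofReal_mul_I_im, Real.sin_neg]
  simp [Complex.exp_ofReal_mul_I_re, Complex.exp_ofReal_mul_I_im, ha, hb] at e1 e2
  apply Complex.ext
  · simp [auxP]; linarith
  · simp only [auxP]
    rw [eq_div_iff (by simpa using hs), e1, e2]
    ring

theorem auxP_sub (φ : ℝ) (v w : Fin 2 → ℝ) : auxP φ (v - w) = auxP φ v - auxP φ w := by
  apply Complex.ext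
  · simp [auxP]; ring
  · simp [auxP]; ring

theorem auxP_zero (φ : ℝ) (hs : Real.sin φ ≠ 0) (v : Fin 2 → ℝ) (h : auxP φ v = 0) : v = 0 := by
  have e1 := congrArg Complex.re h
  have e2 := congrArg Complex.im h
  simp [auxP, hs] at e1 e2
  rw [e1] at e2
  ext i
  fin_cases i
  · simpa using e1
  · simpa using e2

theorem auxP_M (φ : ℝ) (hs : Real.sin φ ≠ 0) (v : Fin 2 → ℝ) :
    auxP φ ((Matrix.of ![![2 * Real.cos φ - 1, 1], ![2 * Real.cos φ - 2, 1]]).mulVec v)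
      = Complex.exp (φ * Complex.I) * auxP φ v := by
  have hsq := Real.sin_sq_add_cos_sq φ
  apply Complex.ext
  · simp [auxP, Matrix.mulVec, dotProduct, Fin.sum_univ_two, Complex.exp_ofReal_mul_I_re,
      Complex.exp_ofReal_mul_I_im]
    field_simp
    ring
  · simp [auxP, Matrix.mulVec, dotProduct, Fin.sum_univ_two, Complex.exp_ofReal_mul_I_re,
      Complex.exp_ofReal_mul_I_im]
    field_simp
    have : Real.sin φ ^ 2 = 1 - Real.cos φ ^ 2 := by linarith
    rw [this]; ring

theorem auxP_B (φ g : ℝ) (hs : Real.sin φ ≠ 0) (w : Fin 2 → ℝ) :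
    auxP φ ((Matrix.of ![![1, 0], ![g, 1]]).mulVec w)
      = auxP φ w + ⟨0, -(2 * (1 / (2 * Real.sin φ)) * g * (auxP φ w).re)⟩ := by
  apply Complex.ext
  · simp [auxP, Matrix.mulVec, dotProduct, Fin.sum_univ_two]
  · simp [auxP, Matrix.mulVec, dotProduct, Fin.sum_univ_two]
    field_simp
    ring

theorem auxP_norm_le (φ : ℝ) (hs : 0 < Real.sin φ) (w : Fin 2 → ℝ) (δ : ℝ)
    (hw : ∀ i, |w i| ≤ δ) : ‖auxP φ w‖ ≤ (1 / 2 + 3 / (2 * Real.sin φ)) * δ := by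
  refine (Complex.norm_le_abs_re_add_abs_im _).trans ?_
  have h0 := hw 0
  have h1 := hw 1
  have hc : |1 - Real.cos φ| ≤ 2 := by
    rw [abs_le]; constructor <;> linarith [Real.cos_le_one φ, Real.neg_one_le_cos φ]
  have hδ : 0 ≤ δ := (abs_nonneg _).trans h0
  have e1 : |(auxP φ w).re| ≤ 1 / 2 * δ := by
    simp only [auxP, abs_div]
    rw [abs_of_pos (by norm_num : (0 : ℝ) < 2)]; linarith
  have e2 : |(auxP φ w).im| ≤ 3 / (2 * Real.sin φ) * δ := by
    simp only [auxP, abs_div]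
    rw [abs_of_pos (by positivity : 0 < 2 * Real.sin φ), div_mul_eq_mul_div]
    gcongr
    refine (abs_sub _ _).trans ?_
    rw [abs_mul]
    have : |w 0| * |1 - Real.cos φ| ≤ δ * 2 := mul_le_mul h0 hc (abs_nonneg _) hδ
    linarith
  linarith

theorem auxP_le_norm (φ : ℝ) (hs : 0 < Real.sin φ) (v : Fin 2 → ℝ) :
    |v 0| + |v 1| ≤ 8 * ‖auxP φ v‖ := by
  have h1 := Complex.abs_re_le_norm (auxP φ v)
  have h2 := Complex.abs_im_le_norm (auxP φ v)
  have e0 : v 0 = 2 * (auxP φ v).re := by simp only [auxP]; ring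
  have e1 : v 1 = 2 * (auxP φ v).re * (1 - Real.cos φ) - 2 * Real.sin φ * (auxP φ v).im := by
    simp only [auxP]; field_simp; ring
  have hc : |1 - Real.cos φ| ≤ 2 := by
    rw [abs_le]; constructor <;> linarith [Real.cos_le_one φ, Real.neg_one_le_cos φ]
  have hs1 : |Real.sin φ| ≤ 1 := Real.abs_sin_le_one φ
  set r := (auxP φ v).re
  set i := (auxP φ v).im
  have n0 := norm_nonneg (auxP φ v)
  have a0 : |v 0| ≤ 2 * ‖auxP φ v‖ := by
    rw [e0, abs_mul, abs_of_pos (by norm_num : (0 : ℝ) < 2)]; linarith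
  have a1 : |v 1| ≤ 6 * ‖auxP φ v‖ := by
    rw [e1]
    refine (abs_sub _ _).trans ?_
    rw [abs_mul, abs_mul, abs_mul, abs_mul, abs_of_pos (by norm_num : (0 : ℝ) < 2)]
    have := mul_le_mul h1 hc (abs_nonneg _) n0
    have := mul_le_mul hs1 h2 (abs_nonneg _) (by norm_num)
    linarith
  linarith

theorem auxP_pert (φ : ℝ) (hs : 0 < Real.sin φ) (M : Matrix (Fin 2) (Fin 2) ℝ) (δ : ℝ)
    (hM : ∀ i j : Fin 2, |M i j -
      (Matrix.of ![![2 * Real.cos φ - 1, 1], ![2 * Real.cos φ - 2, 1]]) i j| ≤ δ)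
    (v : Fin 2 → ℝ) :
    ‖auxP φ (M.mulVec v) - Complex.exp (φ * Complex.I) * auxP φ v‖
      ≤ (1 / 2 + 3 / (2 * Real.sin φ)) * (8 * δ) * ‖auxP φ v‖ := by
  rw [← auxP_M φ hs.ne', ← auxP_sub, ← Matrix.sub_mulVec]
  have hδ : 0 ≤ δ := (abs_nonneg _).trans (hM 0 0)
  refine (auxP_norm_le φ hs _ (δ * (8 * ‖auxP φ v‖)) fun i => ?_).trans (le_of_eq (by ring))
  refine le_trans ?_ (mul_le_mul_of_nonneg_left (auxP_le_norm φ hs v) hδ)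
  simp only [Matrix.mulVec, dotProduct, Fin.sum_univ_two]
  refine (abs_add_le _ _).trans ?_
  rw [abs_mul, abs_mul, mul_add]
  exact add_le_add (mul_le_mul_of_nonneg_right (hM i 0) (abs_nonneg _))
    (mul_le_mul_of_nonneg_right (hM i 1) (abs_nonneg _))

/-- normalised direction -/
noncomputable def auxU (q : ℂ) : ℂ := q / (‖q‖ : ℂ)

theorem auxU_norm (q : ℂ) (hq : q ≠ 0) : ‖auxU q‖ = 1 := by
  simp [auxU, hq]

theorem auxU_mul (q : ℂ) (hq : q ≠ 0) : q = (‖q‖ : ℂ) * auxU q := by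
  have : (‖q‖ : ℂ) ≠ 0 := by simpa using hq
  simp only [auxU]; field_simp

theorem aux_step (q p' : ℂ) (hq : q ≠ 0) (s g : ℝ)
    (hp : p' = q + ⟨0, -(2 * s * g * q.re)⟩) :
    ‖p'‖ ^ 2 = ‖q‖ ^ 2 * (1 + (-2 * (s * g) * (auxU q ^ 2).im
      + 2 * (s * g) ^ 2 * (1 + (auxU q ^ 2).re))) := by
  have hu := auxU_norm q hq
  have hm := auxU_mul q hq
  set u := auxU q
  set r := ‖q‖
  have h1 : u.re ^ 2 + u.im ^ 2 = 1 := by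
    have := Complex.sq_norm u
    rw [hu, Complex.normSq_apply] at this
    linarith
  have hre : q.re = r * u.re := by rw [hm]; simp
  have him : q.im = r * u.im := by rw [hm]; simp
  have e := Complex.sq_norm p'
  rw [e, Complex.normSq_apply, hp]
  simp only [Complex.add_re, Complex.add_im, hre, him]
  have a1 : (u ^ 2).re = 2 * u.re ^ 2 - 1 := by
    rw [sq, Complex.mul_re]; linarith
  have a2 : (u ^ 2).im = 2 * u.re * u.im := by
    rw [sq, Complex.mul_im]; ring
  rw [a1, a2]
  have h2 : u.im ^ 2 = 1 - u.re ^ 2 := by linarith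
  ring_nf
  rw [h2]
  ring

theorem aux_log (τ x y x4 : ℝ) (hxy : x ^ 2 + y ^ 2 = 1) (hx4 : x4 = x ^ 2 - y ^ 2)
    (ht : |τ| ≤ 1 / 8) :
    |1 / 2 * Real.log (1 + (-2 * τ * y + 2 * τ ^ 2 * (1 + x)))
      - (-τ * y + 1 / 2 * τ ^ 2 * (1 + 2 * x + x4))| ≤ 21 * |τ| ^ 3 := by
  set t := |τ| with htd
  have ht0 : 0 ≤ t := abs_nonneg _
  have hy : |y| ≤ 1 := by
    rw [← sq_le_one_iff_abs_le_one]; nlinarith [sq_nonneg x]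
  have hx : |x| ≤ 1 := by
    rw [← sq_le_one_iff_abs_le_one]; nlinarith [sq_nonneg y]
  have hx1 : |1 + x| ≤ 2 := by
    rw [abs_le] at hx ⊢; constructor <;> linarith
  set X := -2 * τ * y + 2 * τ ^ 2 * (1 + x) with hX
  have hXb : |X| ≤ 5 / 2 * t := by
    rw [hX]
    refine (abs_add_le _ _).trans ?_
    rw [abs_mul, abs_mul, abs_mul, abs_mul, abs_pow, ← htd]
    norm_num
    have h1 : t * |y| ≤ t * 1 := mul_le_mul_of_nonneg_left hy ht0
    have h2 : t ^ 2 * |1 + x| ≤ t ^ 2 * 2 := mul_le_mul_of_nonneg_left hx1 (sq_nonneg t)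
    have h3 : t ^ 2 ≤ 1 / 8 * t := by nlinarith
    linarith
  have hX2 : |X| ≤ 1 / 2 := by linarith
  have hl := Real.abs_log_sub_add_sum_range_le (x := -X) (by rw [abs_neg]; linarith) 2
  simp [Finset.sum_range_succ] at hl
  have hl2 : |X| ^ 3 / (1 - |X|) ≤ 32 * t ^ 3 := by
    rw [div_le_iff₀ (by linarith)]
    have h1 : |X| ^ 3 ≤ (5 / 2 * t) ^ 3 := pow_le_pow_left₀ (abs_nonneg _) hXb 3
    have h3 : 0 ≤ t ^ 3 := by positivity
    nlinarith
  have hl3 := hl.trans hl2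
  have hid : X - X ^ 2 / 2 - (-2 * τ * y + τ ^ 2 * (1 + 2 * x + x4))
      = 4 * τ ^ 3 * (y * (1 + x)) - 2 * τ ^ 4 * (1 + x) ^ 2 := by
    rw [hX, hx4]
    have : x ^ 2 = 1 - y ^ 2 := by linarith
    linear_combination (-τ ^ 2) * hxy
  have hrem : |X - X ^ 2 / 2 - (-2 * τ * y + τ ^ 2 * (1 + 2 * x + x4))| ≤ 9 * t ^ 3 := by
    rw [hid]
    refine (abs_sub _ _).trans ?_
    simp only [abs_mul, abs_pow, ← htd]
    norm_num
    have h1 : |y| * |1 + x| ≤ 1 * 2 := mul_le_mul hy hx1 (abs_nonneg _) (by norm_num)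
    have h2 : (1 + x) ^ 2 ≤ 2 ^ 2 := by
      rw [← sq_abs]; exact pow_le_pow_left₀ (abs_nonneg _) hx1 2
    have h3 : 0 ≤ t ^ 3 := by positivity
    have h4 : t ^ 4 ≤ 1 / 8 * t ^ 3 := by nlinarith
    have h5 := mul_le_mul_of_nonneg_left h1 h3
    have h6 := mul_le_mul_of_nonneg_left h2 (by positivity : 0 ≤ t ^ 4)
    linarith
  have h3 : 0 ≤ t ^ 3 := by positivity
  rw [abs_le] at hl3 hrem ⊢
  constructor <;> nlinarith [hl3.1, hl3.2, hrem.1, hrem.2]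

theorem aux_logq (p q e : ℂ) (he : ‖e‖ = 1) (hp : p ≠ 0) (hq : q ≠ 0) (δ : ℝ)
    (h : ‖q - e * p‖ ≤ δ * ‖p‖) (hδ : δ ≤ 1 / 2) :
    |Real.log ‖q‖ - Real.log ‖p‖| ≤ 2 * δ := by
  have hp0 : 0 < ‖p‖ := norm_pos_iff.2 hp
  have hq0 : 0 < ‖q‖ := norm_pos_iff.2 hq
  rw [← Real.log_div hq0.ne' hp0.ne']
  have h1 : |‖q‖ - ‖p‖| ≤ δ * ‖p‖ := by
    have := abs_norm_sub_norm_le q (e * p)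
    rw [norm_mul, he, one_mul] at this
    exact this.trans h
  have h2 : |1 - ‖q‖ / ‖p‖| ≤ δ := by
    rw [abs_sub_comm, div_sub_one hp0.ne', abs_div, abs_of_pos hp0, div_le_iff₀ hp0]
    exact h1
  have hl := Real.abs_log_sub_add_sum_range_le (x := 1 - ‖q‖ / ‖p‖) (by linarith) 0
  simp only [Finset.range_zero, Finset.sum_empty, zero_add, sub_sub_cancel, pow_one] at hl
  refine hl.trans ?_
  have h0 := abs_nonneg (1 - ‖q‖ / ‖p‖)
  rw [div_le_iff₀ (by linarith)]
  nlinarith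

theorem aux_dir (x y : ℂ) (hx : x ≠ 0) (hy : y ≠ 0) :
    ‖auxU x - auxU y‖ ≤ 2 * (‖x - y‖ / ‖y‖) := by
  have hy0 : 0 < ‖y‖ := norm_pos_iff.2 hy
  have e : auxU x - auxU y = ((((‖y‖ - ‖x‖ : ℝ) : ℂ)) * auxU x + (x - y)) / (‖y‖ : ℂ) := by
    have h1 := auxU_mul x hx
    have : (‖y‖ : ℂ) ≠ 0 := by simpa using hy
    rw [eq_div_iff this]
    push_cast
    have h2 := auxU_mul y hy
    linear_combination h2 - h1
  rw [e, norm_div, Complex.norm_real, norm_norm, ← mul_div_assoc]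
  gcongr
  refine (norm_add_le _ _).trans ?_
  rw [norm_mul, Complex.norm_real, auxU_norm x hx, mul_one, Real.norm_eq_abs]
  have := abs_norm_sub_norm_le y x
  rw [norm_sub_rev] at this
  linarith

theorem aux_summable_pow (r : ℝ) (hr : r < -1) : Summable fun n : ℕ => ((n : ℝ) + 1) ^ r := by
  have := (summable_nat_add_iff 1).2 (Real.summable_nat_rpow.2 hr)
  simpa using this

theorem aux_sq_sub (z w : ℂ) (hz : ‖z‖ = 1) (hw : ‖w‖ = 1) : ‖z ^ 2 - w ^ 2‖ ≤ 2 * ‖z - w‖ := by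
  have : z ^ 2 - w ^ 2 = (z + w) * (z - w) := by ring
  rw [this, norm_mul]
  refine mul_le_mul_of_nonneg_right ((norm_add_le _ _).trans ?_) (norm_nonneg _)
  rw [hz, hw]; norm_num

theorem auxU_mul_unit (e q : ℂ) (he : ‖e‖ = 1) : auxU (e * q) = e * auxU q := by
  simp [auxU, he, mul_div_assoc]

theorem aux_det (φ s lam K C₁ ε : ℝ) (hsin : Real.sin φ ≠ 0) (hcos : Real.cos φ ≠ 0)
    (hε : 0 < ε) (hC₁ : 0 < C₁) (hK : 0 ≤ K)
    (p q : ℕ → ℂ) (g a : ℕ → ℝ) (hp0 : ∀ n, p n ≠ 0) (hq0 : ∀ n, q n ≠ 0)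
    (ha : ∀ n, 0 < a n) (hsum : Summable a)
    (hq : ∀ n, ‖q n - Complex.exp (φ * Complex.I) * p n‖ ≤ K * a n * ‖p n‖)
    (hrec : ∀ n, p (n + 1) = q n + ⟨0, -(2 * s * g n * (q n).re)⟩)
    (hb : ∀ n : ℕ, |g n| ≤ C₁ * ((n : ℝ) + 1) ^ (-(1 / 3 : ℝ) - ε))
    (hA : (fun n => ∑ k ∈ Finset.range n, g k * (auxU (q k) ^ 2).im) =o[atTop] auxH)
    (hB : (fun n => ∑ k ∈ Finset.range n, (g k ^ 2 - lam ^ 2 / ((k : ℝ) + 1)) *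
      (1 + 2 * (auxU (q k) ^ 2).re + (auxU (q k) ^ 4).re)) =o[atTop] auxH) :
    Tendsto (fun n => Real.log ‖p n‖ / auxH n) atTop (nhds (s ^ 2 * lam ^ 2 / 2)) := by
  set e : ℂ := Complex.exp (φ * Complex.I) with he
  have he1 : ‖e‖ = 1 := Complex.norm_exp_ofReal_mul_I φ
  have hre : e.re = Real.cos φ := Complex.exp_ofReal_mul_I_re φ
  have him : e.im = Real.sin φ := Complex.exp_ofReal_mul_I_im φ
  have hee : (e ^ 2).im ≠ 0 := by
    rw [sq, Complex.mul_im, hre, him]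
    intro h
    have : Real.sin φ * Real.cos φ = 0 := by linarith
    exact (mul_ne_zero hsin hcos) this
  have he2 : e ^ 2 ≠ 1 := fun h => hee (by rw [h]; simp)
  have he4 : e ^ 4 ≠ 1 := by
    intro h
    have : (e ^ 2 - 1) * (e ^ 2 + 1) = 0 := by linear_combination h
    rcases mul_eq_zero.1 this with h1 | h1
    · exact he2 (by linear_combination h1)
    · have h2 : e ^ 2 = -1 := by linear_combination h1
      exact hee (by rw [h2]; simp)
  set b : ℕ → ℝ := fun n => C₁ * ((n : ℝ) + 1) ^ (-(1 / 3 : ℝ) - ε) with hbd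
  have hbC : ∀ n, b n ≤ C₁ := by
    intro n
    have : ((n : ℝ) + 1) ^ (-(1 / 3 : ℝ) - ε) ≤ 1 :=
      Real.rpow_le_one_of_one_le_of_nonpos (by have := Nat.cast_nonneg (α := ℝ) n; linarith)
        (by linarith)
    simp only [hbd]; nlinarith
  have hb0 : ∀ n, 0 ≤ b n := fun n => by simp only [hbd]; positivity
  have hb3 : Summable fun n => b n ^ 3 := by
    have h1 : ∀ n : ℕ, b n ^ 3 = C₁ ^ 3 * ((n : ℝ) + 1) ^ (-1 - 3 * ε) := by
      intro n
      simp only [hbd]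
      rw [mul_pow, ← Real.rpow_natCast (((n : ℝ) + 1) ^ _), ← Real.rpow_mul (by positivity)]
      congr 2; push_cast; ring
    simp_rw [h1]
    exact (aux_summable_pow _ (by linarith)).mul_left _
  have hb1 : Summable fun n : ℕ => b n * (1 / ((n : ℝ) + 1)) := by
    have h1 : ∀ n : ℕ, b n * (1 / ((n : ℝ) + 1)) = C₁ * ((n : ℝ) + 1) ^ (-(4 / 3) - ε) := by
      intro n
      simp only [hbd]
      rw [one_div ((n : ℝ) + 1), ← Real.rpow_neg_one ((n : ℝ) + 1), mul_assoc,
        ← Real.rpow_add (by positivity)]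
      congr 2; ring
    simp_rw [h1]
    exact (aux_summable_pow _ (by linarith)).mul_left _
  have hu : ∀ n, ‖auxU (q n)‖ = 1 := fun n => auxU_norm _ (hq0 n)
  -- remainder
  have hr : Summable fun n => Real.log ‖p (n + 1)‖ - Real.log ‖p n‖
      - (-(s * g n) * (auxU (q n) ^ 2).im + 1 / 2 * (s * g n) ^ 2 *
        (1 + 2 * (auxU (q n) ^ 2).re + (auxU (q n) ^ 4).re)) := by
    have hT : Tendsto (fun n => |s| ^ 3 * b n ^ 3) atTop (nhds 0) :=
      (hb3.mul_left _).tendsto_atTop_zero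
    have hTa : Tendsto (fun n => K * a n) atTop (nhds 0) := (hsum.mul_left _).tendsto_atTop_zero
    refine Summable.of_norm_bounded_eventually_nat
      (g := fun n => 21 * (|s| ^ 3 * b n ^ 3) + 2 * (K * a n))
      (((hb3.mul_left _).mul_left _).add ((hsum.mul_left _).mul_left _)) ?_
    filter_upwards [hT.eventually (ge_mem_nhds (show (0 : ℝ) < (1 / 8) ^ 3 by norm_num)),
      hTa.eventually (ge_mem_nhds (show (0 : ℝ) < 1 / 2 by norm_num))] with n h1 h2
    have hsb : |s * g n| ≤ |s| * b n := by
      rw [abs_mul]; exact mul_le_mul_of_nonneg_left (hb n) (abs_nonneg _)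
    have hsb2 : |s| * b n ≤ 1 / 8 := by
      rw [← mul_pow] at h1
      exact le_of_pow_le_pow_left₀ (by norm_num) (by norm_num) h1
    have hnq : ‖auxU (q n) ^ 2‖ = 1 := by rw [norm_pow, hu]; norm_num
    have hxy : (auxU (q n) ^ 2).re ^ 2 + (auxU (q n) ^ 2).im ^ 2 = 1 := by
      have := Complex.sq_norm (auxU (q n) ^ 2)
      rw [hnq, Complex.normSq_apply] at this
      linarith
    have hx4 : (auxU (q n) ^ 4).re = (auxU (q n) ^ 2).re ^ 2 - (auxU (q n) ^ 2).im ^ 2 := by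
      have : auxU (q n) ^ 4 = auxU (q n) ^ 2 * auxU (q n) ^ 2 := by ring
      rw [this, Complex.mul_re]; ring
    have hl := aux_log (s * g n) _ _ _ hxy hx4 (hsb.trans hsb2)
    have hl2 := aux_logq (p n) (q n) e he1 (hp0 n) (hq0 n) (K * a n) (hq n) h2
    have hst := aux_step (q n) (p (n + 1)) (hq0 n) s (g n) (hrec n)
    set X := 1 + (-2 * (s * g n) * (auxU (q n) ^ 2).im
      + 2 * (s * g n) ^ 2 * (1 + (auxU (q n) ^ 2).re)) with hX
    have hqp : 0 < ‖q n‖ := norm_pos_iff.2 (hq0 n)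
    have hpp : 0 < ‖p (n + 1)‖ := norm_pos_iff.2 (hp0 (n + 1))
    have hXp : X ≠ 0 := by
      intro h
      rw [h, mul_zero] at hst
      exact (pow_pos hpp 2).ne' hst
    have hlog : Real.log ‖p (n + 1)‖ = Real.log ‖q n‖ + 1 / 2 * Real.log X := by
      have := congrArg Real.log hst
      rw [Real.log_mul (pow_pos hqp 2).ne' hXp, Real.log_pow, Real.log_pow] at this
      push_cast at this
      linarith
    have h3 : |s * g n| ^ 3 ≤ |s| ^ 3 * b n ^ 3 := by
      rw [← mul_pow]; exact pow_le_pow_left₀ (abs_nonneg _) hsb 3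
    rw [hlog, Real.norm_eq_abs]
    rw [abs_le] at hl hl2 ⊢
    constructor <;> linarith [hl.1, hl.2, hl2.1, hl2.2]
  -- direction recursion
  set d : ℕ → ℝ := fun n => 2 * (K * (1 + 2 * |s| * C₁) * a (n + 1) + 2 * |s| * b n) with hdd
  have hd : ∀ n, ‖auxU (q (n + 1)) - e * auxU (q n)‖ ≤ d n := by
    intro n
    have hqp : 0 < ‖q n‖ := norm_pos_iff.2 (hq0 n)
    have he0 : e ≠ 0 := Complex.exp_ne_zero _
    rw [← auxU_mul_unit e _ he1]
    refine (aux_dir _ _ (hq0 _) (mul_ne_zero he0 (hq0 n))).trans ?_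
    simp only [hdd]
    refine mul_le_mul_of_nonneg_left ?_ (by norm_num)
    rw [norm_mul, he1, one_mul, div_le_iff₀ hqp]
    have h1 : ‖p (n + 1) - q n‖ ≤ 2 * |s| * b n * ‖q n‖ := by
      rw [hrec n, add_sub_cancel_left]
      refine (Complex.norm_le_abs_re_add_abs_im _).trans ?_
      simp only [abs_zero, zero_add, abs_neg, abs_mul]
      rw [abs_of_pos (by norm_num : (0 : ℝ) < 2)]
      have := Complex.abs_re_le_norm (q n)
      have := hb n
      gcongr
    have h2 : ‖p (n + 1)‖ ≤ (1 + 2 * |s| * C₁) * ‖q n‖ := by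
      have h3 : ‖p (n + 1)‖ ≤ ‖p (n + 1) - q n‖ + ‖q n‖ := by
        simpa using norm_add_le (p (n + 1) - q n) (q n)
      have h4 : 2 * |s| * b n * ‖q n‖ ≤ 2 * |s| * C₁ * ‖q n‖ := by
        have := hbC n
        gcongr
      linarith
    have h5 : q (n + 1) - e * q n = (q (n + 1) - e * p (n + 1)) + e * (p (n + 1) - q n) := by ring
    rw [h5]
    refine (norm_add_le _ _).trans ?_
    rw [norm_mul, he1, one_mul]
    have h6 : K * a (n + 1) * ‖p (n + 1)‖ ≤ K * a (n + 1) * ((1 + 2 * |s| * C₁) * ‖q n‖) :=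
      mul_le_mul_of_nonneg_left h2 (mul_nonneg hK (ha _).le)
    have h7 := hq (n + 1)
    nlinarith
  have hds : Summable fun n : ℕ => d n * (1 / ((n : ℝ) + 1)) := by
    have h1 : Summable fun n : ℕ => a (n + 1) * (1 / ((n : ℝ) + 1)) := by
      refine Summable.of_nonneg_of_le (fun n => ?_) (fun n => ?_) ((summable_nat_add_iff 1).2 hsum)
      · have := ha (n + 1); positivity
      · have : 1 / ((n : ℝ) + 1) ≤ 1 := by
          rw [div_le_one (by positivity)]; linarith [Nat.cast_nonneg (α := ℝ) n]
        nlinarith [ha (n + 1)]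
    have h2 := (h1.mul_left (2 * (K * (1 + 2 * |s| * C₁)))).add (hb1.mul_left (2 * (2 * |s|)))
    refine h2.congr fun n => ?_
    simp only [hdd]; ring
  have hd2 : ∀ n, ‖auxU (q (n + 1)) ^ 2 - e ^ 2 * auxU (q n) ^ 2‖ ≤ 2 * d n := by
    intro n
    rw [← mul_pow]
    have := aux_sq_sub _ _ (hu (n + 1)) (show ‖e * auxU (q n)‖ = 1 by rw [norm_mul, he1, hu, mul_one])
    linarith [hd n]
  have hd4 : ∀ n, ‖auxU (q (n + 1)) ^ 4 - e ^ 4 * auxU (q n) ^ 4‖ ≤ 4 * d n := by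
    intro n
    have h1 := aux_sq_sub (auxU (q (n + 1)) ^ 2) (e ^ 2 * auxU (q n) ^ 2)
      (by rw [norm_pow, hu, one_pow]) (by rw [norm_mul, norm_pow, norm_pow, he1, hu]; norm_num)
    have h2 : auxU (q (n + 1)) ^ 4 - e ^ 4 * auxU (q n) ^ 4
      = (auxU (q (n + 1)) ^ 2) ^ 2 - (e ^ 2 * auxU (q n) ^ 2) ^ 2 := by ring
    rw [h2]
    linarith [hd2 n]
  obtain ⟨c2, hc2⟩ := aux_osc (fun n => auxU (q n) ^ 2) (e ^ 2) he2
    (fun n => by rw [norm_pow, hu, one_pow]) (fun n => 2 * d n) hd2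
    ((hds.mul_left 2).congr fun n => by ring)
  obtain ⟨c4, hc4⟩ := aux_osc (fun n => auxU (q n) ^ 4) (e ^ 4) he4
    (fun n => by rw [norm_pow, hu, one_pow]) (fun n => 4 * d n) hd4
    ((hds.mul_left 4).congr fun n => by ring)
  have hreal : ∀ (z : ℕ → ℂ) (c : ℝ),
      (∀ n, ‖∑ k ∈ Finset.range n, z k * ((1 / ((k : ℝ) + 1) : ℝ) : ℂ)‖ ≤ c) →
      (fun n => ∑ k ∈ Finset.range n, (z k).re * (1 / ((k : ℝ) + 1))) =o[atTop] auxH := by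
    intro z c hc
    refine aux_bdd_littleO _ c fun n => ?_
    refine le_trans (le_of_eq ?_) ((Complex.abs_re_le_norm _).trans (hc n))
    rw [Complex.re_sum]
    simp only [Complex.re_mul_ofReal]
  have o2 := hreal _ _ hc2
  have o4 := hreal _ _ hc4
  have or := aux_conv_littleO _ _ hr.hasSum.tendsto_sum_nat
  have o0 := aux_bdd_littleO (fun _ => Real.log ‖p 0‖) _ (fun n => le_rfl)
  have ototal := (((((hA.const_mul_left (-s)).add (hB.const_mul_left (1 / 2 * s ^ 2))).add
    (o2.const_mul_left (s ^ 2 * lam ^ 2))).add (o4.const_mul_left (1 / 2 * s ^ 2 * lam ^ 2))).add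
    or).add o0
  have hfin : (fun n => Real.log ‖p n‖ - s ^ 2 * lam ^ 2 / 2 * auxH n) =o[atTop] auxH := by
    refine ototal.congr_left fun n => ?_
    symm
    have htel := Finset.sum_range_sub (fun k => Real.log ‖p k‖) n
    have h1 : Real.log ‖p n‖ = ∑ k ∈ Finset.range n, (Real.log ‖p (k + 1)‖ - Real.log ‖p k‖)
      + Real.log ‖p 0‖ := by rw [htel]; ring
    rw [h1]
    have h2 : ∑ k ∈ Finset.range n, (Real.log ‖p (k + 1)‖ - Real.log ‖p k‖)
        - s ^ 2 * lam ^ 2 / 2 * auxH n =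
        (-s) * (∑ k ∈ Finset.range n, g k * (auxU (q k) ^ 2).im)
        + (1 / 2 * s ^ 2) * (∑ k ∈ Finset.range n, (g k ^ 2 - lam ^ 2 / ((k : ℝ) + 1)) *
          (1 + 2 * (auxU (q k) ^ 2).re + (auxU (q k) ^ 4).re))
        + (s ^ 2 * lam ^ 2) * (∑ k ∈ Finset.range n, (auxU (q k) ^ 2).re * (1 / ((k : ℝ) + 1)))
        + (1 / 2 * s ^ 2 * lam ^ 2) *
          (∑ k ∈ Finset.range n, (auxU (q k) ^ 4).re * (1 / ((k : ℝ) + 1)))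
        + ∑ k ∈ Finset.range n, (Real.log ‖p (k + 1)‖ - Real.log ‖p k‖
          - (-(s * g k) * (auxU (q k) ^ 2).im + 1 / 2 * (s * g k) ^ 2 *
        (1 + 2 * (auxU (q k) ^ 2).re + (auxU (q k) ^ 4).re))) := by
      simp only [auxH, Finset.mul_sum]
      rw [← Finset.sum_sub_distrib, ← Finset.sum_add_distrib, ← Finset.sum_add_distrib,
        ← Finset.sum_add_distrib, ← Finset.sum_add_distrib]
      refine Finset.sum_congr rfl fun k _ => ?_
      ring
    rw [add_sub_right_comm, h2]
  have ht := hfin.tendsto_div_nhds_zero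
  have ht2 := ht.add_const (s ^ 2 * lam ^ 2 / 2)
  rw [zero_add] at ht2
  refine ht2.congr' ?_
  filter_upwards [auxH_tendsto.eventually_gt_atTop 0] with n hn
  field_simp
  ring

theorem aux_meas_P (φ : ℝ) : Measurable (auxP φ) := by
  have : auxP φ = fun v : Fin 2 → ℝ => ((v 0 / 2 : ℝ) : ℂ)
      + (((v 0 * (1 - Real.cos φ) - v 1) / (2 * Real.sin φ) : ℝ) : ℂ) * Complex.I := by
    ext v
    apply Complex.ext
    · simp only [auxP, Complex.add_re, Complex.ofReal_re, Complex.re_ofReal_mul, Complex.I_re]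
      ring
    · simp only [auxP, Complex.add_im, Complex.ofReal_im, Complex.im_ofReal_mul, Complex.I_im]
      ring
  rw [this]
  fun_prop

theorem aux_meas_U : Measurable auxU := by
  unfold auxU
  fun_prop

/-- The filtration generated by the variables of index `< n`. -/
def auxF {Ω : Type*} [m0 : MeasurableSpace Ω] (g : ℕ → Ω → ℝ) (hg : ∀ n, Measurable (g n)) :
    Filtration ℕ m0 where
  seq n := ⨆ j ∈ {j : ℕ | j < n}, MeasurableSpace.comap (g j) inferInstance
  mono' := by
    intro m n hmn
    refine biSup_mono fun j hj => ?_
    exact lt_of_lt_of_le hj hmn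
  le' := fun n => iSup₂_le fun j _ => (hg j).comap_le

theorem auxF_meas {Ω : Type*} [m0 : MeasurableSpace Ω] (g : ℕ → Ω → ℝ)
    (hg : ∀ n, Measurable (g n)) (n : ℕ) : Measurable[auxF g hg (n + 1)] (g n) := by
  have h1 : Measurable[MeasurableSpace.comap (g n) inferInstance] (g n) := comap_measurable (g n)
  refine h1.mono ?_ le_rfl
  exact le_iSup₂_of_le (f := fun j (_ : j ∈ {j : ℕ | j < n + 1}) =>
    MeasurableSpace.comap (g j) inferInstance) n (Nat.lt_succ_self n) le_rfl

theorem auxF_indep {Ω : Type*} [m0 : MeasurableSpace Ω] (ν : Measure Ω) (g : ℕ → Ω → ℝ)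
    (hg : ∀ n, Measurable (g n)) (hindep : iIndepFun g ν) (n : ℕ) :
    Indep (MeasurableSpace.comap (g n) inferInstance) (auxF g hg n) ν := by
  suffices Indep (⨆ k ∈ ({n} : Set ℕ), MeasurableSpace.comap (g k) inferInstance)
      (⨆ k ∈ {k : ℕ | k < n}, MeasurableSpace.comap (g k) inferInstance) ν by
    rwa [iSup_singleton] at this
  exact indep_iSup_of_disjoint (fun k => (hg k).comap_le) hindep (by simp)

theorem auxF_indep_comp {Ω : Type*} [m0 : MeasurableSpace Ω] (ν : Measure Ω) (g : ℕ → Ω → ℝ)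
    (hg : ∀ n, Measurable (g n)) (hindep : iIndepFun g ν) (n : ℕ) (G : ℝ → ℝ) (hG : Measurable G) :
    Indep (MeasurableSpace.comap (fun ω => G (g n ω)) inferInstance) (auxF g hg n) ν := by
  refine indep_of_indep_of_le_left (auxF_indep ν g hg hindep n) ?_
  exact (hG.comp (comap_measurable (g n))).comap_le

/-- random transfer-matrix setup, indices shifted so that `g n`, `M n`,
`a n` stand for `g_{n+1}`, `M_{n+1}`, `a_{n+1}`: for `φ ∈ (0,π) \ {π/4, π/2, 3π/4}`,
`ν`-a.s. the Prüfer radii `R n ω = |p n ω|` of the orbit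
`v (n+1) = B(g_{n+1}) M_{n+1} v n`, decomposed as `v n = p n • f₊ + conj (p n) • f₋`,
satisfy `ln R_n / (∑_{j=1}^n 1/j) → λ²/(8 sin²φ)`. -/
theorem stmt14
    {Ω : Type*} [MeasurableSpace Ω] (ν : Measure Ω) [IsProbabilityMeasure ν]
    (lam ε C₁ C₄ : ℝ) (hlam : 0 < lam) (hε : 0 < ε) (hC₁ : 0 < C₁) (hC₄ : 0 < C₄)
    (g : ℕ → Ω → ℝ) (hgmeas : ∀ n, Measurable (g n))
    (hindep : iIndepFun g ν)
    (hmean : ∀ n, ∫ ω, g n ω ∂ν = 0)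
    (hvar : ∀ n, ∫ ω, (g n ω) ^ 2 ∂ν = lam ^ 2 / ((n : ℝ) + 1))
    (hint4 : ∀ n, Integrable (fun ω => (g n ω) ^ 4) ν)
    (h4 : ∀ n, ∫ ω, (g n ω) ^ 4 ∂ν ≤ C₄ * lam ^ 4 / ((n : ℝ) + 1) ^ 2)
    (hbdd : ∀ n ω, |g n ω| ≤ C₁ * ((n : ℝ) + 1) ^ (-(1 / 3 : ℝ) - ε))
    (φ : ℝ) (hφ : φ ∈ Set.Ioo 0 Real.pi)
    (hφ4 : φ ≠ Real.pi / 4) (hφ2 : φ ≠ Real.pi / 2) (hφ34 : φ ≠ 3 * Real.pi / 4)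
    (a : ℕ → ℝ) (ha : ∀ n, 0 < a n) (hsum : Summable a)
    (C : ℝ) (hC : 0 < C)
    (M : ℕ → Matrix (Fin 2) (Fin 2) ℝ) (hMinv : ∀ n, IsUnit (M n).det)
    (hM : ∀ n, ∀ i j : Fin 2,
      |M n i j -
          (Matrix.of ![![2 * Real.cos φ - 1, 1], ![2 * Real.cos φ - 2, 1]]) i j|
        ≤ C * a n)
    (v₀ : Fin 2 → ℝ) (hv₀ : v₀ ≠ 0)
    (v : ℕ → Ω → Fin 2 → ℝ)
    (hv0 : ∀ ω, v 0 ω = v₀)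
    (hvrec : ∀ n ω,
      v (n + 1) ω = ((Matrix.of ![![1, 0], ![g n ω, 1]]) * M n).mulVec (v n ω))
    (p : ℕ → Ω → ℂ)
    (hp : ∀ n ω,
      ((v n ω 0 : ℝ) : ℂ) = p n ω + starRingEnd ℂ (p n ω) ∧
      ((v n ω 1 : ℝ) : ℂ) =
        p n ω * (1 - Complex.exp (-(φ * Complex.I))) +
          starRingEnd ℂ (p n ω) * (1 - Complex.exp (φ * Complex.I))) :
    ∀ᵐ ω ∂ν,
      Tendsto
        (fun n =>
          Real.log ‖p n ω‖ / (∑ j ∈ Finset.range n, 1 / ((j : ℝ) + 1)))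
        atTop (nhds (lam ^ 2 / (8 * (Real.sin φ) ^ 2))) := by
  have hs : 0 < Real.sin φ := Real.sin_pos_of_pos_of_lt_pi hφ.1 hφ.2
  have hcos : Real.cos φ ≠ 0 := by
    intro h
    apply hφ2
    have h1 : Real.cos φ = Real.cos (Real.pi / 2) := by rw [h, Real.cos_pi_div_two]
    exact Real.injOn_cos ⟨hφ.1.le, hφ.2.le⟩
      ⟨by linarith [Real.pi_pos], by linarith [Real.pi_pos]⟩ h1
  -- the intermediate Prüfer coordinate
  set q : ℕ → Ω → ℂ := fun n ω => auxP φ ((M n).mulVec (v n ω)) with hq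
  have hpP : ∀ n ω, p n ω = auxP φ (v n ω) := fun n ω =>
    auxP_eq φ hs.ne' _ _ (hp n ω).1 (hp n ω).2
  have hMv : ∀ n (w : Fin 2 → ℝ), w ≠ 0 → (M n).mulVec w ≠ 0 := by
    intro n w hw h
    exact hw (Matrix.eq_zero_of_mulVec_eq_zero (hMinv n).ne_zero h)
  have hvne : ∀ n ω, v n ω ≠ 0 := by
    intro n ω
    induction n with
    | zero => rw [hv0]; exact hv₀
    | succ n ih =>
      rw [hvrec, ← Matrix.mulVec_mulVec]
      intro h
      refine hMv n _ ih (Matrix.eq_zero_of_mulVec_eq_zero ?_ h)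
      simp [Matrix.det_fin_two]
  have hp0 : ∀ n ω, p n ω ≠ 0 := fun n ω h => hvne n ω (auxP_zero φ hs.ne' _ (by rw [← hpP, h]))
  have hq0 : ∀ n ω, q n ω ≠ 0 := fun n ω h => hMv n _ (hvne n ω) (auxP_zero φ hs.ne' _ h)
  have hrec : ∀ n ω, p (n + 1) ω
      = q n ω + ⟨0, -(2 * (1 / (2 * Real.sin φ)) * g n ω * (q n ω).re)⟩ := by
    intro n ω
    rw [hpP, hvrec, ← Matrix.mulVec_mulVec, auxP_B φ _ hs.ne']
  have hqp : ∀ n ω, ‖q n ω - Complex.exp (φ * Complex.I) * p n ω‖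
      ≤ ((1 / 2 + 3 / (2 * Real.sin φ)) * (8 * C)) * a n * ‖p n ω‖ := by
    intro n ω
    rw [hpP]
    refine (auxP_pert φ hs (M n) (C * a n) (hM n) (v n ω)).trans (le_of_eq ?_)
    ring
  -- measurability
  have hvm : ∀ n, Measurable[auxF g hgmeas n] (v n) := by
    intro n
    induction n with
    | zero =>
      have : v 0 = fun _ => v₀ := funext hv0
      rw [this]; exact measurable_const
    | succ n ih =>
      have h1 : v (n + 1) = (fun x : ℝ × (Fin 2 → ℝ) =>
          ((Matrix.of ![![1, 0], ![x.1, 1]]) * M n).mulVec x.2) ∘ (fun ω => (g n ω, v n ω)) := by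
        ext1 ω
        rw [hvrec]; rfl
      rw [h1]
      refine Measurable.comp ?_ (Measurable.prodMk (auxF_meas g hgmeas n)
        (ih.mono ((auxF g hgmeas).mono (Nat.le_succ n)) le_rfl))
      refine Continuous.measurable ?_
      refine continuous_pi fun i => ?_
      fin_cases i
      · simp [Matrix.mulVec, dotProduct, Fin.sum_univ_two, Matrix.mul_apply]
        fun_prop
      · simp [Matrix.mulVec, dotProduct, Fin.sum_univ_two, Matrix.mul_apply]
        fun_prop
  have hum : ∀ n, Measurable[auxF g hgmeas n] (fun ω => auxU (q n ω)) := by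
    intro n
    have h1 : Measurable fun w : Fin 2 → ℝ => auxU (auxP φ ((M n).mulVec w)) := by
      refine aux_meas_U.comp ((aux_meas_P φ).comp ?_)
      refine Continuous.measurable ?_
      fun_prop
    exact h1.comp (hvm n)
  have hun : ∀ n ω, ‖auxU (q n ω)‖ = 1 := fun n ω => auxU_norm _ (hq0 n ω)
  have hHp : ∀ n, 0 < auxH (n + 1) := auxH_pos
  set b : ℕ → ℝ := fun n => C₁ * ((n : ℝ) + 1) ^ (-(1 / 3 : ℝ) - ε) with hb
  have bint : ∀ (f : Ω → ℝ) (c : ℝ), Measurable f → (∀ ω, |f ω| ≤ c) → Integrable f ν := by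
    intro f c hf hc
    exact Integrable.of_bound hf.aestronglyMeasurable c (Eventually.of_forall fun ω => by
      simpa using hc ω)
  have hgi2 : ∀ n, Integrable (fun ω => (g n ω) ^ 2) ν := fun n =>
    bint _ (b n ^ 2) ((hgmeas n).pow_const 2)
      (fun ω => by rw [abs_pow]; exact pow_le_pow_left₀ (abs_nonneg _) (hbdd n ω) 2)
  have hg2b : ∀ n ω, |g n ω ^ 2 - lam ^ 2 / ((n : ℝ) + 1)|
      ≤ b n ^ 2 + lam ^ 2 / ((n : ℝ) + 1) := by
    intro n ω
    refine (abs_sub _ _).trans (add_le_add ?_ ?_)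
    · rw [abs_pow]; exact pow_le_pow_left₀ (abs_nonneg _) (hbdd n ω) 2
    · rw [abs_of_nonneg (by positivity)]
  -- first martingale
  have mA := aux_mart ν (auxF g hgmeas) (fun n ω => g n ω / auxH (n + 1))
    (fun n ω => (auxU (q n ω) ^ 2).im)
    (fun n => lam ^ 2 * (1 / (((n : ℝ) + 1) * auxH (n + 1) ^ 2))) 1
    (fun n => Complex.measurable_im.comp ((hum n).pow_const 2))
    (fun n ω => (Complex.abs_im_le_norm _).trans (by rw [norm_pow, hun, one_pow]))
    (fun n => (auxF_meas g hgmeas n).div_const _)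
    (fun n => b n / auxH (n + 1))
    (fun n ω => by
      simp only [abs_div]
      rw [abs_of_pos (hHp n)]
      exact div_le_div_of_nonneg_right (hbdd n ω) (hHp n).le)
    (fun n => auxF_indep_comp ν g hgmeas hindep n (fun x => x / auxH (n + 1)) (by fun_prop))
    (fun n => by simp only [integral_div, hmean, zero_div])
    (fun n => by
      simp only [div_pow, integral_div, hvar]
      have := (hHp n).ne'
      refine le_of_eq ?_
      field_simp)
    (aux_summable_H.mul_left _)
  -- second martingale
  have mB := aux_mart ν (auxF g hgmeas) (fun n ω => g n ω ^ 2 - lam ^ 2 / ((n : ℝ) + 1))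
    (fun n ω => 1 + 2 * (auxU (q n ω) ^ 2).re + (auxU (q n ω) ^ 4).re)
    (fun n => C₄ * lam ^ 4 / ((n : ℝ) + 1) ^ 2) 4
    (fun n => ((Complex.measurable_re.comp ((hum n).pow_const 2)).const_mul 2 |>.const_add 1).add
      (Complex.measurable_re.comp ((hum n).pow_const 4)))
    (fun n ω => by
      have h2 := (Complex.abs_re_le_norm (auxU (q n ω) ^ 2))
      have h4 := (Complex.abs_re_le_norm (auxU (q n ω) ^ 4))
      rw [norm_pow, hun, one_pow, abs_le] at h2 h4
      rw [abs_le]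
      constructor <;> linarith [h2.1, h2.2, h4.1, h4.2])
    (fun n => ((auxF_meas g hgmeas n).pow_const 2).sub_const _)
    (fun n => b n ^ 2 + lam ^ 2 / ((n : ℝ) + 1))
    hg2b
    (fun n => auxF_indep_comp ν g hgmeas hindep n (fun x => x ^ 2 - lam ^ 2 / ((n : ℝ) + 1))
      (by fun_prop))
    (fun n => by
      rw [integral_sub (hgi2 n) (integrable_const _), hvar]
      simp)
    (fun n => by
      set m : ℝ := lam ^ 2 / ((n : ℝ) + 1) with hm
      have e : ∀ ω, (g n ω ^ 2 - m) ^ 2 = g n ω ^ 4 - (2 * m * g n ω ^ 2 - m ^ 2) := by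
        intro ω; ring
      simp only [e]
      have i2 : Integrable (fun ω => 2 * m * g n ω ^ 2 - m ^ 2) ν :=
        ((hgi2 n).const_mul _).sub (integrable_const _)
      rw [integral_sub (hint4 n) i2, integral_sub ((hgi2 n).const_mul _) (integrable_const _),
        integral_const_mul, hvar]
      simp only [integral_const, probReal_univ, smul_eq_mul, one_mul]
      have := h4 n
      nlinarith [sq_nonneg m])
    (by
      have h1 := (summable_nat_add_iff 1).2
        (Real.summable_one_div_nat_pow.2 (by norm_num : 1 < 2))
      refine (h1.mul_left (C₄ * lam ^ 4)).congr fun n => ?_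
      push_cast
      ring)
  filter_upwards [mA, mB] with ω hA hB
  obtain ⟨cA, hcA⟩ := hA
  obtain ⟨cB, hcB⟩ := hB
  have oA : (fun n => ∑ k ∈ Finset.range n, g k ω * (auxU (q k ω) ^ 2).im) =o[atTop] auxH := by
    refine aux_kronecker _ cA (hcA.congr fun n => ?_)
    refine Finset.sum_congr rfl fun k _ => ?_
    ring
  have oB := aux_conv_littleO _ _ hcB
  have hfin := aux_det φ (1 / (2 * Real.sin φ)) lam ((1 / 2 + 3 / (2 * Real.sin φ)) * (8 * C)) C₁ ε
    hs.ne' hcos hε hC₁ (by positivity) (fun n => p n ω) (fun n => q n ω) (fun n => g n ω) a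
    (fun n => hp0 n ω) (fun n => hq0 n ω) ha hsum (fun n => hqp n ω) (fun n => hrec n ω)
    (fun n => hbdd n ω) oA oB
  have hval : lam ^ 2 / (8 * (Real.sin φ) ^ 2) = (1 / (2 * Real.sin φ)) ^ 2 * lam ^ 2 / 2 := by
    have := hs.ne'
    field_simp
    norm_num
  rw [hval]
  exact hfin
end

section
/- Assume the random transfer-matrix setup below, with φ ∈ (0, π), φ ∉ {π/4, π/2, 3π/4}. Then for ν-almost every ω there exists an initial vector v₀(ω) ∈ ℝ² \ {0} such that the associated Prüfer radii R_n(ω) satisfy lim_{n→∞} ln R_n(ω) / ln n = −λ² / (8 sin²φ). -/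
open MeasureTheory ProbabilityTheory Filter Matrix

/-- the sigma-algebra generated by `g 0, ..., g (n-1)` -/
@[reducible] def pastSA {Ω : Type*} (g : ℕ → Ω → ℝ) (n : ℕ) : MeasurableSpace Ω :=
  ⨆ j ∈ Set.Iio n, MeasurableSpace.comap (g j) inferInstance

lemma pastSA_mono {Ω : Type*} (g : ℕ → Ω → ℝ) : Monotone (pastSA g) := by
  intro m n h
  exact biSup_mono (fun i hi => lt_of_lt_of_le hi h)

lemma pastSA_le {Ω : Type*} [mΩ : MeasurableSpace Ω] {g : ℕ → Ω → ℝ}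
    (hg : ∀ n, Measurable (g n)) (n : ℕ) : pastSA g n ≤ mΩ :=
  iSup₂_le (fun j _ => (hg j).comap_le)

lemma pastSA_meas {Ω : Type*} (g : ℕ → Ω → ℝ) {j n : ℕ} (h : j < n) :
    Measurable[pastSA g n] (g j) := by
  have h1 : MeasurableSpace.comap (g j) inferInstance ≤ pastSA g n :=
    le_iSup₂_of_le (f := fun j (_ : j ∈ Set.Iio n) => MeasurableSpace.comap (g j) inferInstance)
      j h le_rfl
  exact measurable_iff_comap_le.2 h1

lemma past_indep {Ω : Type*} [mΩ : MeasurableSpace Ω] {ν : Measure Ω} [IsProbabilityMeasure ν]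
    {g : ℕ → Ω → ℝ} (hg : ∀ n, Measurable (g n)) (hi : iIndepFun g ν) (n : ℕ)
    {X : Ω → ℝ} (hX : Measurable[pastSA g n] X) {f : ℝ → ℝ} (hf : Measurable f) :
    IndepFun X (fun ω => f (g n ω)) ν := by
  have h1 := indep_iSup_of_disjoint (fun i => (hg i).comap_le)
    ((iIndepFun_iff_iIndep _ _ _).1 hi) (S := Set.Iio n) (T := {n}) (by simp)
  rw [IndepFun_iff_Indep]
  refine indep_of_indep_of_le h1 (measurable_iff_comap_le.1 hX) ?_
  simp only [Set.mem_singleton_iff, iSup_iSup_eq_left]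
  exact measurable_iff_comap_le.1 (hf.comp (comap_measurable _))

lemma mart_conv {Ω : Type*} [mΩ : MeasurableSpace Ω] {ν : Measure Ω} [IsProbabilityMeasure ν]
    {g : ℕ → Ω → ℝ} (hg : ∀ n, Measurable (g n)) (hi : iIndepFun g ν)
    (f : ℕ → ℝ → ℝ) (hf : ∀ n, Measurable (f n)) (D : ℕ → ℝ)
    (hD : ∀ n ω, |f n (g n ω)| ≤ D n) (hmean : ∀ n, ∫ ω, f n (g n ω) ∂ν = 0)
    (V : ℕ → ℝ) (hV : ∀ n, ∫ ω, (f n (g n ω)) ^ 2 ∂ν ≤ V n)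
    (c : ℕ → Ω → ℝ) (hc : ∀ n, Measurable[pastSA g n] (c n)) (b : ℕ → ℝ)
    (hb : ∀ n ω, |c n ω| ≤ b n) (hs : Summable (fun n => b n ^ 2 * V n)) :
    ∀ᵐ ω ∂ν, ∃ l, Tendsto (fun n => ∑ k ∈ Finset.range n, f k (g k ω) * c k ω) atTop (nhds l) := by
  set S : ℕ → Ω → ℝ := fun n ω => ∑ k ∈ Finset.range n, f k (g k ω) * c k ω with hS
  let F : Filtration ℕ mΩ := ⟨pastSA g, pastSA_mono g, pastSA_le hg⟩
  have hSm : ∀ n, Measurable[pastSA g n] (S n) := by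
    intro n
    refine Finset.measurable_sum (m := pastSA g n) _ (fun k hk => ?_)
    have hk' : k < n := Finset.mem_range.1 hk
    exact ((hf k).comp (pastSA_meas g hk')).mul ((hc k).mono (pastSA_mono g hk'.le) le_rfl)
  have hSm' : ∀ n, Measurable (S n) := fun n => (hSm n).mono (pastSA_le hg n) le_rfl
  have hcm' : ∀ n, Measurable (c n) := fun n => (hc n).mono (pastSA_le hg n) le_rfl
  have hfm : ∀ n, Measurable (fun ω => f n (g n ω)) := fun n => (hf n).comp (hg n)
  have hbdi : ∀ (h : Ω → ℝ) (K : ℝ), Measurable h → (∀ ω, |h ω| ≤ K) → Integrable h ν := by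
    intro h K hm hK
    exact Integrable.of_bound hm.aestronglyMeasurable K (Eventually.of_forall hK)
  have hSb : ∀ n ω, |S n ω| ≤ ∑ k ∈ Finset.range n, D k * b k := by
    intro n ω
    refine (Finset.abs_sum_le_sum_abs _ _).trans (Finset.sum_le_sum (fun k _ => ?_))
    rw [abs_mul]
    exact mul_le_mul (hD k ω) (hb k ω) (abs_nonneg _) ((abs_nonneg _).trans (hD k ω))
  have hSi : ∀ n, Integrable (S n) ν := fun n => hbdi _ _ (hSm' n) (hSb n)
  have key : ∀ n (X : Ω → ℝ), Measurable[pastSA g n] X → ∫ ω, X ω * f n (g n ω) ∂ν = 0 := by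
    intro n X hX
    rw [(past_indep hg hi n hX (hf n)).integral_fun_mul_eq_mul_integral
      ((hX.mono (pastSA_le hg n) le_rfl).aestronglyMeasurable) (hfm n).aestronglyMeasurable, hmean n,
      mul_zero]
  have hM : Martingale S F ν := by
    refine martingale_of_setIntegral_eq_succ (fun n => (hSm n).stronglyMeasurable) hSi ?_
    intro n s hs
    have hs' : MeasurableSet s := pastSA_le hg n s hs
    have e : S (n+1) = fun ω => S n ω + f n (g n ω) * c n ω := by
      funext ω; simp only [hS, Finset.sum_range_succ]
    have hi2 : Integrable (fun ω => f n (g n ω) * c n ω) ν := by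
      refine hbdi _ (D n * b n) ((hfm n).mul (hcm' n)) (fun ω => ?_)
      rw [abs_mul]
      exact mul_le_mul (hD n ω) (hb n ω) (abs_nonneg _) ((abs_nonneg _).trans (hD n ω))
    rw [e, integral_add (hSi n).integrableOn hi2.integrableOn]
    have : ∫ ω in s, f n (g n ω) * c n ω ∂ν = 0 := by
      rw [← integral_indicator hs']
      have h0 := key n (s.indicator (c n)) ((hc n).indicator hs)
      rw [← h0]
      congr 1
      funext ω
      by_cases hω : ω ∈ s <;> simp [hω, mul_comm]
    rw [this, add_zero]
  have hsq : ∀ n, ∫ ω, (S n ω) ^ 2 ∂ν ≤ ∑ k ∈ Finset.range n, b k ^ 2 * V k := by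
    intro n
    induction n with
    | zero => simp [hS]
    | succ n ih =>
      have e : (fun ω => (S (n+1) ω) ^ 2) = fun ω => ((S n ω)^2 + 2 * ((S n ω * c n ω) * f n (g n ω)))
          + (f n (g n ω) * c n ω)^2 := by
        funext ω; simp only [hS, Finset.sum_range_succ]; ring
      have i1 : Integrable (fun ω => (S n ω)^2) ν := by
        refine hbdi _ ((∑ k ∈ Finset.range n, D k * b k)^2) ((hSm' n).pow_const 2) (fun ω => ?_)
        rw [abs_pow]
        exact pow_le_pow_left₀ (abs_nonneg _) (hSb n ω) 2
      have i2 : Integrable (fun ω => 2 * ((S n ω * c n ω) * f n (g n ω))) ν := by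
        refine Integrable.const_mul ?_ 2
        refine hbdi _ ((∑ k ∈ Finset.range n, D k * b k) * b n * D n)
          (((hSm' n).mul (hcm' n)).mul (hfm n)) (fun ω => ?_)
        rw [abs_mul, abs_mul]
        have h1 := hSb n ω
        have h2 := hb n ω
        have h3 := hD n ω
        have := (abs_nonneg _).trans h1
        have := (abs_nonneg _).trans h2
        gcongr
      have i3 : Integrable (fun ω => (f n (g n ω) * c n ω)^2) ν := by
        refine hbdi _ ((D n * b n)^2) (((hfm n).mul (hcm' n)).pow_const 2) (fun ω => ?_)
        rw [abs_pow, abs_mul]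
        have h2 := hb n ω
        have h3 := hD n ω
        have := (abs_nonneg _).trans h3
        gcongr
      have i4 : Integrable (fun ω => (f n (g n ω))^2) ν := by
        refine hbdi _ ((D n)^2) ((hfm n).pow_const 2) (fun ω => ?_)
        rw [abs_pow]
        have h3 := hD n ω
        gcongr
      have i12 : Integrable (fun ω => (S n ω)^2 + 2 * ((S n ω * c n ω) * f n (g n ω))) ν := i1.add i2
      rw [e, integral_add i12 i3, integral_add i1 i2, integral_const_mul,
        key n (fun ω => S n ω * c n ω) ((hSm n).mul (hc n)), Finset.sum_range_succ]
      have : ∫ ω, (f n (g n ω) * c n ω)^2 ∂ν ≤ b n ^ 2 * V n := by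
        calc ∫ ω, (f n (g n ω) * c n ω)^2 ∂ν ≤ ∫ ω, b n ^ 2 * (f n (g n ω))^2 ∂ν := by
              refine integral_mono i3 (i4.const_mul _) (fun ω => ?_)
              show (f n (g n ω) * c n ω)^2 ≤ b n ^ 2 * (f n (g n ω))^2
              rw [mul_pow, mul_comm]
              have h2 := hb n ω
              rw [← sq_abs (c n ω)]
              gcongr
          _ = b n ^ 2 * ∫ ω, (f n (g n ω))^2 ∂ν := integral_const_mul _ _
          _ ≤ _ := by have := hV n; gcongr
      linarith
  have hVnn : ∀ n, 0 ≤ V n := fun n => (integral_nonneg (fun ω => sq_nonneg _)).trans (hV n)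
  have hL1 : ∀ n, eLpNorm (S n) 1 ν ≤ ((1 + ∑' k, b k ^ 2 * V k).toNNReal : NNReal) := by
    intro n
    rw [eLpNorm_one_eq_lintegral_enorm, ← ofReal_integral_norm_eq_lintegral_enorm (hSi n)]
    refine ENNReal.ofReal_le_ofReal ?_
    have i1 : Integrable (fun ω => (S n ω)^2) ν := by
      refine hbdi _ ((∑ k ∈ Finset.range n, D k * b k)^2) ((hSm' n).pow_const 2) (fun ω => ?_)
      rw [abs_pow]
      exact pow_le_pow_left₀ (abs_nonneg _) (hSb n ω) 2
    calc ∫ ω, ‖S n ω‖ ∂ν ≤ ∫ ω, (1 + (S n ω)^2) ∂ν := by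
          refine integral_mono (hSi n).norm ((integrable_const 1).add i1) (fun ω => ?_)
          show ‖S n ω‖ ≤ 1 + (S n ω)^2
          rw [Real.norm_eq_abs, ← sq_abs]
          nlinarith [sq_nonneg (|S n ω| - 1), abs_nonneg (S n ω)]
      _ = 1 + ∫ ω, (S n ω)^2 ∂ν := by
          rw [integral_add (integrable_const 1) i1]; simp
      _ ≤ 1 + ∑' k, b k ^ 2 * V k := by
          have := (hsq n).trans (hs.sum_le_tsum (Finset.range n)
            (fun k _ => mul_nonneg (sq_nonneg _) (hVnn k)))
          linarith
  exact hM.submartingale.exists_ae_tendsto_of_bdd hL1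


lemma kron (x b : ℕ → ℝ) (hpos : ∀ n, 0 < b n) (hmono : Monotone b) (htop : Tendsto b atTop atTop)
    (h : ∃ l, Tendsto (fun n => ∑ k ∈ Finset.range n, x k / b k) atTop (nhds l)) :
    (fun n => ∑ k ∈ Finset.range n, x k) =o[atTop] b := by
  obtain ⟨l, hl⟩ := h
  set W : ℕ → ℝ := fun n => ∑ k ∈ Finset.range n, x k / b k - l with hW
  have hW0 : Tendsto W atTop (nhds 0) := by
    have := hl.sub_const l
    simpa using this
  have hx : ∀ n, ∑ k ∈ Finset.range n, x k
      = b n * W n - b 0 * W 0 - ∑ k ∈ Finset.range n, (b (k+1) - b k) * W (k+1) := by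
    intro n
    induction n with
    | zero => simp
    | succ n ih =>
      rw [Finset.sum_range_succ, ih, Finset.sum_range_succ]
      have : x n = b n * (W (n+1) - W n) := by
        simp only [hW, Finset.sum_range_succ]
        have := (hpos n).ne'
        field_simp
        ring
      rw [this]; ring
  have hb1 : (fun n => b n * W n) =o[atTop] b := by
    have : (fun n => b n * W n) =o[atTop] (fun n => b n * (1:ℝ)) :=
      (Asymptotics.isBigO_refl b atTop).mul_isLittleO ((Asymptotics.isLittleO_one_iff ℝ).2 hW0)
    simpa using this
  have hcon : ∀ c : ℝ, (fun _ : ℕ => c) =o[atTop] b := by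
    intro c
    refine Asymptotics.isLittleO_const_left.2 (Or.inr ?_)
    exact tendsto_norm_atTop_atTop.comp htop
  have hsum : ∀ n, ∑ k ∈ Finset.range n, (b (k+1) - b k) = b n - b 0 := fun n =>
    Finset.sum_range_sub b n
  have h3 : (fun n => ∑ k ∈ Finset.range n, (b (k+1) - b k) * W (k+1)) =o[atTop]
      (fun n => ∑ k ∈ Finset.range n, (b (k+1) - b k)) := by
    refine Asymptotics.IsLittleO.sum_range ?_ (fun n => sub_nonneg.2 (hmono (Nat.le_succ n))) ?_
    · have hW1 : Tendsto (fun n => W (n+1)) atTop (nhds 0) := hW0.comp (tendsto_add_atTop_nat 1)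
      have : (fun n => (b (n+1) - b n) * W (n+1)) =o[atTop] (fun n => (b (n+1) - b n) * (1:ℝ)) :=
        (Asymptotics.isBigO_refl _ atTop).mul_isLittleO ((Asymptotics.isLittleO_one_iff ℝ).2 hW1)
      simpa using this
    · simp only [hsum]
      exact tendsto_atTop_add_const_right _ _ htop
  have h4 : (fun n => ∑ k ∈ Finset.range n, (b (k+1) - b k)) =O[atTop] b := by
    simp only [hsum]
    exact (Asymptotics.isBigO_refl b atTop).sub (hcon (b 0)).isBigO
  have := (hb1.sub (hcon (b 0 * W 0))).sub (h3.trans_isBigO h4)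
  refine this.congr (fun n => (hx n).symm) (fun n => rfl)

lemma tail_rate (T b : ℕ → ℝ) (hpos : ∀ n, 0 < b n) (hmono : Monotone b)
    (htop : Tendsto b atTop atTop)
    (h : ∃ l, Tendsto (fun n => ∑ k ∈ Finset.range n, b k * (T (k+1) - T k)) atTop (nhds l)) :
    ∃ l K, Tendsto T atTop (nhds l) ∧ 0 ≤ K ∧ ∀ n, |T n - l| ≤ K / b n := by
  obtain ⟨l, hl⟩ := h
  set U : ℕ → ℝ := fun n => ∑ k ∈ Finset.range n, b k * (T (k+1) - T k) with hU
  obtain ⟨K0, hK0⟩ := hl.bddAbove_range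
  obtain ⟨K1, hK1⟩ := hl.bddBelow_range
  have hUb : ∀ m n, |U m - U n| ≤ K0 - K1 := by
    intro m n
    have h1 := hK0 ⟨m, rfl⟩
    have h2 := hK0 ⟨n, rfl⟩
    have h3 := hK1 ⟨m, rfl⟩
    have h4 := hK1 ⟨n, rfl⟩
    rw [abs_le]; constructor <;> linarith
  set K := K0 - K1
  have hKnn : 0 ≤ K := (abs_nonneg _).trans (hUb 0 0)
  have hind : ∀ n j, |T (n+j) - T n - (U (n+j) - U n) / b (n+j)| ≤ K * (1 / b n - 1 / b (n+j)) := by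
    intro n j
    induction j with
    | zero => simp
    | succ j ih =>
      have e1 : U (n + (j+1)) = U (n+j) + b (n+j) * (T (n+(j+1)) - T (n+j)) := by
        simp only [hU, ← add_assoc, Finset.sum_range_succ]
      have e2 : T (n+(j+1)) - T n - (U (n+(j+1)) - U n) / b (n+(j+1))
          = (T (n+j) - T n - (U (n+j) - U n) / b (n+j))
            + (U (n+(j+1)) - U n) * (1 / b (n+j) - 1 / b (n+(j+1))) := by
        rw [e1]
        have h1 := (hpos (n+j)).ne'
        have h2 := (hpos (n+(j+1))).ne'
        field_simp
        ring
      have hdec : 0 ≤ 1 / b (n+j) - 1 / b (n+(j+1)) :=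
        sub_nonneg.2 (one_div_le_one_div_of_le (hpos _) (hmono (by omega)))
      rw [e2]
      refine (abs_add_le _ _).trans ?_
      rw [abs_mul, abs_of_nonneg hdec]
      have := mul_le_mul_of_nonneg_right (hUb (n+(j+1)) n) hdec
      linarith
  have hT : ∀ n j, |T (n+j) - T n| ≤ K / b n := by
    intro n j
    have h1 := hind n j
    have h2 : |(U (n+j) - U n) / b (n+j)| ≤ K * (1 / b (n+j)) := by
      rw [abs_div, abs_of_pos (hpos _), div_eq_mul_one_div]
      exact mul_le_mul_of_nonneg_right (hUb _ _) (one_div_pos.2 (hpos _)).le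
    have h3 := abs_add_le (T (n+j) - T n - (U (n+j) - U n) / b (n+j)) ((U (n+j) - U n) / b (n+j))
    rw [sub_add_cancel] at h3
    have : K / b n = K * (1 / b n) := by ring
    rw [this]; linarith
  have hz : Tendsto (fun n => K / b n) atTop (nhds 0) := htop.const_div_atTop K
  have hC : CauchySeq T := by
    refine cauchySeq_of_le_tendsto_0' (fun n => K / b n) ?_ hz
    intro n m hnm
    obtain ⟨j, rfl⟩ := Nat.exists_eq_add_of_le hnm
    rw [dist_comm, Real.dist_eq]
    exact hT n j
  obtain ⟨t, ht⟩ := cauchySeq_tendsto_of_complete hC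
  refine ⟨t, K, ht, hKnn, fun n => ?_⟩
  have h1 : Tendsto (fun j => |T (n+j) - T n|) atTop (nhds |t - T n|) := by
    have : Tendsto (fun j => T (n+j)) atTop (nhds t) := by
      have := ht.comp (tendsto_add_atTop_nat n)
      refine this.congr (fun j => ?_)
      simp [add_comm]
    exact (this.sub_const _).abs
  rw [abs_sub_comm]
  exact le_of_tendsto' h1 (hT n)

lemma osc_bdd (ζ : ℕ → ℂ) (α : ℂ) (hα : α ≠ 1) (h1 : ∀ k, ‖ζ k‖ ≤ 1) (η : ℕ → ℝ)
    (hη : ∀ k, ‖ζ (k+1) - α * ζ k‖ ≤ η k) (hs : Summable (fun k => η k / ((k:ℝ)+1))) :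
    ∃ K, ∀ n, ‖∑ k ∈ Finset.range n, ζ k / ((k:ℂ)+1)‖ ≤ K := by
  have hne : ∀ k : ℕ, ((k:ℂ)+1) ≠ 0 := fun k => Nat.cast_add_one_ne_zero k
  have hA : ∀ n, ‖∑ k ∈ Finset.range n, (ζ k - ζ (k+1)) / ((k:ℂ)+1) + ζ n / ((n:ℂ)+1)‖
      ≤ 2 - 1 / ((n:ℝ)+1) := by
    intro n
    induction n with
    | zero => simp; linarith [h1 0]
    | succ n ih =>
      have e : ∑ k ∈ Finset.range (n+1), (ζ k - ζ (k+1)) / ((k:ℂ)+1) + ζ (n+1) / (((n+1:ℕ):ℂ)+1)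
          = (∑ k ∈ Finset.range n, (ζ k - ζ (k+1)) / ((k:ℂ)+1) + ζ n / ((n:ℂ)+1))
            - ζ (n+1) * ((1 / ((n:ℝ)+1) - 1 / (((n+1:ℕ):ℝ)+1) : ℝ) : ℂ) := by
        rw [Finset.sum_range_succ]
        have a1 := hne n
        have a2 := hne (n+1)
        push_cast at a2 ⊢
        field_simp
        ring
      rw [e]
      refine (norm_sub_le _ _).trans ?_
      have hdec : (0:ℝ) ≤ 1 / ((n:ℝ)+1) - 1 / (((n+1:ℕ):ℝ)+1) := by
        refine sub_nonneg.2 (one_div_le_one_div_of_le (by positivity) ?_)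
        push_cast; linarith
      rw [norm_mul, Complex.norm_real, Real.norm_eq_abs, abs_of_nonneg hdec]
      have := mul_le_mul_of_nonneg_right (h1 (n+1)) hdec
      linarith
  have hB : ∀ n, ‖∑ k ∈ Finset.range n, (ζ k - ζ (k+1)) / ((k:ℂ)+1)‖ ≤ 3 := by
    intro n
    have a1 := hA n
    have a2 : ‖ζ n / ((n:ℂ)+1)‖ ≤ 1 / ((n:ℝ)+1) := by
      rw [norm_div]
      have : ‖(n:ℂ)+1‖ = (n:ℝ)+1 := by
        have := Complex.norm_natCast (n+1)
        push_cast at this; exact this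
      rw [this]
      exact div_le_div_of_nonneg_right (h1 n) (by positivity)
    have a3 := norm_sub_le (∑ k ∈ Finset.range n, (ζ k - ζ (k+1)) / ((k:ℂ)+1) + ζ n / ((n:ℂ)+1))
      (ζ n / ((n:ℂ)+1))
    rw [add_sub_cancel_right] at a3
    linarith
  have hηnn : ∀ k, 0 ≤ η k := fun k => (norm_nonneg _).trans (hη k)
  have hCc : ∀ n, ‖∑ k ∈ Finset.range n, (ζ (k+1) - α * ζ k) / ((k:ℂ)+1)‖
      ≤ ∑' k, η k / ((k:ℝ)+1) := by
    intro n
    refine (norm_sum_le _ _).trans ?_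
    refine le_trans (Finset.sum_le_sum (fun k _ => ?_))
      (hs.sum_le_tsum (Finset.range n) (fun k _ => div_nonneg (hηnn k) (by positivity)))
    rw [norm_div]
    have : ‖(k:ℂ)+1‖ = (k:ℝ)+1 := by
      have := Complex.norm_natCast (k+1)
      push_cast at this; exact this
    rw [this]
    exact div_le_div_of_nonneg_right (hη k) (by positivity)
  have hα' : 0 < ‖1 - α‖ := norm_pos_iff.2 (sub_ne_zero.2 hα.symm)
  refine ⟨(3 + ∑' k, η k / ((k:ℝ)+1)) / ‖1 - α‖, fun n => ?_⟩
  rw [le_div_iff₀ hα', mul_comm, ← norm_mul]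
  have e : (1 - α) * ∑ k ∈ Finset.range n, ζ k / ((k:ℂ)+1)
      = ∑ k ∈ Finset.range n, (ζ k - ζ (k+1)) / ((k:ℂ)+1)
        + ∑ k ∈ Finset.range n, (ζ (k+1) - α * ζ k) / ((k:ℂ)+1) := by
    rw [← Finset.sum_add_distrib, Finset.mul_sum]
    refine Finset.sum_congr rfl (fun k _ => ?_)
    ring
  rw [e]
  exact (norm_add_le _ _).trans (add_le_add (hB n) (hCc n))

lemma summable_log_of (r a : ℕ → ℝ) (h : ∀ n, |r n - 1| ≤ a n) (ha : Summable a) :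
    Summable (fun n => Real.log (r n)) := by
  have h1 : Summable (fun n => r n - 1) := Summable.of_norm_bounded ha h
  have := Real.summable_log_one_add_of_summable h1
  simpa using this

lemma taylor_h (x y γ : ℝ) (hxy : x^2 + y^2 = 1) (hγ : |γ| ≤ 1/8) :
    |1/2 * Real.log (1 - 2*γ*x*y + γ^2*x^2) - (-(γ*(x*y)) + γ^2 * (x^2/2 - x^2*y^2))|
      ≤ 10 * |γ|^3 := by
  set t := 2*γ*x*y - γ^2*x^2 with ht
  have hx1 : |x| ≤ 1 := by rw [abs_le]; constructor <;> nlinarith [sq_nonneg y]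
  have hy1 : |y| ≤ 1 := by rw [abs_le]; constructor <;> nlinarith [sq_nonneg x]
  have hg0 := abs_nonneg γ
  have hxy2 : |x * y| ≤ 1 / 2 := by
    rw [abs_le]; constructor <;> nlinarith [sq_nonneg (x+y), sq_nonneg (x-y)]
  have hx2 : x^2 ≤ 1 := by nlinarith [sq_nonneg y]
  have ht1 : |t| ≤ 9/8 * |γ| := by
    have e1 : |2*γ*x*y| ≤ |γ| := by
      have : 2*γ*x*y = γ * (2 * (x*y)) := by ring
      rw [this, abs_mul, abs_mul, abs_two]
      nlinarith
    have e2 : |γ^2*x^2| ≤ 1/8 * |γ| := by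
      rw [abs_of_nonneg (by positivity), ← sq_abs γ]
      have : |γ|^2 ≤ 1/8*|γ| := by nlinarith
      nlinarith [sq_nonneg x, sq_nonneg (|γ|)]
    have := abs_sub (2*γ*x*y) (γ^2*x^2)
    rw [ht]; linarith
  have ht2 : |t| < 1 := by linarith
  have hlog := Real.abs_log_sub_add_sum_range_le ht2 2
  have e0 : (1:ℝ) - 2*γ*x*y + γ^2*x^2 = 1 - t := by rw [ht]; ring
  rw [e0]
  have hsum : ∑ i ∈ Finset.range 2, t^(i+1)/((i:ℝ)+1) = t + t^2/2 := by
    simp [Finset.sum_range_succ]; norm_num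
  rw [hsum] at hlog
  have hl2 : |t|^(2+1) / (1 - |t|) ≤ 4 * |γ|^3 := by
    rw [div_le_iff₀ (by linarith)]
    have : |t|^3 ≤ (9/8*|γ|)^3 := pow_le_pow_left₀ (abs_nonneg _) ht1 3
    have h3 : 0 ≤ |γ|^3 := by positivity
    norm_num at this ⊢
    nlinarith
  have e1 : 1/2 * Real.log (1 - t) - (-(γ*(x*y)) + γ^2 * (x^2/2 - x^2*y^2))
      = 1/2 * (t + t^2/2 + Real.log (1-t)) + (γ^3 * (x^2 * (x*y)) - γ^4 * x^4/4) := by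
    rw [ht]; ring
  rw [e1]
  refine (abs_add_le _ _).trans ?_
  have h5 : |γ^3 * (x^2 * (x*y)) - γ^4 * x^4/4| ≤ 2 * |γ|^3 := by
    refine (abs_sub _ _).trans ?_
    have h3 : 0 ≤ |γ|^3 := by positivity
    have a1 : |γ^3 * (x^2 * (x*y))| ≤ |γ|^3 := by
      rw [abs_mul, abs_pow, abs_mul, abs_of_nonneg (sq_nonneg x)]
      have : x^2 * |x*y| ≤ 1 := by nlinarith [sq_nonneg x, abs_nonneg (x*y)]
      nlinarith
    have a2 : |γ^4 * x^4/4| ≤ |γ|^3 := by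
      have : γ^4 * x^4/4 = γ^3 * (γ * ((x^2)^2/4)) := by ring
      rw [this, abs_mul, abs_pow, abs_mul, abs_of_nonneg (by positivity : 0 ≤ (x^2)^2/4)]
      have : (x^2)^2/4 ≤ 1 := by nlinarith [sq_nonneg x]
      have : |γ| * ((x^2)^2/4) ≤ 1 := by nlinarith [sq_nonneg (x^2)]
      nlinarith
    linarith
  rw [abs_mul, abs_of_nonneg (by norm_num : (0:ℝ) ≤ 1/2)]
  have h3 : 0 ≤ |γ|^3 := by positivity
  linarith


/-- shear in complex coordinates -/
noncomputable def Bm (γ : ℝ) (z : ℂ) : ℂ := z - Complex.I * ((γ * z.re : ℝ) : ℂ)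

/-- harmonic-type sums -/
noncomputable def Hs (n : ℕ) : ℝ := ∑ k ∈ Finset.range n, 1 / ((k:ℝ)+1)

lemma Hs_eq (n : ℕ) : Hs n = (harmonic n : ℝ) := by
  simp [Hs, harmonic]

lemma log_top : Tendsto (fun n : ℕ => Real.log n) atTop atTop :=
  Real.tendsto_log_atTop.comp tendsto_natCast_atTop_atTop

lemma const_o (c : ℝ) : (fun _ : ℕ => c) =o[atTop] (fun n : ℕ => Real.log n) :=
  Asymptotics.isLittleO_const_left.2 (Or.inr (tendsto_norm_atTop_atTop.comp log_top))

lemma bdd_o (f : ℕ → ℝ) (K : ℝ) (h : ∀ n, |f n| ≤ K) : f =o[atTop] (fun n : ℕ => Real.log n) := by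
  refine Asymptotics.IsBigO.trans_isLittleO (g := fun _ : ℕ => K) ?_ (const_o K)
  refine Asymptotics.isBigO_of_le _ (fun n => ?_)
  exact (h n).trans (le_abs_self _)

lemma conv_o (f : ℕ → ℝ) (h : ∃ l, Tendsto f atTop (nhds l)) :
    f =o[atTop] (fun n : ℕ => Real.log n) := by
  obtain ⟨l, hl⟩ := h
  exact (hl.isBigO_one ℝ).trans_isLittleO (const_o 1)

lemma Hs_log_o : (fun n => Hs n - Real.log n) =o[atTop] (fun n : ℕ => Real.log n) := by
  refine conv_o _ ⟨_, (Real.tendsto_harmonic_sub_log).congr (fun n => ?_)⟩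
  rw [Hs_eq]

lemma Hs_mono : Monotone Hs := by
  refine monotone_nat_of_le_succ (fun n => ?_)
  rw [Hs, Hs, Finset.sum_range_succ]
  have : (0:ℝ) ≤ 1 / ((n:ℝ)+1) := by positivity
  linarith

lemma Hs_succ (n : ℕ) : Hs (n+1) = Hs n + 1 / ((n:ℝ)+1) := by
  rw [Hs, Hs, Finset.sum_range_succ]

lemma Hs_pos (n : ℕ) : 1 ≤ Hs (n+1) := by
  have h := Hs_mono (show 1 ≤ n+1 by omega)
  have : Hs 1 = 1 := by simp [Hs]
  linarith

lemma Hs_O : (fun n => Hs (n+1)) =O[atTop] (fun n : ℕ => Real.log n) := by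
  have h1 : (fun n => Hs n) =O[atTop] (fun n : ℕ => Real.log n) := by
    have := Hs_log_o.isBigO.add (Asymptotics.isBigO_refl (fun n : ℕ => Real.log n) atTop)
    simpa using this
  have h2 : (fun n : ℕ => 1 / ((n:ℝ)+1)) =O[atTop] (fun n : ℕ => Real.log n) := by
    refine (bdd_o _ 1 (fun n => ?_)).isBigO
    rw [abs_of_nonneg (by positivity), div_le_one (by positivity)]
    have : (0:ℝ) ≤ n := by positivity
    linarith
  refine (h1.add h2).congr_left (fun n => (Hs_succ n).symm)

lemma Hs_top : Tendsto (fun n => Hs (n+1)) atTop atTop := by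
  have h : Tendsto Hs atTop atTop := by
    have := (Real.tendsto_harmonic_sub_log).add_atTop log_top
    refine this.congr (fun n => ?_)
    rw [Hs_eq]; ring
  exact h.comp (tendsto_add_atTop_nat 1)

lemma Hs_summable : Summable (fun n => (1 / Hs (n+1))^2 * (1 / ((n:ℝ)+1))) := by
  refine (summable_nat_add_iff 1).1 ?_
  refine summable_of_sum_range_le (c := 1) (fun n => by positivity) (fun n => ?_)
  have : ∀ n, ∑ k ∈ Finset.range n, (1 / Hs (k+1+1))^2 * (1 / (((k+1:ℕ):ℝ)+1))
      ≤ 1 - 1 / Hs (n+1) := by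
    intro n
    induction n with
    | zero => simp [Hs]
    | succ n ih =>
      rw [Finset.sum_range_succ]
      have h1 := Hs_pos n
      have h2 := Hs_pos (n+1)
      have h3 := Hs_succ (n+1)
      have h4 : Hs (n+1) ≤ Hs (n+1+1) := Hs_mono (by omega)
      have : (1 / Hs (n+1+1))^2 * (1 / (((n+1:ℕ):ℝ)+1)) ≤ 1 / Hs (n+1) - 1 / Hs (n+1+1) := by
        have e : 1 / (((n+1:ℕ):ℝ)+1) = Hs (n+1+1) - Hs (n+1) := by linarith
        rw [e]
        have e2 : 1 / Hs (n+1) - 1 / Hs (n+1+1) = (1 / (Hs (n+1) * Hs (n+1+1))) * (Hs (n+1+1) - Hs (n+1)) := by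
          field_simp
        rw [e2]
        refine mul_le_mul_of_nonneg_right ?_ (by linarith)
        rw [div_pow, one_pow]
        refine one_div_le_one_div_of_le (by positivity) ?_
        nlinarith
      linarith
  have h1 := this n
  have h2 := Hs_pos n
  have : 0 ≤ 1 / Hs (n+1) := by positivity
  linarith

lemma unit_diff (A B : ℂ) (hB : B ≠ 0) (hA : A ≠ 0) :
    ‖A / ‖A‖ - B / ‖B‖‖ ≤ 2 * (‖A - B‖ / ‖B‖) := by
  have hb : 0 < ‖B‖ := norm_pos_iff.2 hB
  have hac : 0 < ‖A‖ := norm_pos_iff.2 hA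
  have hb' : (‖B‖ : ℂ) ≠ 0 := by exact_mod_cast hb.ne'
  have ha' : (‖A‖ : ℂ) ≠ 0 := by exact_mod_cast hac.ne'
  have e : A / ‖A‖ - B / ‖B‖ = (A / ‖A‖) * (((‖B‖ - ‖A‖ : ℝ) : ℂ) / ‖B‖) + (A - B) / ‖B‖ := by
    push_cast
    field_simp
    ring
  rw [e]
  refine (norm_add_le _ _).trans ?_
  rw [norm_mul, norm_div, norm_div, norm_div]
  simp only [Complex.norm_real, Real.norm_eq_abs, abs_norm]
  rw [div_self hac.ne', one_mul]
  have := abs_norm_sub_norm_le B A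
  rw [norm_sub_rev] at this
  have h2 := div_le_div_of_nonneg_right this hb.le
  linarith

lemma Bm_normSq (γ : ℝ) (z : ℂ) :
    ‖Bm γ z‖^2 = z.re^2 + (z.im - γ*z.re)^2 := by
  rw [Complex.sq_norm, Complex.normSq_apply]
  simp [Bm]
  ring

lemma Bm_log (γ : ℝ) (hγ : |γ| ≤ 1/8) (z : ℂ) (hz : z ≠ 0) (u : ℂ) (hu : u = z / ‖z‖) :
    Real.log ‖Bm γ z‖ = Real.log ‖z‖
      + 1/2 * Real.log (1 - 2*γ*u.re*u.im + γ^2*u.re^2) ∧ u.re^2+u.im^2 = 1 := by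
  have hn : 0 < ‖z‖ := norm_pos_iff.2 hz
  have hre : z.re = ‖z‖ * u.re := by
    rw [hu, Complex.div_ofReal_re]; field_simp
  have him : z.im = ‖z‖ * u.im := by
    rw [hu, Complex.div_ofReal_im]; field_simp
  have hun : u.re^2+u.im^2 = 1 := by
    have h1 : ‖z‖^2 = z.re^2+z.im^2 := by
      rw [Complex.sq_norm, Complex.normSq_apply]; ring
    rw [hre, him] at h1
    have : ‖z‖^2 * (u.re^2+u.im^2 - 1) = 0 := by linarith
    rcases mul_eq_zero.1 this with h | h
    · exact absurd h (by positivity)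
    · linarith
  refine ⟨?_, hun⟩
  have hsq : ‖Bm γ z‖^2 = ‖z‖^2 * (1 - 2*γ*u.re*u.im + γ^2*u.re^2) := by
    rw [Bm_normSq, hre, him]
    have : u.im^2 = 1 - u.re^2 := by linarith
    ring_nf
    rw [this]; ring
  have hpos : 0 < 1 - 2*γ*u.re*u.im + γ^2*u.re^2 := by
    have h := abs_le.1 hγ
    nlinarith [sq_nonneg (u.im - γ * u.re), sq_nonneg (u.re + u.im), sq_nonneg (u.re - u.im),
      sq_nonneg (γ*u.re)]
  have h2 := congrArg Real.log hsq
  rw [Real.log_pow, Real.log_mul (by positivity) hpos.ne', Real.log_pow] at h2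
  push_cast at h2
  linarith

lemma sq_diff (a b : ℂ) (ha : ‖a‖ ≤ 1) (hb : ‖b‖ ≤ 1) : ‖a^2 - b^2‖ ≤ 2 * ‖a - b‖ := by
  have : a^2 - b^2 = (a+b)*(a-b) := by ring
  rw [this, norm_mul]
  refine mul_le_mul_of_nonneg_right ?_ (norm_nonneg _)
  linarith [norm_add_le a b]

lemma growth (p z : ℕ → ℂ) (γ a : ℕ → ℝ) (α : ℂ) (σ C₁ ε : ℝ) (hε : 0 < ε)
    (hp : ∀ n, p (n+1) = Bm (γ n) (z n)) (hz : ∀ n, ‖z n - α * p n‖ ≤ a n * ‖p n‖)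
    (hp0 : ∀ n, p n ≠ 0) (hz0 : ∀ n, z n ≠ 0) (ha : Summable a)
    (hγ : ∀ n, |γ n| ≤ C₁ * ((n : ℝ) + 1) ^ (-(1 / 3 : ℝ) - ε))
    (hα : ‖α‖ = 1) (hα2 : α^2 ≠ 1) (hα4 : α^4 ≠ 1)
    (u : ℕ → ℂ) (hu : ∀ n, u n = z n / ‖z n‖)
    (F1 : ∃ l, Tendsto (fun n => ∑ k ∈ Finset.range n,
      γ k * (((u k).re * (u k).im) * (1 / Hs (k+1)))) atTop (nhds l))
    (F2 : ∃ l, Tendsto (fun n => ∑ k ∈ Finset.range n,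
      ((γ k)^2 - σ / ((k:ℝ)+1)) * ((u k).re^2/2 - (u k).re^2*(u k).im^2)) atTop (nhds l)) :
    (fun n => Real.log ‖p n‖ - σ/8 * Real.log n) =o[atTop] (fun n : ℕ => Real.log n) := by
  have hC₁ : 0 ≤ C₁ := by
    have := (abs_nonneg _).trans (hγ 0)
    simpa using this
  have hann : ∀ n, 0 ≤ a n := by
    intro n
    have h1 := (norm_nonneg _).trans (hz n)
    exact nonneg_of_mul_nonneg_left h1 (norm_pos_iff.2 (hp0 n))
  have hγC : ∀ n, |γ n| ≤ C₁ := by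
    intro n
    refine (hγ n).trans (mul_le_of_le_one_right hC₁ ?_)
    refine Real.rpow_le_one_of_one_le_of_nonpos ?_ (by linarith)
    have : (0:ℝ) ≤ n := by positivity
    linarith
  have hrp : ∀ s : ℝ, s < -1 → Summable (fun n : ℕ => ((n:ℝ)+1)^s) := by
    intro s hs
    have := (summable_nat_add_iff 1).2 (Real.summable_nat_rpow.2 hs)
    simpa using this
  have hγ3 : Summable (fun n => |γ n|^3) := by
    refine Summable.of_nonneg_of_le (fun n => by positivity) (fun n => ?_)
      ((hrp (-1 - 3*ε) (by linarith)).mul_left (C₁^3))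
    calc |γ n|^3 ≤ (C₁ * ((n : ℝ) + 1) ^ (-(1 / 3 : ℝ) - ε))^3 :=
          pow_le_pow_left₀ (abs_nonneg _) (hγ n) 3
      _ = C₁^3 * ((n:ℝ)+1)^(-1-3*ε) := by
          rw [mul_pow, ← Real.rpow_natCast (((n : ℝ) + 1) ^ (-(1 / 3 : ℝ) - ε)),
            ← Real.rpow_mul (by positivity)]
          congr 2
          push_cast; ring
  have hγ0 : Tendsto γ atTop (nhds 0) := by
    have h3 := hγ3.tendsto_atTop_zero
    have h4 : Tendsto (fun n => (|γ n|^3) ^ ((1:ℝ)/3)) atTop (nhds (0 ^ ((1:ℝ)/3))) :=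
      h3.rpow_const (Or.inr (by norm_num))
    rw [Real.zero_rpow (by norm_num)] at h4
    refine (tendsto_zero_iff_abs_tendsto_zero _).2 (h4.congr (fun n => ?_))
    show (|γ n|^3) ^ ((1:ℝ)/3) = |γ n|
    rw [← Real.rpow_natCast, ← Real.rpow_mul (abs_nonneg _)]
    norm_num
  have hγsmall : ∀ᶠ n in atTop, |γ n| ≤ 1/8 := by
    have := (tendsto_zero_iff_abs_tendsto_zero _).1 hγ0
    exact this.eventually_le_const (by norm_num)
  -- the remainder
  set f : ℕ → ℝ := fun k => (u k).re^2/2 - (u k).re^2*(u k).im^2 with hf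
  set main : ℕ → ℝ := fun k => -(γ k * ((u k).re*(u k).im)) + (γ k)^2 * f k with hmain
  set rem : ℕ → ℝ := fun k => Real.log ‖p (k+1)‖ - Real.log ‖z k‖ - main k with hrem
  have hrems : Summable rem := by
    refine Summable.of_norm_bounded_eventually_nat (hγ3.mul_left 10) ?_
    filter_upwards [hγsmall] with k hk
    have h1 := Bm_log (γ k) hk (z k) (hz0 k) (u k) (hu k)
    rw [Real.norm_eq_abs]
    have e : rem k = 1/2 * Real.log (1 - 2*γ k*(u k).re*(u k).im + (γ k)^2*(u k).re^2)
       - (-(γ k*((u k).re*(u k).im)) + (γ k)^2 * ((u k).re^2/2 - (u k).re^2*(u k).im^2)) := by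
      simp only [hrem, hmain, hf, hp, h1.1]; ring
    rw [e]
    exact taylor_h _ _ _ h1.2 hk
  have hρs : Summable (fun k => Real.log (‖z k‖ / ‖p k‖)) := by
    refine summable_log_of _ a (fun k => ?_) ha
    have hpk : 0 < ‖p k‖ := norm_pos_iff.2 (hp0 k)
    have e : ‖z k‖ / ‖p k‖ - 1 = (‖z k‖ - ‖α * p k‖) / ‖p k‖ := by
      rw [norm_mul, hα, one_mul]; field_simp
    rw [e, abs_div, abs_of_pos hpk, div_le_iff₀ hpk]
    exact (abs_norm_sub_norm_le _ _).trans (hz k)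
  have hunorm : ∀ k, ‖u k‖ = 1 := by
    intro k
    rw [hu, norm_div, Complex.norm_real, norm_norm, div_self (norm_ne_zero_iff.2 (hz0 k))]
  have husq : ∀ k, (u k).re^2+(u k).im^2 = 1 := by
    intro k
    have h1 : ‖u k‖^2 = (u k).re^2+(u k).im^2 := by
      rw [Complex.sq_norm, Complex.normSq_apply]; ring
    rw [hunorm] at h1; linarith
  -- oscillation
  set η : ℕ → ℝ := fun k => 2 * (a (k+1) * (1 + |γ k|) + |γ k|) with hη
  have hstep : ∀ k, ‖u (k+1) - α * u k‖ ≤ η k := by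
    intro k
    have hα0 : α ≠ 0 := by intro h; rw [h] at hα; simp at hα
    have hB : α * z k ≠ 0 := mul_ne_zero hα0 (hz0 k)
    have h1 := unit_diff (z (k+1)) (α * z k) hB (hz0 (k+1))
    have e1 : (α * z k) / ‖α * z k‖ = α * u k := by
      rw [norm_mul, hα, one_mul, hu]; ring
    rw [← hu, e1] at h1
    have hpz : ‖p (k+1) - z k‖ ≤ |γ k| * ‖z k‖ := by
      rw [hp, Bm, sub_sub_cancel_left, norm_neg, norm_mul, Complex.norm_I, one_mul,
        Complex.norm_real, Real.norm_eq_abs, abs_mul]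
      exact mul_le_mul_of_nonneg_left (Complex.abs_re_le_norm _) (abs_nonneg _)
    have hp1 : ‖p (k+1)‖ ≤ (1 + |γ k|) * ‖z k‖ := by
      have := norm_add_le (p (k+1) - z k) (z k)
      rw [sub_add_cancel] at this
      linarith
    have hd : ‖z (k+1) - α * z k‖ ≤ (a (k+1) * (1 + |γ k|) + |γ k|) * ‖z k‖ := by
      have e : z (k+1) - α * z k = (z (k+1) - α * p (k+1)) + α * (p (k+1) - z k) := by ring
      rw [e]
      refine (norm_add_le _ _).trans ?_
      rw [norm_mul, hα, one_mul]
      have := hz (k+1)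
      have := mul_le_mul_of_nonneg_left hp1 (hann (k+1))
      linarith
    have hzk : 0 < ‖z k‖ := norm_pos_iff.2 (hz0 k)
    have e2 : ‖α * z k‖ = ‖z k‖ := by rw [norm_mul, hα, one_mul]
    rw [e2] at h1
    have h3 : ‖z (k+1) - α * z k‖ / ‖z k‖ ≤ a (k+1) * (1 + |γ k|) + |γ k| := by
      rw [div_le_iff₀ hzk]; exact hd
    have : η k = 2 * (a (k+1) * (1 + |γ k|) + |γ k|) := rfl
    linarith
  have hηs : Summable (fun k => η k / ((k:ℝ)+1)) := by
    have h1 : Summable (fun k => 2 * (1 + C₁) * a (k+1)) :=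
      ((summable_nat_add_iff 1).2 ha).mul_left _
    have h2 := (hrp (-(4/3) - ε) (by linarith)).mul_left (2*C₁)
    refine Summable.of_nonneg_of_le (fun k => ?_) (fun k => ?_) (h1.add h2)
    · have := hann (k+1)
      positivity
    · have hk : (0:ℝ) < (k:ℝ)+1 := by positivity
      have hk1 : (1:ℝ) ≤ (k:ℝ)+1 := by
        have : (0:ℝ) ≤ k := by positivity
        linarith
      have e : ((k:ℝ)+1)^(-(4/3:ℝ)-ε) = ((k:ℝ)+1)^(-(1/3:ℝ)-ε) / ((k:ℝ)+1) := by
        rw [← Real.rpow_sub_one hk.ne']; congr 1; ring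
      rw [e]
      have h3 : a (k+1) * (1+|γ k|) / ((k:ℝ)+1) ≤ (1+C₁) * a (k+1) := by
        rw [div_le_iff₀ hk]
        have h5 := hann (k+1)
        have h6 : a (k+1) * (1 + |γ k|) ≤ (1+C₁) * a (k+1) := by nlinarith [hγC k]
        have h7 : 0 ≤ (1+C₁) * a (k+1) := by positivity
        nlinarith
      have h4 : |γ k| / ((k:ℝ)+1) ≤ C₁ * (((k:ℝ)+1)^(-(1/3:ℝ)-ε) / ((k:ℝ)+1)) := by
        rw [← mul_div_assoc]
        exact div_le_div_of_nonneg_right (hγ k) hk.le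
      have : η k / ((k:ℝ)+1) = 2 * (a (k+1) * (1+|γ k|) / ((k:ℝ)+1)) + 2 * (|γ k| / ((k:ℝ)+1)) := by
        simp only [hη]; ring
      rw [this]
      linarith
  have hαu : ∀ k, ‖α * u k‖ ≤ 1 := fun k => by rw [norm_mul, hα, hunorm]; norm_num
  have hstep2 : ∀ k, ‖(u (k+1))^2 - α^2 * (u k)^2‖ ≤ 2 * η k := by
    intro k
    have := sq_diff (u (k+1)) (α * u k) (hunorm _).le (hαu k)
    rw [mul_pow] at this
    linarith [hstep k]
  have hstep4 : ∀ k, ‖(u (k+1))^4 - α^4 * (u k)^4‖ ≤ 4 * η k := by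
    intro k
    have := sq_diff ((u (k+1))^2) ((α * u k)^2)
      (by rw [norm_pow, hunorm]; norm_num) (by rw [norm_pow]; exact pow_le_one₀ (norm_nonneg _) (hαu k))
    rw [mul_pow, mul_pow, ← pow_mul, ← pow_mul, ← pow_mul] at this
    norm_num at this
    linarith [hstep2 k]
  obtain ⟨K2, hK2⟩ := osc_bdd (fun k => (u k)^2) (α^2) hα2
    (fun k => by rw [norm_pow, hunorm]; norm_num) (fun k => 2 * η k) hstep2
    (by simpa [mul_div_assoc] using hηs.mul_left 2)
  obtain ⟨K4, hK4⟩ := osc_bdd (fun k => (u k)^4) (α^4) hα4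
    (fun k => by rw [norm_pow, hunorm]; norm_num) (fun k => 4 * η k) hstep4
    (by simpa [mul_div_assoc] using hηs.mul_left 4)
  have hre : ∀ (ζ : ℕ → ℂ) n, (∑ k ∈ Finset.range n, ζ k / ((k:ℂ)+1)).re
      = ∑ k ∈ Finset.range n, (ζ k).re / ((k:ℝ)+1) := by
    intro ζ n
    rw [Complex.re_sum]
    refine Finset.sum_congr rfl (fun k _ => ?_)
    have : ((k:ℂ)+1) = (((k:ℝ)+1 : ℝ) : ℂ) := by push_cast; rfl
    rw [this, Complex.div_ofReal_re]
  have ho2 : (fun n => ∑ k ∈ Finset.range n, ((u k)^2).re / ((k:ℝ)+1)) =o[atTop]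
      (fun n : ℕ => Real.log n) := by
    refine bdd_o _ K2 (fun n => ?_)
    have h := hre (fun k => (u k)^2) n
    rw [← h]
    exact (Complex.abs_re_le_norm _).trans (hK2 n)
  have ho4 : (fun n => ∑ k ∈ Finset.range n, ((u k)^4).re / ((k:ℝ)+1)) =o[atTop]
      (fun n : ℕ => Real.log n) := by
    refine bdd_o _ K4 (fun n => ?_)
    have h := hre (fun k => (u k)^4) n
    rw [← h]
    exact (Complex.abs_re_le_norm _).trans (hK4 n)
  have hfid : ∀ k, f k = 1/8 + ((u k)^2).re/4 + ((u k)^4).re/8 := by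
    intro k
    have h := husq k
    have e2 : ((u k)^2).re = (u k).re^2 - (u k).im^2 := by simp [pow_two]
    have e2i : ((u k)^2).im = 2 * (u k).re * (u k).im := by simp [pow_two]; ring
    have e4 : ((u k)^4).re = ((u k).re^2 - (u k).im^2)^2 - (2 * (u k).re * (u k).im)^2 := by
      have : (u k)^4 = (u k)^2 * (u k)^2 := by ring
      rw [this, Complex.mul_re, e2, e2i]; ring
    rw [e2, e4]
    simp only [hf]
    have : (u k).im^2 = 1 - (u k).re^2 := by linarith
    have e : ((u k).re ^ 2 - (u k).im ^ 2) ^ 2 - (2 * (u k).re * (u k).im) ^ 2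
      = ((u k).re ^ 2 - (u k).im ^ 2) ^ 2 - 4 * (u k).re^2 * (u k).im ^ 2 := by ring
    rw [e, this]
    ring
  -- martingale part
  have ho1 : (fun n => ∑ k ∈ Finset.range n, γ k * ((u k).re * (u k).im)) =o[atTop]
      (fun n : ℕ => Real.log n) := by
    refine (kron (fun k => γ k * ((u k).re * (u k).im)) (fun n => Hs (n+1))
      (fun n => by linarith [Hs_pos n]) (fun m n h => Hs_mono (by omega)) Hs_top ?_).trans_isBigO Hs_O
    obtain ⟨l, hl⟩ := F1
    refine ⟨l, hl.congr (fun n => Finset.sum_congr rfl (fun k _ => ?_))⟩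
    ring
  have hlogp : ∀ n, Real.log ‖p n‖ = Real.log ‖p 0‖
      + ∑ k ∈ Finset.range n, Real.log (‖z k‖ / ‖p k‖) + ∑ k ∈ Finset.range n, rem k
      - ∑ k ∈ Finset.range n, γ k * ((u k).re * (u k).im)
      + ∑ k ∈ Finset.range n, ((γ k)^2 - σ / ((k:ℝ)+1)) * ((u k).re^2/2 - (u k).re^2*(u k).im^2)
      + σ/4 * ∑ k ∈ Finset.range n, ((u k)^2).re / ((k:ℝ)+1)
      + σ/8 * ∑ k ∈ Finset.range n, ((u k)^4).re / ((k:ℝ)+1) + σ/8 * Hs n := by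
    intro n
    induction n with
    | zero => simp [Hs]
    | succ n ih =>
      simp only [Finset.sum_range_succ, Hs_succ]
      have h1 : Real.log (‖z n‖ / ‖p n‖) = Real.log ‖z n‖ - Real.log ‖p n‖ :=
        Real.log_div (norm_ne_zero_iff.2 (hz0 n)) (norm_ne_zero_iff.2 (hp0 n))
      have h2 : rem n = Real.log ‖p (n+1)‖ - Real.log ‖z n‖
        - (-(γ n * ((u n).re*(u n).im)) + (γ n)^2 * f n) := rfl
      have h3 : σ / ((n:ℝ)+1) * f n = σ/4 * (((u n)^2).re / ((n:ℝ)+1))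
        + σ/8 * (((u n)^4).re / ((n:ℝ)+1)) + σ/8 * (1 / ((n:ℝ)+1)) := by
        rw [hfid]; ring
      have h4 : ((γ n)^2 - σ / ((n:ℝ)+1)) * ((u n).re^2/2 - (u n).re^2*(u n).im^2)
        = (γ n)^2 * f n - σ / ((n:ℝ)+1) * f n := by simp only [hf]; ring
      rw [h1, h2, h4, h3]
      linarith
  have s1 := (const_o (Real.log ‖p 0‖)).add (conv_o _ ⟨_, hρs.hasSum.tendsto_sum_nat⟩)
  have s2 := (s1.add (conv_o _ ⟨_, hrems.hasSum.tendsto_sum_nat⟩)).sub ho1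
  have s3 := ((s2.add (conv_o _ F2)).add (ho2.const_mul_left (σ/4))).add (ho4.const_mul_left (σ/8))
  have s4 := s3.add (Hs_log_o.const_mul_left (σ/8))
  refine s4.congr_left (fun n => ?_)
  rw [hlogp n]; ring


lemma Bm_add (γ : ℝ) (z w : ℂ) : Bm γ (z + w) = Bm γ z + Bm γ w := by
  simp only [Bm, Complex.add_re]; push_cast; ring

lemma Bm_smul (γ t : ℝ) (z : ℂ) : Bm γ (t * z) = t * Bm γ z := by
  simp only [Bm, Complex.re_ofReal_mul]; push_cast; ring

lemma Bm_diff (γ : ℝ) (z : ℂ) : ‖Bm γ z - z‖ ≤ |γ| * ‖z‖ := by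
  rw [Bm, sub_sub_cancel_left, norm_neg, norm_mul, Complex.norm_I, one_mul,
    Complex.norm_real, Real.norm_eq_abs, abs_mul]
  exact mul_le_mul_of_nonneg_left (Complex.abs_re_le_norm _) (abs_nonneg _)

lemma Bm_le (γ : ℝ) (z : ℂ) : ‖Bm γ z‖ ≤ (1 + |γ|) * ‖z‖ := by
  have h := Bm_diff γ z
  have := norm_add_le (Bm γ z - z) z
  rw [sub_add_cancel] at this
  linarith

lemma Bm_ge (γ : ℝ) (z : ℂ) : (1 - |γ|) * ‖z‖ ≤ ‖Bm γ z‖ := by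
  have h := Bm_diff γ z
  have := norm_sub_le (Bm γ z) (Bm γ z - z)
  rw [sub_sub_cancel] at this
  linarith

lemma Bm_ne (γ : ℝ) (z : ℂ) (hz : z ≠ 0) : Bm γ z ≠ 0 := by
  intro h
  have h1 := Bm_normSq γ z
  rw [h] at h1
  have h2 : z.re = 0 := by
    simp at h1; nlinarith [sq_nonneg z.re, sq_nonneg (z.im - γ*z.re)]
  have h3 : z.im = 0 := by
    simp [h2] at h1; nlinarith [sq_nonneg z.im]
  exact hz (Complex.ext h2 h3)

lemma Bm_wronsk (γ : ℝ) (z w : ℂ) :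
    (starRingEnd ℂ (Bm γ z) * Bm γ w).im = (starRingEnd ℂ z * w).im := by
  simp [Bm]
  ring

lemma tau_est (γ : ℝ) (hγ : |γ| ≤ 1/8) (z e u : ℂ) (hz : z ≠ 0) (hu : u = z / ‖z‖) :
    |(Bm γ (Complex.I * z + e) / Bm γ z).re + γ * (u.re^2 - u.im^2)|
      ≤ 3 * (γ^2 + ‖e‖ / ‖z‖) := by
  have hn : 0 < ‖z‖ := norm_pos_iff.2 hz
  have hre : z.re = ‖z‖ * u.re := by
    rw [hu, Complex.div_ofReal_re]; field_simp
  have him : z.im = ‖z‖ * u.im := by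
    rw [hu, Complex.div_ofReal_im]; field_simp
  have hun := (Bm_log γ hγ z hz u hu).2
  set x := u.re
  set y := u.im
  have hsq : ‖Bm γ z‖^2 = ‖z‖^2 * (1 - 2*γ*x*y + γ^2*x^2) := by
    rw [Bm_normSq, hre, him]
    have : y^2 = 1 - x^2 := by linarith
    ring_nf
    rw [this]; ring
  have hxy2 : |x * y| ≤ 1 / 2 := by
    rw [abs_le]; constructor <;> nlinarith [sq_nonneg (x+y), sq_nonneg (x-y)]
  have hx2 : x^2 ≤ 1 := by nlinarith [sq_nonneg y]
  have hg0 := abs_nonneg γ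
  have hgxy : |γ * (x*y)| ≤ 1/16 := by
    rw [abs_mul]; nlinarith [abs_nonneg (x*y)]
  have hQ : 7/8 ≤ 1 - 2*γ*x*y + γ^2*x^2 := by
    have := (abs_le.1 hgxy).2
    nlinarith [sq_nonneg (γ*x)]
  set Q := 1 - 2*γ*x*y + γ^2*x^2 with hQd
  have hBe : ‖Bm γ e / Bm γ z‖ ≤ 2 * (‖e‖ / ‖z‖) := by
    rw [norm_div]
    have h1 := Bm_le γ e
    have h2 := Bm_ge γ z
    have h3 : 0 < ‖Bm γ z‖ := norm_pos_iff.2 (Bm_ne γ z hz)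
    rw [div_le_iff₀ h3]
    have h4 : (9/8) * ‖e‖ ≤ 2 * (‖e‖ / ‖z‖) * ((7/8) * ‖z‖) := by
      have : 2 * (‖e‖ / ‖z‖) * ((7/8) * ‖z‖) = 7/4 * ‖e‖ := by field_simp; ring
      rw [this]; nlinarith [norm_nonneg e]
    have h5 : (1 + |γ|) * ‖e‖ ≤ 9/8 * ‖e‖ := by nlinarith [norm_nonneg e]
    have h6 : (7/8) * ‖z‖ ≤ ‖Bm γ z‖ := by nlinarith
    have h7 : 2 * (‖e‖ / ‖z‖) * ((7/8) * ‖z‖) ≤ 2 * (‖e‖ / ‖z‖) * ‖Bm γ z‖ := by gcongr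
    linarith
  have hmain : (Bm γ (Complex.I * z) / Bm γ z).re = -(γ*(x^2-y^2) + γ^2*(x*y)) / Q := by
    have hns : Complex.normSq (Bm γ z) = ‖z‖^2 * Q := by rw [← Complex.sq_norm, hsq]
    rw [Complex.div_re, hns]
    have e1 : (Bm γ (Complex.I * z)).re = -z.im := by simp [Bm]
    have e2 : (Bm γ (Complex.I * z)).im = z.re + γ * z.im := by simp [Bm]
    have e3 : (Bm γ z).re = z.re := by simp [Bm]
    have e4 : (Bm γ z).im = z.im - γ * z.re := by simp [Bm]
    rw [e1, e2, e3, e4, hre, him]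
    have hQ0 : Q ≠ 0 := by linarith
    field_simp
    ring
  rw [Bm_add, add_div, Complex.add_re, hmain]
  have hr : |(Bm γ e / Bm γ z).re| ≤ 2 * (‖e‖ / ‖z‖) := (Complex.abs_re_le_norm _).trans hBe
  have hQ0 : Q ≠ 0 := by linarith
  have hQp : 0 < Q := by linarith
  have e5 : -(γ*(x^2-y^2) + γ^2*(x*y)) / Q + (Bm γ e / Bm γ z).re + γ*(x^2-y^2)
      = γ^2 * (-(x*y) - (x^2-y^2)*(2*(x*y) - γ*x^2)) / Q + (Bm γ e / Bm γ z).re := by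
    have : -(γ*(x^2-y^2) + γ^2*(x*y)) / Q + γ*(x^2-y^2)
        = γ^2 * (-(x*y) - (x^2-y^2)*(2*(x*y) - γ*x^2)) / Q := by
      rw [div_add' _ _ _ hQ0]
      congr 1
      rw [hQd]; ring
    linarith
  rw [e5]
  refine (abs_add_le _ _).trans ?_
  have h8 : |γ^2 * (-(x*y) - (x^2-y^2)*(2*(x*y) - γ*x^2)) / Q| ≤ 3 * γ^2 := by
    rw [abs_div, abs_of_pos hQp, div_le_iff₀ hQp, abs_mul, abs_of_nonneg (sq_nonneg γ)]
    have h9 : |(-(x*y) - (x^2-y^2)*(2*(x*y) - γ*x^2))| ≤ 2 := by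
      refine (abs_sub _ _).trans ?_
      rw [abs_neg, abs_mul (x^2-y^2)]
      have a1 : |x^2-y^2| ≤ 1 := by
        rw [abs_le]; constructor <;> nlinarith [sq_nonneg x, sq_nonneg y]
      have a2 : |2*(x*y) - γ*x^2| ≤ 9/8 := by
        refine (abs_sub _ _).trans ?_
        rw [abs_mul 2, abs_mul γ, abs_two, abs_of_nonneg (sq_nonneg x)]
        nlinarith [sq_nonneg x]
      nlinarith [abs_nonneg (x^2-y^2), abs_nonneg (2*(x*y) - γ*x^2)]
    nlinarith [sq_nonneg γ]
  have h10 : 0 ≤ ‖e‖ / ‖z‖ := by positivity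
  linarith

lemma wr_bound (w d a : ℕ → ℝ) (hw0 : w 0 ≠ 0) (hd0 : ∀ n, d n ≠ 0)
    (hw : ∀ n, w (n+1) = d n * w n) (hd : ∀ n, |d n - 1| ≤ a n) (ha : Summable a) :
    ∃ c C : ℝ, 0 < c ∧ ∀ n, c ≤ |w n| ∧ |w n| ≤ C := by
  have hwn : ∀ n, w n ≠ 0 := by
    intro n
    induction n with
    | zero => exact hw0
    | succ n ih => rw [hw]; exact mul_ne_zero (hd0 n) ih
  have hs := summable_log_of d a hd ha
  have hl : ∀ n, Real.log (w n) = Real.log (w 0) + ∑ k ∈ Finset.range n, Real.log (d k) := by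
    intro n
    induction n with
    | zero => simp
    | succ n ih =>
      rw [hw, Real.log_mul (hd0 n) (hwn n), ih, Finset.sum_range_succ]; ring
  have ht := hs.hasSum.tendsto_sum_nat
  obtain ⟨K0, hK0⟩ := ht.bddAbove_range
  obtain ⟨K1, hK1⟩ := ht.bddBelow_range
  refine ⟨Real.exp (Real.log (w 0) + K1), Real.exp (Real.log (w 0) + K0), Real.exp_pos _,
    fun n => ?_⟩
  have h1 := hK0 ⟨n, rfl⟩
  have h3 := hK1 ⟨n, rfl⟩
  rw [← Real.exp_log_eq_abs (hwn n), hl n]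
  constructor
  · exact Real.exp_le_exp.2 (by simpa using h3)
  · exact Real.exp_le_exp.2 (by simpa using h1)


/-- orbit in complex coordinates -/
noncomputable def orb (L : ℕ → ℂ →ₗ[ℝ] ℂ) (γ : ℕ → ℝ) (p0 : ℂ) : ℕ → ℂ
  | 0 => p0
  | n + 1 => Bm (γ n) (L n (orb L γ p0 n))

lemma L_wronsk (L : ℂ →ₗ[ℝ] ℂ) (p q : ℂ) :
    (starRingEnd ℂ (L p) * L q).im
      = (starRingEnd ℂ (L 1) * L Complex.I).im * (starRingEnd ℂ p * q).im := by
  have h : ∀ v : ℂ, L v = (v.re : ℂ) * L 1 + (v.im : ℂ) * L Complex.I := by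
    intro v
    have : v = v.re • (1:ℂ) + v.im • Complex.I := by
      apply Complex.ext <;> simp
    conv_lhs => rw [this]
    rw [map_add, map_smul, map_smul]; simp
  rw [h p, h q]
  simp
  ring

lemma L_det_est (L : ℂ →ₗ[ℝ] ℂ) (α : ℂ) (a : ℝ) (hα : ‖α‖ = 1)
    (hL : ∀ v, ‖L v - α * v‖ ≤ a * ‖v‖) :
    |(starRingEnd ℂ (L 1) * L Complex.I).im - 1| ≤ 2 * a + a^2 := by
  have h1 := hL 1
  have h2 := hL Complex.I
  simp only [norm_one, mul_one, Complex.norm_I] at h1 h2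
  have hα2 : starRingEnd ℂ α * α = 1 := by
    rw [mul_comm, Complex.mul_conj, Complex.normSq_eq_norm_sq, hα]; simp
  have e : starRingEnd ℂ (L 1) * L Complex.I - Complex.I
      = starRingEnd ℂ α * (L Complex.I - α * Complex.I)
        + starRingEnd ℂ (L 1 - α) * (α * Complex.I)
        + starRingEnd ℂ (L 1 - α) * (L Complex.I - α * Complex.I) := by
    rw [map_sub]
    linear_combination Complex.I * hα2
  have e2 : (starRingEnd ℂ (L 1) * L Complex.I).im - 1
      = (starRingEnd ℂ (L 1) * L Complex.I - Complex.I).im := by simp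
  rw [e2]
  refine (Complex.abs_im_le_norm _).trans ?_
  rw [e]
  refine (norm_add_le _ _).trans ?_
  have h3 := norm_add_le (starRingEnd ℂ α * (L Complex.I - α * Complex.I))
    (starRingEnd ℂ (L 1 - α) * (α * Complex.I))
  simp only [norm_mul, RCLike.norm_conj, hα, Complex.norm_I, one_mul, mul_one] at h3 ⊢
  have h4 := mul_le_mul h1 h2 (norm_nonneg _) ((norm_nonneg _).trans h1)
  nlinarith


/-- coefficient of the martingale part in the increment of `Re (q/p)` -/
noncomputable def cf (κ : ℝ) (L : ℕ → ℂ →ₗ[ℝ] ℂ) (n : ℕ) (p q : ℂ) : ℝ :=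
  ((n:ℝ)+1)^κ * ((q / p).im * ((L n p / ‖L n p‖).re^2 - (L n p / ‖L n p‖).im^2))

/-- truncated coefficient -/
noncomputable def cft (κ s : ℝ) (L : ℕ → ℂ →ₗ[ℝ] ℂ) (n : ℕ) (p q : ℂ) : ℝ :=
  if |cf κ L n p q| ≤ ((n:ℝ)+1)^(-s) then cf κ L n p q else 0

lemma sub_rate (L : ℕ → ℂ →ₗ[ℝ] ℂ) (γ a : ℕ → ℝ) (α : ℂ) (p q : ℕ → ℂ)
    (hp : ∀ n, p (n+1) = Bm (γ n) (L n (p n))) (hq : ∀ n, q (n+1) = Bm (γ n) (L n (q n)))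
    (hL : ∀ n v, ‖L n v - α * v‖ ≤ a n * ‖v‖) (hα : ‖α‖ = 1) (ha : Summable a)
    (hp0 : ∀ n, p n ≠ 0) (hz0 : ∀ n, L n (p n) ≠ 0)
    (hγ0 : Tendsto γ atTop (nhds 0)) (C : ℝ)
    (hw : ∀ n, |(starRingEnd ℂ (p n) * q n).im| ≤ C) (β δ : ℝ) (hδ : 0 < δ) (hδβ : δ < 2 * β)
    (hg : ∀ e : ℝ, 0 < e → ∀ᶠ n : ℕ in atTop,
      |Real.log ‖p n‖ - β * Real.log ((n:ℝ)+1)| ≤ e * Real.log ((n:ℝ)+1))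
    (F3 : ∃ l, Tendsto (fun n => ∑ k ∈ Finset.range n, γ k * cft (2*β-δ) (δ/4) L k (p k) (q k))
      atTop (nhds l))
    (F4 : Summable (fun n => (γ n)^2 * ((n:ℝ)+1)^(-(δ/4)))) :
    ∃ l K : ℝ, Tendsto (fun n => (q n / p n).re) atTop (nhds l) ∧ 0 < K ∧
      ∀ᶠ n : ℕ in atTop, ‖q n - l * p n‖ ≤ ‖p n‖ * (K * ((n:ℝ)+1)^(-(2*β-δ))) := by
  have hann : ∀ n, 0 ≤ a n := by
    intro n
    have := (norm_nonneg _).trans (hL n 1)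
    simpa using this
  have hn1 : ∀ n : ℕ, (0:ℝ) < (n:ℝ)+1 := fun n => by positivity
  set s : ℕ → ℝ := fun n => (q n / p n).im with hs
  set T : ℕ → ℝ := fun n => (q n / p n).re with hT
  set b : ℕ → ℝ := fun n => ((n:ℝ)+1)^(2*β-δ) with hb
  have hbpos : ∀ n, 0 < b n := fun n => Real.rpow_pos_of_pos (hn1 n) _
  have hntop : Tendsto (fun n : ℕ => (n:ℝ)+1) atTop atTop :=
    tendsto_atTop_add_const_right _ _ tendsto_natCast_atTop_atTop
  have hbtop : Tendsto b atTop atTop :=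
    (tendsto_rpow_atTop (by linarith : 0 < 2*β-δ)).comp hntop
  have hbmono : Monotone b := by
    intro m n h
    refine Real.rpow_le_rpow (hn1 m).le ?_ (by linarith)
    have : (m:ℝ) ≤ n := by exact_mod_cast h
    linarith
  have hsw : ∀ n, s n = (starRingEnd ℂ (p n) * q n).im / ‖p n‖^2 := by
    intro n
    simp only [hs]
    rw [Complex.div_im, Complex.sq_norm]
    simp
    ring
  -- bound on b * s
  have hbs : ∀ᶠ n in atTop, b n * |s n| ≤ ((n:ℝ)+1)^(-(δ/4)) := by
    have hC1 : ∀ᶠ n : ℕ in atTop, C ≤ ((n:ℝ)+1)^(δ/4) :=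
      ((tendsto_rpow_atTop (by linarith : 0 < δ/4)).comp hntop).eventually_ge_atTop C
    filter_upwards [hg (δ/4) (by linarith), hC1] with n h1 h2
    have hpn : 0 < ‖p n‖ := norm_pos_iff.2 (hp0 n)
    have h3 : ((n:ℝ)+1)^(2*β-δ/2) ≤ ‖p n‖^2 := by
      rw [Real.rpow_def_of_pos (hn1 n), ← Real.le_log_iff_exp_le (by positivity), Real.log_pow]
      have := (abs_le.1 h1).1
      push_cast
      nlinarith
    have h4 : |s n| ≤ ((n:ℝ)+1)^(δ/4) / ((n:ℝ)+1)^(2*β-δ/2) := by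
      rw [hsw, abs_div, abs_of_pos (by positivity : 0 < ‖p n‖^2)]
      exact div_le_div₀ (Real.rpow_nonneg (hn1 n).le _) ((hw n).trans h2)
        (Real.rpow_pos_of_pos (hn1 n) _) h3
    calc b n * |s n| ≤ b n * (((n:ℝ)+1)^(δ/4) / ((n:ℝ)+1)^(2*β-δ/2)) :=
          mul_le_mul_of_nonneg_left h4 (hbpos n).le
      _ = ((n:ℝ)+1)^(-(δ/4)) := by
          simp only [hb]
          rw [← Real.rpow_sub (hn1 n), ← Real.rpow_add (hn1 n)]
          congr 1; ring
  have hone : ∀ n : ℕ, ((n:ℝ)+1)^(-(δ/4)) ≤ 1 := by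
    intro n
    refine Real.rpow_le_one_of_one_le_of_nonpos ?_ (by linarith)
    have : (0:ℝ) ≤ n := by positivity
    linarith
  set u : ℕ → ℂ := fun n => L n (p n) / ‖L n (p n)‖ with hu
  have hincr : ∀ n, T (n+1) - T n = s n *
      (Bm (γ n) (Complex.I * L n (p n) + (L n (Complex.I * p n) - Complex.I * L n (p n)))
        / Bm (γ n) (L n (p n))).re := by
    intro n
    have e1 : q n = (T n : ℂ) * p n + (s n : ℂ) * (Complex.I * p n) := by
      have h1 : q n = (q n / p n) * p n := by field_simp [hp0 n]
      have h2 : q n / p n = (T n : ℂ) + (s n : ℂ) * Complex.I := (Complex.re_add_im _).symm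
      rw [h2] at h1
      rw [h1]
      ring
    have e2 : L n (q n) = (T n : ℂ) * L n (p n) + (s n : ℂ) * L n (Complex.I * p n) := by
      have h3 : ∀ (t : ℝ) (v : ℂ), L n ((t:ℂ) * v) = (t:ℂ) * L n v := by
        intro t v
        have := (L n).map_smul t v
        simpa using this
      conv_lhs => rw [e1]
      rw [map_add, h3, h3]
    have e3 : q (n+1) = (T n : ℂ) * p (n+1) + (s n : ℂ) * Bm (γ n) (L n (Complex.I * p n)) := by
      rw [hq, e2, Bm_add, Bm_smul, Bm_smul, hp]
    have e4 : q (n+1) / p (n+1) = (T n : ℂ) + (s n : ℂ) *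
        (Bm (γ n) (L n (Complex.I * p n)) / p (n+1)) := by
      rw [e3]
      have := hp0 (n+1)
      field_simp
    have e5 : T (n+1) = T n + s n * (Bm (γ n) (L n (Complex.I * p n)) / p (n+1)).re := by
      show (q (n+1) / p (n+1)).re = _
      rw [e4, Complex.add_re, Complex.re_ofReal_mul, Complex.ofReal_re]
    rw [e5, hp, add_sub_cancel]
    ring
  have hc : ∀ n, cf (2*β-δ) L n (p n) (q n) = b n * (s n * ((u n).re^2 - (u n).im^2)) :=
    fun n => rfl
  have hun : ∀ n, (u n).re^2 + (u n).im^2 = 1 := by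
    intro n
    exact (Bm_log 0 (by simp) (L n (p n)) (hz0 n) (u n) rfl).2
  have hcc : ∀ᶠ n in atTop, cft (2*β-δ) (δ/4) L n (p n) (q n) = cf (2*β-δ) L n (p n) (q n) := by
    filter_upwards [hbs] with n h
    rw [cft, if_pos]
    rw [hc]
    have h1 : |(u n).re^2 - (u n).im^2| ≤ 1 := by
      have := hun n
      rw [abs_le]; constructor <;> nlinarith [sq_nonneg (u n).re, sq_nonneg (u n).im]
    rw [abs_mul, abs_mul, abs_of_pos (hbpos n), ← mul_assoc]
    refine le_trans (mul_le_of_le_one_right (by positivity) h1) h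
  have hγsmall : ∀ᶠ n in atTop, |γ n| ≤ 1/8 := by
    have := (tendsto_zero_iff_abs_tendsto_zero _).1 hγ0
    exact this.eventually_le_const (by norm_num)
  have hasmall : ∀ᶠ n in atTop, a n ≤ 1/2 := ha.tendsto_atTop_zero.eventually_le_const (by norm_num)
  set R : ℕ → ℝ := fun n => b n * (T (n+1) - T n)
    + γ n * cft (2*β-δ) (δ/4) L n (p n) (q n) with hR
  have hRs : Summable R := by
    refine Summable.of_norm_bounded_eventually_nat ((F4.add (ha.mul_left 4)).mul_left 3) ?_
    filter_upwards [hbs, hcc, hγsmall, hasmall] with n h1 h2 h3 h4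
    set z := L n (p n) with hzd
    set e := L n (Complex.I * p n) - Complex.I * z with he
    have hest := tau_est (γ n) h3 z e (u n) (hz0 n) rfl
    have hpn : 0 < ‖p n‖ := norm_pos_iff.2 (hp0 n)
    have hzn : 0 < ‖z‖ := norm_pos_iff.2 (hz0 n)
    have hzp : ‖p n‖ / 2 ≤ ‖z‖ := by
      have h5 := hL n (p n)
      have h6 := norm_sub_norm_le (α * p n) (α * p n - z)
      rw [sub_sub_cancel, norm_mul, hα, one_mul, norm_sub_rev] at h6
      nlinarith
    have hen : ‖e‖ ≤ 2 * a n * ‖p n‖ := by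
      have e1 : e = (L n (Complex.I * p n) - α * (Complex.I * p n)) - Complex.I * (z - α * p n) := by
        rw [he]; ring
      have h5 := hL n (p n)
      have h6 := hL n (Complex.I * p n)
      rw [norm_mul, Complex.norm_I, one_mul] at h6
      rw [e1]
      refine (norm_sub_le _ _).trans ?_
      rw [norm_mul, Complex.norm_I, one_mul]
      linarith
    have hez : ‖e‖ / ‖z‖ ≤ 4 * a n := by
      rw [div_le_iff₀ hzn]
      nlinarith [hann n]
    have eR : R n = b n * s n * ((Bm (γ n) (Complex.I * z + e) / Bm (γ n) z).re
        + γ n * ((u n).re^2 - (u n).im^2)) := by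
      simp only [hR]
      rw [h2, hc, hincr]
      ring
    rw [Real.norm_eq_abs, eR, abs_mul, abs_mul, abs_of_pos (hbpos n)]
    set E := ((n:ℝ)+1)^(-(δ/4)) with hE
    have hE0 : 0 ≤ E := Real.rpow_nonneg (hn1 n).le _
    have hE1 : E ≤ 1 := hone n
    calc b n * |s n| * |(Bm (γ n) (Complex.I * z + e) / Bm (γ n) z).re
        + γ n * ((u n).re^2 - (u n).im^2)| ≤ E * (3 * ((γ n)^2 + 4 * a n)) := by
          refine mul_le_mul h1 (hest.trans (by linarith)) (abs_nonneg _) hE0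
      _ ≤ 3 * ((γ n)^2 * E + 4 * a n) := by nlinarith [hann n]
  have hconv : ∃ l, Tendsto (fun n => ∑ k ∈ Finset.range n, b k * (T (k+1) - T k)) atTop (nhds l) := by
    obtain ⟨l, hl⟩ := F3
    refine ⟨_, (hRs.hasSum.tendsto_sum_nat.sub hl).congr (fun n => ?_)⟩
    rw [← Finset.sum_sub_distrib]
    refine Finset.sum_congr rfl (fun k _ => ?_)
    simp only [hR]; ring
  obtain ⟨l, K, hl, hK, hrate⟩ := tail_rate T b hbpos hbmono hbtop hconv
  refine ⟨l, K + 1, hl, by linarith, ?_⟩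
  filter_upwards [hbs] with n h1
  have e1 : q n - l * p n = p n * (((T n - l : ℝ) : ℂ) + (s n : ℂ) * Complex.I) := by
    have h1 : q n = (q n / p n) * p n := by field_simp [hp0 n]
    have h2 : q n / p n = (T n : ℂ) + (s n : ℂ) * Complex.I := (Complex.re_add_im _).symm
    rw [h2] at h1
    rw [h1]
    push_cast; ring
  rw [e1, norm_mul]
  refine mul_le_mul_of_nonneg_left ?_ (norm_nonneg _)
  refine (norm_add_le _ _).trans ?_
  rw [norm_mul, Complex.norm_I, mul_one, Complex.norm_real, Complex.norm_real, Real.norm_eq_abs,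
    Real.norm_eq_abs, Real.rpow_neg (hn1 n).le]
  have h2 := hrate n
  have h3 : |s n| ≤ 1 / b n := by
    rw [le_div_iff₀ (hbpos n), mul_comm]
    exact h1.trans (hone n)
  have h4 : (K+1) * (((n:ℝ)+1)^(2*β-δ))⁻¹ = K / b n + 1 / b n := by
    simp only [hb]; ring
  rw [h4]
  linarith


lemma log_succ_o : (fun n : ℕ => Real.log ((n:ℝ)+1) - Real.log n) =o[atTop]
    (fun n : ℕ => Real.log n) := by
  refine bdd_o _ (Real.log 2) (fun n => ?_)
  rcases Nat.eq_zero_or_pos n with h | h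
  · subst h; simp [Real.log_nonneg]
  · have hn : (1:ℝ) ≤ n := by exact_mod_cast h
    have h1 : Real.log n ≤ Real.log ((n:ℝ)+1) := Real.log_le_log (by linarith) (by linarith)
    rw [abs_of_nonneg (by linarith), sub_le_iff_le_add, ← Real.log_mul (by norm_num) (by linarith)]
    exact Real.log_le_log (by linarith) (by linarith)

lemma log_O_succ : (fun n : ℕ => Real.log n) =O[atTop] (fun n : ℕ => Real.log ((n:ℝ)+1)) := by
  refine Asymptotics.IsBigO.of_bound 1 ?_
  filter_upwards [eventually_ge_atTop 1] with n h
  have hn : (1:ℝ) ≤ n := by exact_mod_cast h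
  rw [Real.norm_eq_abs, Real.norm_eq_abs, abs_of_nonneg (Real.log_nonneg hn),
    abs_of_nonneg (Real.log_nonneg (by linarith)), one_mul]
  exact Real.log_le_log (by linarith) (by linarith)

lemma conv_succ (f : ℕ → ℝ) (β : ℝ)
    (h : (fun n => f n - β * Real.log n) =o[atTop] (fun n : ℕ => Real.log n)) :
    ∀ e : ℝ, 0 < e → ∀ᶠ n : ℕ in atTop,
      |f n - β * Real.log ((n:ℝ)+1)| ≤ e * Real.log ((n:ℝ)+1) := by
  intro e he
  have h1 := (h.sub (log_succ_o.const_mul_left β)).trans_isBigO log_O_succ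
  filter_upwards [h1.def he] with n hn
  rw [Real.norm_eq_abs, Real.norm_eq_abs] at hn
  have h2 : 0 ≤ Real.log ((n:ℝ)+1) := Real.log_nonneg (by linarith [Nat.cast_nonneg (α := ℝ) n])
  rw [abs_of_nonneg h2] at hn
  refine le_trans (le_of_eq ?_) hn
  congr 1; ring

lemma conv_back (f : ℕ → ℝ) (β : ℝ)
    (h : ∀ e : ℝ, 0 < e → ∀ᶠ n : ℕ in atTop,
      |f n - β * Real.log ((n:ℝ)+1)| ≤ e * Real.log ((n:ℝ)+1)) :
    Tendsto (fun n : ℕ => f n / Real.log n) atTop (nhds β) := by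
  have hΛ : (fun n : ℕ => Real.log ((n:ℝ)+1)) =O[atTop] (fun n : ℕ => Real.log n) := by
    have := log_succ_o.isBigO.add (Asymptotics.isBigO_refl (fun n : ℕ => Real.log n) atTop)
    simpa using this
  have h1 : (fun n : ℕ => f n - β * Real.log ((n:ℝ)+1)) =o[atTop]
      (fun n : ℕ => Real.log ((n:ℝ)+1)) := by
    refine Asymptotics.IsLittleO.of_bound (fun e he => ?_)
    filter_upwards [h e he] with n hn
    rw [Real.norm_eq_abs, Real.norm_eq_abs]
    exact hn.trans (mul_le_mul_of_nonneg_left (le_abs_self _) he.le)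
  have h2 := (h1.trans_isBigO hΛ).add (log_succ_o.const_mul_left β)
  have h3 := h2.tendsto_div_nhds_zero.add_const β
  rw [zero_add] at h3
  refine h3.congr' ?_
  filter_upwards [log_top.eventually_gt_atTop 0] with n hn
  have := hn.ne'
  field_simp
  ring

lemma det_main (L : ℕ → ℂ →ₗ[ℝ] ℂ) (γ a : ℕ → ℝ) (α : ℂ) (σ C₁ ε : ℝ) (hε : 0 < ε) (hσ : 0 < σ)
    (hL : ∀ n v, ‖L n v - α * v‖ ≤ a n * ‖v‖) (hα : ‖α‖ = 1) (ha : Summable a)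
    (hα2 : α^2 ≠ 1) (hα4 : α^4 ≠ 1)
    (hinj : ∀ n v, v ≠ 0 → L n v ≠ 0)
    (hdet : ∀ n, (starRingEnd ℂ (L n 1) * L n Complex.I).im ≠ 0)
    (hγ : ∀ n, |γ n| ≤ C₁ * ((n : ℝ) + 1) ^ (-(1 / 3 : ℝ) - ε))
    (p q u : ℕ → ℂ) (hpo : p = orb L γ 1) (hqo : q = orb L γ Complex.I)
    (hu : ∀ n, u n = L n (p n) / ‖L n (p n)‖)
    (F1 : ∃ l, Tendsto (fun n => ∑ k ∈ Finset.range n,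
      γ k * (((u k).re * (u k).im) * (1 / Hs (k+1)))) atTop (nhds l))
    (F2 : ∃ l, Tendsto (fun n => ∑ k ∈ Finset.range n,
      ((γ k)^2 - σ / ((k:ℝ)+1)) * ((u k).re^2/2 - (u k).re^2*(u k).im^2)) atTop (nhds l))
    (F3 : ∀ m : ℕ, ∃ l, Tendsto (fun n => ∑ k ∈ Finset.range n,
      γ k * cft (σ/4 - σ/4/((m:ℝ)+2)) (σ/4/((m:ℝ)+2)/4) L k (p k) (q k)) atTop (nhds l))
    (F4 : ∀ m : ℕ, Summable (fun n : ℕ => (γ n)^2 * ((n:ℝ)+1)^(-(σ/4/((m:ℝ)+2)/4)))) :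
    ∃ r : ℕ → ℂ, r 0 ≠ 0 ∧ (∀ n, r (n+1) = Bm (γ n) (L n (r n))) ∧
      Tendsto (fun n => Real.log ‖r n‖ / Real.log n) atTop (nhds (-(σ/8))) := by
  have hp : ∀ n, p (n+1) = Bm (γ n) (L n (p n)) := by intro n; rw [hpo]; rfl
  have hq : ∀ n, q (n+1) = Bm (γ n) (L n (q n)) := by intro n; rw [hqo]; rfl
  have hp00 : p 0 = 1 := by rw [hpo]; rfl
  have hq00 : q 0 = Complex.I := by rw [hqo]; rfl
  have hp0 : ∀ n, p n ≠ 0 := by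
    intro n
    induction n with
    | zero => rw [hp00]; exact one_ne_zero
    | succ n ih => rw [hp]; exact Bm_ne _ _ (hinj n _ ih)
  have hz0 : ∀ n, L n (p n) ≠ 0 := fun n => hinj n _ (hp0 n)
  have hann : ∀ n, 0 ≤ a n := by
    intro n
    have := (norm_nonneg _).trans (hL n 1)
    simpa using this
  have hgrow := growth p (fun n => L n (p n)) γ a α σ C₁ ε hε hp (fun n => hL n (p n)) hp0 hz0 ha hγ
    hα hα2 hα4 u hu F1 F2
  have hg := conv_succ _ _ hgrow
  have hγ0 : Tendsto γ atTop (nhds 0) := by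
    refine (tendsto_zero_iff_abs_tendsto_zero _).2 ?_
    have hntop : Tendsto (fun n : ℕ => (n:ℝ)+1) atTop atTop :=
      tendsto_atTop_add_const_right _ _ tendsto_natCast_atTop_atTop
    have h1 := (tendsto_rpow_neg_atTop (by linarith : 0 < 1/3 + ε)).comp hntop
    have h2 := h1.const_mul C₁
    rw [mul_zero] at h2
    refine squeeze_zero (fun n => abs_nonneg _) (fun n => (hγ n).trans (le_of_eq ?_)) h2
    simp only [Function.comp]
    congr 2; ring
  -- Wronskian
  obtain ⟨c, C, hc, hwb⟩ := wr_bound (fun n => (starRingEnd ℂ (p n) * q n).im)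
    (fun n => (starRingEnd ℂ (L n 1) * L n Complex.I).im)
    (fun n => (2 + ∑' k, a k) * a n)
    (by simp [hp00, hq00]) hdet
    (fun n => by rw [hp, hq, Bm_wronsk, L_wronsk])
    (fun n => by
      refine (L_det_est (L n) α (a n) hα (hL n)).trans ?_
      have h1 : a n ≤ ∑' k, a k := ha.le_tsum n (fun k _ => hann k)
      nlinarith [hann n])
    (ha.mul_left _)
  set β := σ/8 with hβ
  have hβ0 : 0 < β := by positivity
  have hsub : ∀ m : ℕ, ∃ l K : ℝ, Tendsto (fun n => (q n / p n).re) atTop (nhds l) ∧ 0 < K ∧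
      ∀ᶠ n : ℕ in atTop, ‖q n - l * p n‖ ≤ ‖p n‖ * (K * ((n:ℝ)+1)^(-(2*β-σ/4/((m:ℝ)+2)))) := by
    intro m
    have hm : (0:ℝ) < (m:ℝ)+2 := by positivity
    refine sub_rate L γ a α p q hp hq hL hα ha hp0 hz0 hγ0 C (fun n => (hwb n).2) β
      (σ/4/((m:ℝ)+2)) (by positivity) ?_ hg ?_ (F4 m)
    · rw [div_lt_iff₀ hm, hβ]
      nlinarith
    · have e : 2 * β = σ/4 := by rw [hβ]; ring
      rw [e]
      exact F3 m
  obtain ⟨l, K0, hl, -, -⟩ := hsub 0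
  have hr0 : ∀ n, c ≤ ‖p n‖ * ‖q n - l * p n‖ := by
    intro n
    have h1 : (starRingEnd ℂ (p n) * q n).im = (starRingEnd ℂ (p n) * (q n - l * p n)).im := by
      have : starRingEnd ℂ (p n) * (q n - l * p n)
          = starRingEnd ℂ (p n) * q n - ((l * Complex.normSq (p n) : ℝ) : ℂ) := by
        push_cast
        rw [← Complex.mul_conj]; ring
      rw [this, Complex.sub_im, Complex.ofReal_im, sub_zero]
    have h2 := (hwb n).1
    rw [h1] at h2
    refine h2.trans ((Complex.abs_im_le_norm _).trans (le_of_eq ?_))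
    rw [norm_mul, RCLike.norm_conj]
  have hrpos : ∀ n, 0 < ‖q n - l * p n‖ := by
    intro n
    by_contra h
    have h1 : ‖q n - l * p n‖ = 0 := le_antisymm (not_lt.1 h) (norm_nonneg _)
    have := hr0 n
    rw [h1, mul_zero] at this
    linarith
  refine ⟨fun n => q n - l * p n, norm_pos_iff.1 (hrpos 0), fun n => ?_, ?_⟩
  · have h3 : L n ((l:ℂ) * p n) = (l:ℂ) * L n (p n) := by
      have := (L n).map_smul l (p n)
      simpa using this
    have h4 : q n = (q n - l * p n) + l * p n := by ring
    have h5 : q (n+1) = Bm (γ n) (L n (q n - l * p n)) + l * p (n+1) := by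
      rw [hq, hp]
      conv_lhs => rw [h4]
      rw [map_add, h3, Bm_add, Bm_smul]
    show q (n+1) - l * p (n+1) = Bm (γ n) (L n (q n - l * p n))
    rw [h5]; ring
  · refine conv_back _ _ (fun e he => ?_)
    have hΛtop : Tendsto (fun n : ℕ => Real.log ((n:ℝ)+1)) atTop atTop :=
      Real.tendsto_log_atTop.comp
        (tendsto_atTop_add_const_right _ _ tendsto_natCast_atTop_atTop)
    obtain ⟨m, hm⟩ := exists_nat_gt (σ/4 / (e/3))
    have hm2 : σ/4/((m:ℝ)+2) ≤ e/3 := by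
      rw [div_le_iff₀ (by positivity)]
      rw [div_lt_iff₀ (by positivity)] at hm
      nlinarith
    obtain ⟨l', K, hl', hK, hrate⟩ := hsub m
    have hll : l' = l := tendsto_nhds_unique hl' hl
    subst hll
    filter_upwards [hrate, hg (e/3) (by linarith),
      (hΛtop.const_mul_atTop (by linarith : 0 < e/3)).eventually_ge_atTop (Real.log K),
      (hΛtop.const_mul_atTop (by linarith : 0 < e/3)).eventually_ge_atTop (-Real.log c),
      hΛtop.eventually_ge_atTop 0] with n h1 h2 h3 h4 h5
    have hpn : 0 < ‖p n‖ := norm_pos_iff.2 (hp0 n)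
    have hn1 : (0:ℝ) < (n:ℝ)+1 := by positivity
    have up := Real.log_le_log (hrpos n) h1
    rw [Real.log_mul hpn.ne' (by positivity), Real.log_mul hK.ne' (by positivity),
      Real.log_rpow hn1] at up
    have lo := Real.log_le_log hc (hr0 n)
    rw [Real.log_mul hpn.ne' (hrpos n).ne'] at lo
    have h6 := abs_le.1 h2
    set Λ := Real.log ((n:ℝ)+1)
    have h7 : σ/4/((m:ℝ)+2) * Λ ≤ e/3 * Λ := mul_le_mul_of_nonneg_right hm2 h5
    rw [abs_le]
    constructor
    · linarith [h6.2]
    · have : -(2*β-σ/4/((m:ℝ)+2)) * Λ = -2*(β*Λ) + σ/4/((m:ℝ)+2) * Λ := by ring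
      linarith [h6.2]


lemma L_meas (L : ℂ →ₗ[ℝ] ℂ) : Measurable (fun z => L z) :=
  L.continuous_of_finiteDimensional.measurable

lemma orb_meas {Ω : Type*} (g : ℕ → Ω → ℝ) (L : ℕ → ℂ →ₗ[ℝ] ℂ) (z : ℂ) (n : ℕ) :
    Measurable[pastSA g n] (fun ω => orb L (fun k => g k ω) z n) := by
  induction n with
  | zero => exact measurable_const
  | succ n ih =>
    have h1 : Measurable[pastSA g (n+1)] (fun ω => orb L (fun k => g k ω) z n) :=
      ih.mono (pastSA_mono g (Nat.le_succ n)) le_rfl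
    have h2 : Measurable[pastSA g (n+1)] (g n) := pastSA_meas g (Nat.lt_succ_self n)
    have h3 := (L_meas (L n)).comp h1
    have hB : Measurable (fun x : ℝ × ℂ => Bm x.1 x.2) := by
      unfold Bm
      fun_prop
    exact hB.comp (h2.prodMk h3)

lemma unit_bd (z : ℂ) : (z / ‖z‖).re ^ 2 + (z / ‖z‖).im ^ 2 ≤ 1 := by
  by_cases h : z = 0
  · simp [h]
  · have h1 : ‖z / ‖z‖‖ = 1 := by
      rw [norm_div]; simp [h]
    have := Complex.normSq_eq_norm_sq (z / ‖z‖)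
    rw [h1, Complex.normSq_apply] at this
    nlinarith

lemma prob_main {Ω : Type*} [mΩ : MeasurableSpace Ω] {ν : Measure Ω} [IsProbabilityMeasure ν]
    (g : ℕ → Ω → ℝ) (hg : ∀ n, Measurable (g n)) (hi : iIndepFun g ν)
    (σ K : ℝ) (hσ : 0 < σ) (D : ℕ → ℝ) (hD : ∀ n ω, |g n ω| ≤ D n)
    (hmean : ∀ n, ∫ ω, g n ω ∂ν = 0)
    (hvar : ∀ n, ∫ ω, (g n ω) ^ 2 ∂ν = σ / ((n : ℝ) + 1))
    (h4 : ∀ n, ∫ ω, (g n ω) ^ 4 ∂ν ≤ K / ((n : ℝ) + 1) ^ 2)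
    (L : ℕ → ℂ →ₗ[ℝ] ℂ) (p q u : ℕ → Ω → ℂ)
    (hp : ∀ n ω, p n ω = orb L (fun k => g k ω) 1 n)
    (hq : ∀ n ω, q n ω = orb L (fun k => g k ω) Complex.I n)
    (hu : ∀ n ω, u n ω = L n (p n ω) / ‖L n (p n ω)‖) :
    ∀ᵐ ω ∂ν, (∃ l, Tendsto (fun n => ∑ k ∈ Finset.range n,
      g k ω * (((u k ω).re * (u k ω).im) * (1 / Hs (k+1)))) atTop (nhds l)) ∧
    (∃ l, Tendsto (fun n => ∑ k ∈ Finset.range n,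
      ((g k ω)^2 - σ / ((k:ℝ)+1)) * ((u k ω).re^2/2 - (u k ω).re^2*(u k ω).im^2))
        atTop (nhds l)) ∧
    (∀ m : ℕ, ∃ l, Tendsto (fun n => ∑ k ∈ Finset.range n,
      g k ω * cft (σ/4 - σ/4/((m:ℝ)+2)) (σ/4/((m:ℝ)+2)/4) L k (p k ω) (q k ω))
        atTop (nhds l)) ∧
    (∀ m : ℕ, Summable (fun n : ℕ => (g n ω)^2 * ((n:ℝ)+1)^(-(σ/4/((m:ℝ)+2)/4)))) := by
  have hn1 : ∀ n : ℕ, (0:ℝ) < (n:ℝ)+1 := fun n => by positivity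
  have hpm : ∀ n, Measurable[pastSA g n] (p n) := fun n => by
    have := orb_meas g L 1 n
    have e : p n = fun ω => orb L (fun k => g k ω) 1 n := funext (hp n)
    rw [e]; exact this
  have hqm : ∀ n, Measurable[pastSA g n] (q n) := fun n => by
    have := orb_meas g L Complex.I n
    have e : q n = fun ω => orb L (fun k => g k ω) Complex.I n := funext (hq n)
    rw [e]; exact this
  have hnm : ∀ n, Measurable (fun z : ℂ => L n z / (‖L n z‖ : ℂ)) := fun n => by
    have := L_meas (L n)
    fun_prop
  have hum : ∀ n, Measurable[pastSA g n] (u n) := fun n => by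
    have e : u n = fun ω => L n (p n ω) / ‖L n (p n ω)‖ := funext (hu n)
    rw [e]
    exact (hnm n).comp (hpm n)
  have hub : ∀ n ω, (u n ω).re ^ 2 + (u n ω).im ^ 2 ≤ 1 := fun n ω => by
    rw [hu]; exact unit_bd _
  have hsq : ∀ n, Integrable (fun ω => (g n ω)^2) ν := fun n =>
    Integrable.of_bound ((hg n).pow_const 2).aestronglyMeasurable (D n ^ 2)
      (Eventually.of_forall (fun ω => by
        rw [Real.norm_eq_abs, abs_pow]
        exact pow_le_pow_left₀ (abs_nonneg _) (hD n ω) 2))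
  have hq4 : ∀ n, Integrable (fun ω => (g n ω)^4) ν := fun n =>
    Integrable.of_bound ((hg n).pow_const 4).aestronglyMeasurable (D n ^ 4)
      (Eventually.of_forall (fun ω => by
        rw [Real.norm_eq_abs, abs_pow]
        exact pow_le_pow_left₀ (abs_nonneg _) (hD n ω) 4))
  have hrp : ∀ s : ℝ, 0 < s → Summable (fun n : ℕ => ((n:ℝ)+1)^(-(1+s))) := by
    intro s hs
    have h := Real.summable_nat_rpow.2 (by linarith : -(1+s) < -1)
    have := (summable_nat_add_iff 1).2 h
    simpa using this
  have hrp2 : Summable (fun n : ℕ => 1 / ((n:ℝ)+1)^2) := by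
    have := hrp 1 one_pos
    refine this.congr (fun n => ?_)
    rw [Real.rpow_neg (hn1 n).le, one_div]
    norm_num
  -- the second-order martingale
  have m2 : ∀ (c : ℕ → Ω → ℝ), (∀ n, Measurable[pastSA g n] (c n)) → (∀ n ω, |c n ω| ≤ 1) →
      ∀ᵐ ω ∂ν, ∃ l, Tendsto (fun n => ∑ k ∈ Finset.range n,
        ((g k ω)^2 - σ / ((k:ℝ)+1)) * c k ω) atTop (nhds l) := by
    intro c hc hb
    refine mart_conv hg hi (fun n x => x^2 - σ / ((n:ℝ)+1)) (fun n => by fun_prop)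
      (fun n => D n ^ 2 + σ / ((n:ℝ)+1)) ?_ ?_ (fun n => K / ((n:ℝ)+1)^2) ?_ c hc (fun _ => 1) hb ?_
    · intro n ω
      have h1 : (g n ω)^2 ≤ D n ^ 2 := sq_le_sq' (abs_le.1 (hD n ω)).1 (abs_le.1 (hD n ω)).2
      have h2 : 0 ≤ σ / ((n:ℝ)+1) := (div_pos hσ (hn1 n)).le
      rw [abs_le]; constructor <;> nlinarith [sq_nonneg (g n ω)]
    · intro n
      rw [integral_sub (hsq n) (integrable_const _), hvar]
      simp
    · intro n
      have e : ∀ ω, ((g n ω)^2 - σ / ((n:ℝ)+1))^2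
          = (g n ω)^4 - (2 * (σ / ((n:ℝ)+1)) * (g n ω)^2 - (σ / ((n:ℝ)+1))^2) := fun ω => by ring
      simp_rw [e]
      have hi2 : Integrable (fun ω => 2 * (σ / ((n:ℝ)+1)) * (g n ω)^2 - (σ / ((n:ℝ)+1))^2) ν :=
        ((hsq n).const_mul _).sub (integrable_const _)
      rw [integral_sub (hq4 n) hi2,
        integral_sub ((hsq n).const_mul _) (integrable_const _), integral_const_mul, hvar]
      have := h4 n
      simp only [integral_const, probReal_univ, smul_eq_mul, one_mul]
      nlinarith [sq_nonneg (σ / ((n:ℝ)+1))]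
    · refine (hrp2.mul_left K).congr (fun n => ?_)
      ring
  have m1 : ∀ (c : ℕ → Ω → ℝ) (b : ℕ → ℝ), (∀ n, Measurable[pastSA g n] (c n)) →
      (∀ n ω, |c n ω| ≤ b n) → Summable (fun n => (b n)^2 * (1 / ((n:ℝ)+1))) →
      ∀ᵐ ω ∂ν, ∃ l, Tendsto (fun n => ∑ k ∈ Finset.range n, g k ω * c k ω) atTop (nhds l) := by
    intro c b hc hb hs
    refine mart_conv hg hi (fun n x => x) (fun n => measurable_id) D hD hmean
      (fun n => σ / ((n:ℝ)+1)) (fun n => (hvar n).le) c hc b hb ?_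
    refine (hs.mul_left σ).congr (fun n => ?_)
    ring
  have hsm : ∀ m : ℕ, 0 < σ/4/((m:ℝ)+2)/4 := fun m => by positivity
  have F1 := m1 (fun k ω => ((u k ω).re * (u k ω).im) * (1 / Hs (k+1))) (fun k => 1 / Hs (k+1))
    (fun n => by
      have h1 := Complex.measurable_re.comp (hum n)
      have h2 := Complex.measurable_im.comp (hum n)
      exact (h1.mul h2).mul_const _)
    (fun n ω => by
      have h1 := Hs_pos n
      have h2 : 0 ≤ 1 / Hs (n+1) := by positivity
      rw [abs_mul, abs_of_nonneg h2]
      have h3 : |(u n ω).re * (u n ω).im| ≤ 1 := by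
        have := hub n ω
        rw [abs_le]
        constructor <;>
          nlinarith [sq_nonneg ((u n ω).re + (u n ω).im), sq_nonneg ((u n ω).re - (u n ω).im)]
      calc _ ≤ 1 * (1 / Hs (n+1)) := mul_le_mul_of_nonneg_right h3 h2
        _ = _ := one_mul _)
    Hs_summable
  have F2 := m2 (fun k ω => (u k ω).re^2/2 - (u k ω).re^2*(u k ω).im^2)
    (fun n => by
      have h1 := Complex.measurable_re.comp (hum n)
      have h2 := Complex.measurable_im.comp (hum n)
      exact ((h1.pow_const 2).div_const 2).sub ((h1.pow_const 2).mul (h2.pow_const 2)))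
    (fun n ω => by
      have := hub n ω
      have h1 := sq_nonneg (u n ω).re
      have h2 := sq_nonneg (u n ω).im
      have h3 := mul_nonneg h1 h2
      have h4 : (u n ω).re^2 * (u n ω).im^2 ≤ 1 * 1 :=
        mul_le_mul (by linarith) (by linarith) h2 zero_le_one
      rw [abs_le]
      constructor <;> nlinarith)
  have F3 : ∀ m : ℕ, _ := fun m => m1
    (fun k ω => cft (σ/4 - σ/4/((m:ℝ)+2)) (σ/4/((m:ℝ)+2)/4) L k (p k ω) (q k ω))
    (fun k => ((k:ℝ)+1)^(-(σ/4/((m:ℝ)+2)/4)))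
    (fun n => by
      have h0 : Measurable (fun x : ℂ × ℂ =>
          cf (σ/4 - σ/4/((m:ℝ)+2)) L n x.1 x.2) := by
        have hfst : Measurable (fun x : ℂ × ℂ => x.1) := by fun_prop
        have h1 := (hnm n).comp hfst
        have h2 := Complex.measurable_re.comp h1
        have h3 := Complex.measurable_im.comp h1
        have h4 : Measurable (fun x : ℂ × ℂ => (x.2 / x.1).im) := by fun_prop
        exact (h4.mul ((h2.pow_const 2).sub (h3.pow_const 2))).const_mul _
      have h1 : Measurable (fun x : ℂ × ℂ =>
          cft (σ/4 - σ/4/((m:ℝ)+2)) (σ/4/((m:ℝ)+2)/4) L n x.1 x.2) := by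
        unfold cft
        exact Measurable.ite (measurableSet_le h0.abs measurable_const) h0 measurable_const
      exact h1.comp ((hpm n).prodMk (hqm n)))
    (fun n ω => by
      unfold cft
      split_ifs with h
      · exact h
      · rw [abs_zero]; exact (Real.rpow_pos_of_pos (hn1 n) _).le)
    (by
      refine (hrp (2*(σ/4/((m:ℝ)+2)/4)) (by have := hsm m; linarith)).congr (fun n => ?_)
      rw [← Real.rpow_natCast, ← Real.rpow_mul (hn1 n).le, one_div, ← Real.rpow_neg_one,
        ← Real.rpow_add (hn1 n)]
      congr 1
      push_cast; ring)
  have F4 : ∀ m : ℕ, ∀ᵐ ω ∂ν, Summable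
      (fun n : ℕ => (g n ω)^2 * ((n:ℝ)+1)^(-(σ/4/((m:ℝ)+2)/4))) := by
    intro m
    have h := m2 (fun k _ => ((k:ℝ)+1)^(-(σ/4/((m:ℝ)+2)/4))) (fun n => measurable_const)
      (fun n ω => by
        rw [abs_of_pos (Real.rpow_pos_of_pos (hn1 n) _)]
        exact Real.rpow_le_one_of_one_le_of_nonpos (by simp) (by have := hsm m; linarith))
    filter_upwards [h] with ω ⟨l, hl⟩
    have hs : Summable (fun n : ℕ => σ / ((n:ℝ)+1) * ((n:ℝ)+1)^(-(σ/4/((m:ℝ)+2)/4))) := by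
      refine ((hrp (σ/4/((m:ℝ)+2)/4) (hsm m)).mul_left σ).congr (fun n => ?_)
      rw [neg_add, Real.rpow_add (hn1 n), Real.rpow_neg_one]
      ring
    have h2 := hl.add hs.hasSum.tendsto_sum_nat
    have e : ∀ n, ∑ k ∈ Finset.range n,
        ((g k ω)^2 - σ / ((k:ℝ)+1)) * ((k:ℝ)+1)^(-(σ/4/((m:ℝ)+2)/4))
        + ∑ k ∈ Finset.range n, σ / ((k:ℝ)+1) * ((k:ℝ)+1)^(-(σ/4/((m:ℝ)+2)/4))
        = ∑ k ∈ Finset.range n, (g k ω)^2 * ((k:ℝ)+1)^(-(σ/4/((m:ℝ)+2)/4)) := fun n => by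
      rw [← Finset.sum_add_distrib]
      exact Finset.sum_congr rfl (fun k _ => by ring)
    simp_rw [e] at h2
    obtain ⟨B, hB⟩ := h2.bddAbove_range
    refine summable_of_sum_range_le (c := B) (fun n =>
      mul_nonneg (sq_nonneg _) (Real.rpow_pos_of_pos (hn1 n) _).le) (fun n => hB ⟨n, rfl⟩)
  filter_upwards [F1, F2, ae_all_iff.2 F3, ae_all_iff.2 F4] with ω h1 h2 h3 h4
  exact ⟨h1, h2, h3, h4⟩


/-- the inverse coordinate map -/
noncomputable def Psi (φ : ℝ) (z : ℂ) : Fin 2 → ℝ :=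
  ![2 * z.re, 2 * (z.re * (1 - Real.cos φ) - z.im * Real.sin φ)]

/-- a matrix in complex coordinates -/
noncomputable def Lm (φ : ℝ) (m : Matrix (Fin 2) (Fin 2) ℝ) : ℂ →ₗ[ℝ] ℂ where
  toFun z := ⟨(m *ᵥ Psi φ z) 0 / 2,
    ((m *ᵥ Psi φ z) 0 * (1 - Real.cos φ) - (m *ᵥ Psi φ z) 1) / (2 * Real.sin φ)⟩
  map_add' x y := by
    apply Complex.ext <;> simp [Psi, Matrix.mulVec, dotProduct, Fin.sum_univ_two] <;> ring
  map_smul' t x := by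
    apply Complex.ext <;> simp [Psi, Matrix.mulVec, dotProduct, Fin.sum_univ_two] <;> ring

lemma Lm_apply (φ : ℝ) (m : Matrix (Fin 2) (Fin 2) ℝ) (z : ℂ) :
    Lm φ m z = ⟨(m *ᵥ Psi φ z) 0 / 2,
    ((m *ᵥ Psi φ z) 0 * (1 - Real.cos φ) - (m *ᵥ Psi φ z) 1) / (2 * Real.sin φ)⟩ := rfl

lemma Lm_sub (φ : ℝ) (m m' : Matrix (Fin 2) (Fin 2) ℝ) (z : ℂ) :
    Lm φ m z - Lm φ m' z = Lm φ (m - m') z := by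
  rw [Lm_apply, Lm_apply, Lm_apply]
  apply Complex.ext <;> simp [Matrix.sub_mulVec] <;> ring

lemma Lm_free (φ : ℝ) (hs : 0 < Real.sin φ) (z : ℂ) :
    Lm φ (Matrix.of ![![2 * Real.cos φ - 1, 1], ![2 * Real.cos φ - 2, 1]]) z
      = Complex.exp (φ * Complex.I) * z := by
  have h2 := Real.sin_sq_add_cos_sq φ
  have h3 : Real.sin φ ^ 2 = 1 - Real.cos φ ^ 2 := by linarith
  rw [Lm_apply]
  apply Complex.ext
  · simp [Psi, Matrix.mulVec, dotProduct, Fin.sum_univ_two, Complex.exp_ofReal_mul_I_re,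
      Complex.exp_ofReal_mul_I_im]
    ring
  · simp [Psi, Matrix.mulVec, dotProduct, Fin.sum_univ_two, Complex.exp_ofReal_mul_I_re,
      Complex.exp_ofReal_mul_I_im]
    field_simp
    ring_nf
    rw [h3]
    ring

lemma Psi_bd (φ : ℝ) (z : ℂ) : |Psi φ z 0| ≤ 2 * ‖z‖ ∧ |Psi φ z 1| ≤ 6 * ‖z‖ := by
  have h1 := Complex.abs_re_le_norm z
  have h2 := Complex.abs_im_le_norm z
  have h3 := Real.abs_cos_le_one φ
  have h4 := Real.abs_sin_le_one φ
  constructor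
  · simp [Psi, abs_mul]; exact h1
  · simp only [Psi, Matrix.cons_val_one, Matrix.cons_val_fin_one]
    rw [abs_mul, abs_two]
    have h5 : |z.re * (1 - Real.cos φ) - z.im * Real.sin φ| ≤ 3 * ‖z‖ := by
      refine (abs_sub _ _).trans ?_
      rw [abs_mul, abs_mul]
      have h6 : |1 - Real.cos φ| ≤ 2 := by
        rw [abs_le] at h3 ⊢; constructor <;> linarith [h3.1, h3.2]
      have := mul_le_mul h1 h6 (abs_nonneg _) (norm_nonneg z)
      have := mul_le_mul h2 h4 (abs_nonneg _) (norm_nonneg z)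
      linarith
    linarith

lemma Lm_bd (φ : ℝ) (hs : 0 < Real.sin φ) (m : Matrix (Fin 2) (Fin 2) ℝ) (η : ℝ)
    (hm : ∀ i j, |m i j| ≤ η) (z : ℂ) :
    ‖Lm φ m z‖ ≤ (4 + 12 / Real.sin φ) * η * ‖z‖ := by
  obtain ⟨h1, h2⟩ := Psi_bd φ z
  have hη : 0 ≤ η := (abs_nonneg _).trans (hm 0 0)
  have hw : ∀ i, |(m *ᵥ Psi φ z) i| ≤ 8 * η * ‖z‖ := by
    intro i
    simp only [Matrix.mulVec, dotProduct, Fin.sum_univ_two]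
    refine (abs_add_le _ _).trans ?_
    rw [abs_mul, abs_mul]
    have := mul_le_mul (hm i 0) h1 (abs_nonneg _) hη
    have := mul_le_mul (hm i 1) h2 (abs_nonneg _) hη
    linarith
  rw [Lm_apply]
  refine (Complex.norm_le_abs_re_add_abs_im _).trans ?_
  simp only
  rw [abs_div, abs_div, abs_of_pos (by positivity : 0 < 2 * Real.sin φ), abs_two]
  have h3 : |1 - Real.cos φ| ≤ 2 := by
    have h3 := Real.abs_cos_le_one φ
    rw [abs_le] at h3 ⊢; constructor <;> linarith [h3.1, h3.2]
  have h4 : |(m *ᵥ Psi φ z) 0 * (1 - Real.cos φ) - (m *ᵥ Psi φ z) 1| ≤ 24 * η * ‖z‖ := by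
    refine (abs_sub _ _).trans ?_
    rw [abs_mul]
    have h0 := (abs_nonneg _).trans (hw 0)
    have := mul_le_mul (hw 0) h3 (abs_nonneg _) h0
    linarith [hw 1]
  have h5 := div_le_div_of_nonneg_right h4 (by positivity : 0 ≤ 2 * Real.sin φ)
  have h6 : 24 * η * ‖z‖ / (2 * Real.sin φ) = 12 / Real.sin φ * η * ‖z‖ := by
    field_simp; ring
  rw [h6] at h5
  linarith [hw 0]

lemma Lm_det (φ : ℝ) (hs : 0 < Real.sin φ) (m : Matrix (Fin 2) (Fin 2) ℝ) :
    (starRingEnd ℂ (Lm φ m 1) * Lm φ m Complex.I).im = m.det := by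
  rw [Lm_apply, Lm_apply, Matrix.det_fin_two]
  simp [Psi, Matrix.mulVec, dotProduct, Fin.sum_univ_two]
  field_simp
  ring

lemma Psi_step (φ : ℝ) (hs : 0 < Real.sin φ) (m : Matrix (Fin 2) (Fin 2) ℝ) (x : ℝ) (z : ℂ) :
    Psi φ (Bm (x / Real.sin φ) (Lm φ m z))
      = ((Matrix.of ![![1, 0], ![x, 1]]) * m).mulVec (Psi φ z) := by
  rw [← Matrix.mulVec_mulVec, Lm_apply]
  generalize m *ᵥ Psi φ z = w
  have hre : ∀ (t : ℝ) (y : ℂ), (Bm t y).re = y.re := by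
    intro t y
    rw [Bm, Complex.sub_re, Complex.re_mul_ofReal]; simp
  have him : ∀ (t : ℝ) (y : ℂ), (Bm t y).im = y.im - t * y.re := by
    intro t y
    rw [Bm, Complex.sub_im, Complex.im_mul_ofReal]; simp
  ext i
  fin_cases i
  · simp [Psi, hre, Matrix.mulVec, dotProduct, Fin.sum_univ_two]
    ring
  · simp [Psi, hre, him, Matrix.mulVec, dotProduct, Fin.sum_univ_two]
    field_simp
    ring

lemma Psi_decomp (φ : ℝ) (z : ℂ) :
    ((Psi φ z 0 : ℝ) : ℂ) = z + starRingEnd ℂ z ∧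
    ((Psi φ z 1 : ℝ) : ℂ) = z * (1 - Complex.exp (-(φ * Complex.I))) +
                starRingEnd ℂ z * (1 - Complex.exp (φ * Complex.I)) := by
  have e : -(φ * Complex.I) = ((-φ : ℝ) : ℂ) * Complex.I := by push_cast; ring
  rw [e]
  constructor
  · apply Complex.ext <;> simp [Psi]; ring
  · apply Complex.ext <;> simp [Psi, Complex.exp_ofReal_mul_I_re, Complex.exp_ofReal_mul_I_im,
      -Complex.ofReal_neg, -Complex.ofReal_cos, -Complex.ofReal_sin] <;> ring

lemma alpha_ne (φ : ℝ) (hφ : φ ∈ Set.Ioo 0 Real.pi)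
    (hφ4 : φ ≠ Real.pi / 4) (hφ2 : φ ≠ Real.pi / 2) (hφ34 : φ ≠ 3 * Real.pi / 4) :
    Complex.exp (φ * Complex.I) ^ 2 ≠ 1 ∧ Complex.exp (φ * Complex.I) ^ 4 ≠ 1 := by
  obtain ⟨h0, h1⟩ := hφ
  have h4 : Complex.exp (φ * Complex.I) ^ 4 ≠ 1 := by
    rw [← Complex.exp_nat_mul]
    intro h
    obtain ⟨n, hn⟩ := Complex.exp_eq_one_iff.1 h
    have hn2 := congrArg Complex.im hn
    simp at hn2
    have hpi := Real.pi_pos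
    have a1 : (0:ℝ) < n := by
      by_contra hc
      push Not at hc
      nlinarith
    have a2 : (n:ℝ) < 2 := by
      by_contra hc
      push Not at hc
      nlinarith
    have a3 : n = 1 := by
      have : 0 < n := by exact_mod_cast a1
      have : n < 2 := by exact_mod_cast a2
      omega
    rw [a3] at hn2
    push_cast at hn2
    exact hφ2 (by linarith)
  refine ⟨fun h => h4 ?_, h4⟩
  calc _ = (Complex.exp (φ * Complex.I) ^ 2)^2 := by ring
    _ = 1 := by rw [h]; ring


/-- random transfer-matrix setup, indices shifted so that `g n`, `M n`,
`a n` stand for `g_{n+1}`, `M_{n+1}`, `a_{n+1}`: for `φ ∈ (0,π) \ {π/4, π/2, 3π/4}`,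
for `ν`-a.e. `ω` there is an initial vector `v₀ ≠ 0` whose orbit
`v (n+1) = B(g_{n+1}) M_{n+1} v n`, decomposed as `v n = p n • f₊ + conj (p n) • f₋`
with Prüfer radii `R n = |p n|`, satisfies `ln R_n / ln n → -λ²/(8 sin²φ)`. -/
theorem stmt15
    {Ω : Type*} [MeasurableSpace Ω] (ν : Measure Ω) [IsProbabilityMeasure ν]
    (lam ε C₁ C₄ : ℝ) (hlam : 0 < lam) (hε : 0 < ε) (hC₁ : 0 < C₁) (hC₄ : 0 < C₄)
    (g : ℕ → Ω → ℝ) (hgmeas : ∀ n, Measurable (g n))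
    (hindep : iIndepFun g ν)
    (hmean : ∀ n, ∫ ω, g n ω ∂ν = 0)
    (hvar : ∀ n, ∫ ω, (g n ω) ^ 2 ∂ν = lam ^ 2 / ((n : ℝ) + 1))
    (hint4 : ∀ n, Integrable (fun ω => (g n ω) ^ 4) ν)
    (h4 : ∀ n, ∫ ω, (g n ω) ^ 4 ∂ν ≤ C₄ * lam ^ 4 / ((n : ℝ) + 1) ^ 2)
    (hbdd : ∀ n ω, |g n ω| ≤ C₁ * ((n : ℝ) + 1) ^ (-(1 / 3 : ℝ) - ε))
    (φ : ℝ) (hφ : φ ∈ Set.Ioo 0 Real.pi)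
    (hφ4 : φ ≠ Real.pi / 4) (hφ2 : φ ≠ Real.pi / 2) (hφ34 : φ ≠ 3 * Real.pi / 4)
    (a : ℕ → ℝ) (ha : ∀ n, 0 < a n) (hsum : Summable a)
    (C : ℝ) (hC : 0 < C)
    (M : ℕ → Matrix (Fin 2) (Fin 2) ℝ) (hMinv : ∀ n, IsUnit (M n).det)
    (hM : ∀ n, ∀ i j : Fin 2,
      |M n i j -
          (Matrix.of ![![2 * Real.cos φ - 1, 1], ![2 * Real.cos φ - 2, 1]]) i j|
        ≤ C * a n) :
    ∀ᵐ ω ∂ν, ∃ v₀ : Fin 2 → ℝ, v₀ ≠ 0 ∧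
      ∃ v : ℕ → Fin 2 → ℝ, v 0 = v₀ ∧
        (∀ n, v (n + 1) = ((Matrix.of ![![1, 0], ![g n ω, 1]]) * M n).mulVec (v n)) ∧
        ∃ p : ℕ → ℂ,
          (∀ n,
            ((v n 0 : ℝ) : ℂ) = p n + starRingEnd ℂ (p n) ∧
            ((v n 1 : ℝ) : ℂ) =
              p n * (1 - Complex.exp (-(φ * Complex.I))) +
                starRingEnd ℂ (p n) * (1 - Complex.exp (φ * Complex.I))) ∧
          Tendsto (fun n => Real.log ‖p n‖ / Real.log n) atTop
            (nhds (-(lam ^ 2) / (8 * (Real.sin φ) ^ 2))) := by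
  have hs : 0 < Real.sin φ := Real.sin_pos_of_mem_Ioo hφ
  set s := Real.sin φ with hsdef
  obtain ⟨hα2, hα4⟩ := alpha_ne φ hφ hφ4 hφ2 hφ34
  have hdet : ∀ n, (starRingEnd ℂ (Lm φ (M n) 1) * Lm φ (M n) Complex.I).im ≠ 0 := by
    intro n
    rw [Lm_det φ hs]
    exact (hMinv n).ne_zero
  have hinj : ∀ n v, v ≠ 0 → Lm φ (M n) v ≠ 0 := by
    intro n v hv h
    have h1 := L_wronsk (Lm φ (M n)) v (Complex.I * v)
    rw [h, map_zero, zero_mul, Complex.zero_im] at h1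
    have h2 : (starRingEnd ℂ v * (Complex.I * v)).im = Complex.normSq v := by
      simp [Complex.normSq_apply]
    rw [h2] at h1
    rcases mul_eq_zero.1 h1.symm with h3 | h3
    · exact hdet n h3
    · exact hv (Complex.normSq_eq_zero.1 h3)
  have hL : ∀ n v, ‖Lm φ (M n) v - Complex.exp (φ * Complex.I) * v‖
      ≤ ((4 + 12 / s) * (C * a n)) * ‖v‖ := by
    intro n v
    rw [← Lm_free φ hs v, Lm_sub]
    exact Lm_bd φ hs _ (C * a n) (fun i j => hM n i j) v
  have hσ : 0 < lam^2 / s^2 := by positivity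
  have hγ : ∀ n ω, |g n ω / s| ≤ C₁ / s * ((n : ℝ) + 1) ^ (-(1 / 3 : ℝ) - ε) := by
    intro n ω
    rw [abs_div, abs_of_pos hs]
    have := div_le_div_of_nonneg_right (hbdd n ω) hs.le
    refine this.trans (le_of_eq ?_)
    ring
  have hprob := prob_main (ν := ν) (fun n ω => g n ω / s) (fun n => (hgmeas n).div_const s)
    (hindep.comp (fun _ x => x / s) (fun _ => measurable_id.div_const s))
    (lam^2 / s^2) (C₄ * lam^4 / s^4) hσ
    (fun n => C₁ / s * ((n : ℝ) + 1) ^ (-(1 / 3 : ℝ) - ε)) hγ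
    (fun n => by rw [integral_div, hmean, zero_div])
    (fun n => by
      simp_rw [div_pow]
      rw [integral_div, hvar]; ring)
    (fun n => by
      simp_rw [div_pow]
      rw [integral_div]
      refine (div_le_div_of_nonneg_right (h4 n) (by positivity)).trans (le_of_eq ?_)
      ring)
    (fun n => Lm φ (M n)) _ _ _ (fun _ _ => rfl) (fun _ _ => rfl) (fun _ _ => rfl)
  filter_upwards [hprob] with ω ⟨F1, F2, F3, F4⟩
  obtain ⟨r, hr0, hr, hlim⟩ := det_main (fun n => Lm φ (M n)) (fun n => g n ω / s)
    (fun n => (4 + 12 / s) * (C * a n)) (Complex.exp (φ * Complex.I)) (lam^2 / s^2) (C₁ / s) ε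
    hε hσ hL (Complex.norm_exp_ofReal_mul_I φ) ((hsum.mul_left C).mul_left _) hα2 hα4 hinj hdet
    (fun n => hγ n ω) _ _ _ rfl rfl (fun _ => rfl) F1 F2 F3 F4
  have hdec := fun n => Psi_decomp φ (r n)
  refine ⟨Psi φ (r 0), ?_, fun n => Psi φ (r n), rfl, ?_, r, hdec, ?_⟩
  · intro h
    apply hr0
    have h0 := congrFun h 0
    have h1 := congrFun h 1
    simp [Psi] at h0 h1
    rw [h0] at h1
    apply Complex.ext
    · simpa using h0
    · have : s ≠ 0 := hs.ne'
      simpa [← hsdef, this] using h1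
  · intro n
    show Psi φ (r (n+1)) = _
    rw [hr, Psi_step φ hs]
  · have e : -(lam ^ 2) / (8 * s ^ 2) = -(lam^2 / s^2 / 8) := by
      field_simp
    rw [e]
    exact hlim
end
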